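/- arXiv:2208.13308 — 2 statements merged into one kernel-verified Lean document; each statement's English description precedes it below -/
import Mathlib

section
/- Let n ≥ 2 and let f₁, f₂ ∈ Q₀ⁿ. Assume that for every unit vector θ ∈ ℝⁿ one has ‖P_{θ⊥} f₁‖_{L¹(θ⊥)} ≤ ‖P_{θ⊥} f₂‖_{L¹(θ⊥)}, where θ⊥ is the hyperplane orthogonal to θ. Then ‖f₁‖_{n/(n−1)} ≤ 8·√n · ‖f₂‖_∞^{1/n} · ‖f₂‖₁^{(n−1)/n}. -/
open MeasureTheory

noncomputable section

/-- `ℝⁿ` with its Euclidean structure. -/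
abbrev Eucl (n : ℕ) := EuclideanSpace ℝ (Fin n)

/-- `f : ℝⁿ → [0,∞)` is log-concave:
`f(tx+(1−t)y) ≥ f(x)^t · f(y)^(1−t)` for all `x, y` and `t ∈ (0,1)`. -/
def IsLogConcave {n : ℕ} (f : Eucl n → ℝ) : Prop :=
  ∀ x y : Eucl n, ∀ t : ℝ, 0 < t → t < 1 →
    f x ^ t * f y ^ (1 - t) ≤ f (t • x + (1 - t) • y)

/-- The class `Q₀ⁿ`: nonnegative, log-concave, upper semicontinuous, integrable
functions with positive integral. -/
def MemQ0 {n : ℕ} (f : Eucl n → ℝ) : Prop :=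
  (∀ x, 0 ≤ f x) ∧ IsLogConcave f ∧ UpperSemicontinuous f ∧
    Integrable f ∧ 0 < ∫ x, f x

/-- `‖f‖_∞ = sup f`. -/
def supNorm {n : ℕ} (f : Eucl n → ℝ) : ℝ := ⨆ x, f x

/-- `‖f‖_p = (∫ f^p)^(1/p)`. -/
def lpNorm {n : ℕ} (p : ℝ) (f : Eucl n → ℝ) : ℝ := (∫ x, f x ^ p) ^ (1 / p)

/-- `‖P_H f‖_{L¹(H)} = ∫_H sup_{z ∈ H⊥} f(y+z) dλ_H(y)`, the `L¹(H)`-norm of the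
projection of `f` onto the subspace `H` (with the Lebesgue measure on `H` induced
by the Euclidean structure). -/
def projL1 {n : ℕ} (f : Eucl n → ℝ) (H : Submodule ℝ (Eucl n)) : ℝ :=
  ∫ y : H, ⨆ z : Hᗮ, f ((y : Eucl n) + (z : Eucl n))

/-- `‖S_H f‖_{L¹(H)} = ∫_H f dλ_H`, the integral of the section `f|_H`. -/
def sectL1 {n : ℕ} (f : Eucl n → ℝ) (H : Submodule ℝ (Eucl n)) : ℝ :=
  ∫ y : H, f (y : Eucl n)

section

open MeasureTheory Set
open scoped ENNReal Pointwise

theorem vol_lt_aux (z : ℝ≥0∞) : volume (Ioi (0:ℝ) ∩ {c : ℝ | ENNReal.ofReal c < z}) = z := by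
  rcases eq_or_ne z ∞ with rfl | hz
  · simp
  · have : Ioi (0:ℝ) ∩ {c : ℝ | ENNReal.ofReal c < z} = Ioo 0 z.toReal := by
      ext c
      simp only [mem_inter_iff, mem_Ioi, mem_ofPred_eq, mem_Ioo]
      constructor
      · rintro ⟨h1, h2⟩
        exact ⟨h1, by rwa [ENNReal.ofReal_lt_iff_lt_toReal h1.le hz] at h2⟩
      · rintro ⟨h1, h2⟩
        exact ⟨h1, by rwa [ENNReal.ofReal_lt_iff_lt_toReal h1.le hz]⟩
    rw [this, Real.volume_Ioo, sub_zero, ENNReal.ofReal_toReal hz]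

theorem layer_cake {α : Type*} [MeasurableSpace α] (μ : Measure α) [SFinite μ] (f : α → ℝ≥0∞)
    (hf : Measurable f) :
    ∫⁻ x, f x ∂μ = ∫⁻ c in Ioi (0:ℝ), μ {x | ENNReal.ofReal c < f x} := by
  have hS : MeasurableSet {p : α × ℝ | ENNReal.ofReal p.2 < f p.1} :=
    measurableSet_lt (by fun_prop) (by fun_prop)
  have h1 : ∀ c : ℝ, μ {x | ENNReal.ofReal c < f x}
      = ∫⁻ x, {p : α × ℝ | ENNReal.ofReal p.2 < f p.1}.indicator 1 (x, c) ∂μ := by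
    intro c
    rw [← lintegral_indicator_one (measurableSet_lt measurable_const hf)]
    rfl
  simp_rw [h1]
  rw [lintegral_lintegral_swap]
  · refine lintegral_congr fun x => ?_
    have : (fun c : ℝ => {p : α × ℝ | ENNReal.ofReal p.2 < f p.1}.indicator (1 : α × ℝ → ℝ≥0∞) (x, c))
      = {c : ℝ | ENNReal.ofReal c < f x}.indicator 1 := rfl
    have hm : MeasurableSet {c : ℝ | ENNReal.ofReal c < f x} :=
      measurableSet_lt (by fun_prop) (by fun_prop)
    rw [this, lintegral_indicator_one hm, Measure.restrict_apply hm, inter_comm, vol_lt_aux]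
  · apply Measurable.aemeasurable
    exact (measurable_one.indicator hS).comp measurable_swap

theorem bm1_compact (K L : Set ℝ) (hK : IsCompact K) (hL : IsCompact L) (hK0 : K.Nonempty)
    (hL0 : L.Nonempty) (C : Set ℝ) (t : ℝ) (ht0 : 0 < t) (ht1 : t < 1)
    (h : ∀ x ∈ K, ∀ y ∈ L, (1 - t) * x + t * y ∈ C) :
    ENNReal.ofReal (1 - t) * volume K + ENNReal.ofReal t * volume L ≤ volume C := by
  obtain ⟨a, haK, ha⟩ := hK.exists_isGreatest hK0
  obtain ⟨b, hbL, hb⟩ := hL.exists_isLeast hL0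
  have v : ∀ (r d : ℝ) (S : Set ℝ), 0 < r → volume ((fun x => r * x + d) '' S)
      = ENNReal.ofReal r * volume S := by
    intro r d S hr
    have : (fun x => r * x + d) '' S = (fun x => x + d) '' (r • S) := by
      rw [← image_smul, image_image]; rfl
    rw [this, image_add_right, measure_preimage_add_right, Measure.addHaar_smul]
    simp [abs_of_pos hr]
  set A := (fun x => (1 - t) * x + t * b) '' K
  set B := (fun y => t * y + (1 - t) * a) '' L
  have hA : volume A = ENNReal.ofReal (1 - t) * volume K := v _ _ _ (by linarith)
  have hB : volume B = ENNReal.ofReal t * volume L := v _ _ _ ht0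
  have hBm : MeasurableSet B := (hL.image (by fun_prop)).measurableSet
  have hdis : volume (A ∩ B) = 0 := by
    refine measure_mono_null (t := {(1 - t) * a + t * b}) ?_ (by simp)
    rintro _ ⟨⟨x, hx, rfl⟩, ⟨y, hy, hxy⟩⟩
    have h1 := ha hx
    have h2 := hb hy
    simp only [mem_singleton_iff]
    simp only at hxy
    nlinarith
  rw [← hA, ← hB]
  have := measure_union_add_inter A (μ := volume) hBm
  rw [hdis, add_zero] at this
  rw [← this]
  refine measure_mono ?_
  rintro _ (⟨x, hx, rfl⟩ | ⟨y, hy, rfl⟩)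
  · exact h x hx b hbL
  · have := h a haK y hy
    simp only
    rwa [add_comm]

theorem bm1 (A B : Set ℝ) (hA : MeasurableSet A) (hB : MeasurableSet B) (hA0 : A.Nonempty)
    (hB0 : B.Nonempty) (C : Set ℝ) (t : ℝ) (ht0 : 0 < t) (ht1 : t < 1)
    (h : ∀ x ∈ A, ∀ y ∈ B, (1 - t) * x + t * y ∈ C) :
    ENNReal.ofReal (1 - t) * volume A + ENNReal.ofReal t * volume B ≤ volume C := by
  obtain ⟨a, ha⟩ := hA0
  obtain ⟨b, hb⟩ := hB0
  have key : ∀ K L : Set ℝ, K ⊆ A → L ⊆ B → IsCompact K → IsCompact L →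
      ENNReal.ofReal (1 - t) * volume K + ENNReal.ofReal t * volume L ≤ volume C := by
    intro K L hK hL hKc hLc
    refine le_trans ?_ (bm1_compact (insert a K) (insert b L) (hKc.insert a) (hLc.insert b)
      (insert_nonempty _ _) (insert_nonempty _ _) C t ht0 ht1 ?_)
    · gcongr <;> exact subset_insert _ _
    · intro x hx y hy
      exact h x (insert_subset ha hK hx) y (insert_subset hb hL hy)
  rw [hA.measure_eq_iSup_isCompact, hB.measure_eq_iSup_isCompact]
  simp only [ENNReal.mul_iSup]
  refine ENNReal.biSup_add_biSup_le' (p := fun K => K ⊆ A) (q := fun K => K ⊆ B)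
    ⟨∅, by simp⟩ ⟨∅, by simp⟩ ?_
  intro K hK L hL
  by_cases hKc : IsCompact K <;> by_cases hLc : IsCompact L
  · simpa [hKc, hLc] using key K L hK hL hKc hLc
  · simpa [hKc, hLc] using key K ∅ hK (by simp) hKc isCompact_empty
  · simpa [hKc, hLc] using key ∅ L (by simp) hL isCompact_empty hLc
  · simp [hKc, hLc]

/-- One-dimensional Prekopa-Leindler, normalised. -/
theorem pl1_norm (f g h : ℝ → ℝ≥0∞) (hf : Measurable f) (hg : Measurable g) (hh : Measurable h)
    (hf1 : ⨆ x, f x = 1) (hg1 : ⨆ x, g x = 1) (t : ℝ) (ht0 : 0 < t) (ht1 : t < 1)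
    (H : ∀ x y, f x ^ (1 - t) * g y ^ t ≤ h ((1 - t) * x + t * y)) :
    ENNReal.ofReal (1 - t) * (∫⁻ x, f x) + ENNReal.ofReal t * (∫⁻ x, g x) ≤ ∫⁻ x, h x := by
  rw [layer_cake _ f hf, layer_cake _ g hg, layer_cake _ h hh]
  have ma : ∀ u : ℝ → ℝ≥0∞, Measurable u →
      Measurable (fun c : ℝ => volume {x | ENNReal.ofReal c < u x}) := by
    intro u hu
    apply Antitone.measurable
    intro c d hcd
    refine measure_mono fun x hx => lt_of_le_of_lt (ENNReal.ofReal_le_ofReal hcd) hx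
  rw [← lintegral_const_mul _ (ma f hf), ← lintegral_const_mul _ (ma g hg),
    ← lintegral_add_left ((ma f hf).const_mul _)]
  refine setLIntegral_mono (ma h hh) ?_
  intro c hc
  have hc0 : (0:ℝ) < c := hc
  by_cases hc1 : c < 1
  · refine bm1 _ _ (measurableSet_lt measurable_const hf) (measurableSet_lt measurable_const hg)
      ?_ ?_ _ t ht0 ht1 ?_
    · have : ENNReal.ofReal c < ⨆ x, f x := by rw [hf1]; simpa using hc1
      exact lt_iSup_iff.1 this
    · have : ENNReal.ofReal c < ⨆ x, g x := by rw [hg1]; simpa using hc1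
      exact lt_iSup_iff.1 this
    · intro x hx y hy
      simp only [mem_ofPred_eq] at hx hy ⊢
      refine lt_of_lt_of_le ?_ (H x y)
      have e : ENNReal.ofReal c = ENNReal.ofReal c ^ (1 - t) * ENNReal.ofReal c ^ t := by
        rw [← ENNReal.rpow_add _ _ (by simpa using hc0) (by simp)]; simp
      rw [e]
      exact ENNReal.mul_lt_mul (ENNReal.rpow_lt_rpow hx (by linarith))
        (ENNReal.rpow_lt_rpow hy ht0)
  · have z : ∀ u : ℝ → ℝ≥0∞, ⨆ x, u x = 1 → volume {x | ENNReal.ofReal c < u x} = 0 := by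
      intro u hu
      convert measure_empty (μ := (volume : Measure ℝ))
      ext x
      simp only [mem_ofPred_eq, mem_empty_iff_false, iff_false, not_lt]
      refine (le_iSup u x).trans ?_
      rw [hu]; simpa using hc1
    simp [z f hf1, z g hg1]

theorem amgm_aux (a b : ℝ≥0∞) (t : ℝ) (ht0 : 0 < t) (ht1 : t < 1) :
    a ^ (1 - t) * b ^ t ≤ ENNReal.ofReal (1 - t) * a + ENNReal.ofReal t * b := by
  have h1 : 0 < 1 - t := by linarith
  rcases eq_or_ne a ∞ with rfl | ha
  · rw [ENNReal.mul_top (by simpa using ht1)]; simp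
  rcases eq_or_ne b ∞ with rfl | hb
  · rw [ENNReal.mul_top (by simpa using ht0)]; simp
  lift a to NNReal using ha
  lift b to NNReal using hb
  have := NNReal.geom_mean_le_arith_mean2_weighted ⟨1 - t, h1.le⟩ ⟨t, ht0.le⟩ a b
    (by apply NNReal.eq; change (1 - t) + t = 1; ring)
  rw [← ENNReal.coe_rpow_of_nonneg _ h1.le, ← ENNReal.coe_rpow_of_nonneg _ ht0.le,
    ENNReal.ofReal_eq_coe_nnreal h1.le, ENNReal.ofReal_eq_coe_nnreal ht0.le]
  exact_mod_cast this

theorem pl1_bdd (f g h : ℝ → ℝ≥0∞) (hf : Measurable f) (hg : Measurable g) (hh : Measurable h)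
    (hf1 : ⨆ x, f x ≠ ∞) (hg1 : ⨆ x, g x ≠ ∞) (t : ℝ) (ht0 : 0 < t) (ht1 : t < 1)
    (H : ∀ x y, f x ^ (1 - t) * g y ^ t ≤ h ((1 - t) * x + t * y)) :
    (∫⁻ x, f x) ^ (1 - t) * (∫⁻ x, g x) ^ t ≤ ∫⁻ x, h x := by
  have h1 : 0 < 1 - t := by linarith
  set a := ⨆ x, f x with ha
  set b := ⨆ x, g x with hb
  rcases eq_or_ne a 0 with ha0 | ha0
  · have : ∀ x, f x = 0 := by
      intro x; have := le_iSup f x; rw [← ha, ha0] at this; simpa using this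
    simp [this, h1]
  rcases eq_or_ne b 0 with hb0 | hb0
  · have : ∀ x, g x = 0 := by
      intro x; have := le_iSup g x; rw [← hb, hb0] at this; simpa using this
    simp [this, ht0]
  have P := pl1_norm (fun x => a⁻¹ * f x) (fun x => b⁻¹ * g x)
    (fun x => (a⁻¹ ^ (1 - t) * b⁻¹ ^ t) * h x) (hf.const_mul _) (hg.const_mul _) (hh.const_mul _)
    (by rw [← ENNReal.mul_iSup]; exact ENNReal.inv_mul_cancel ha0 hf1)
    (by rw [← ENNReal.mul_iSup]; exact ENNReal.inv_mul_cancel hb0 hg1) t ht0 ht1 (by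
      intro x y
      rw [ENNReal.mul_rpow_of_nonneg _ _ h1.le, ENNReal.mul_rpow_of_nonneg _ _ ht0.le,
        mul_mul_mul_comm]
      gcongr
      exact H x y)
  rw [lintegral_const_mul _ hf, lintegral_const_mul _ hg, lintegral_const_mul _ hh] at P
  have Q := (amgm_aux _ _ t ht0 ht1).trans P
  rw [ENNReal.mul_rpow_of_nonneg _ _ h1.le, ENNReal.mul_rpow_of_nonneg _ _ ht0.le,
        mul_mul_mul_comm] at Q
  refine (ENNReal.mul_le_mul_iff_right ?_ ?_).1 Q
  · have q1 : a⁻¹ ^ (1 - t) ≠ 0 := by simp [ENNReal.rpow_eq_zero_iff, hf1, ha0, h1]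
    have q2 : b⁻¹ ^ t ≠ 0 := by simp [ENNReal.rpow_eq_zero_iff, hg1, hb0, ht0]
    exact mul_ne_zero q1 q2
  · exact ENNReal.mul_ne_top (ENNReal.rpow_ne_top_of_nonneg h1.le (by simpa using ha0))
      (ENNReal.rpow_ne_top_of_nonneg ht0.le (by simpa using hb0))

theorem pl1 (f g h : ℝ → ℝ≥0∞) (hf : Measurable f) (hg : Measurable g) (hh : Measurable h)
    (t : ℝ) (ht0 : 0 < t) (ht1 : t < 1)
    (H : ∀ x y, f x ^ (1 - t) * g y ^ t ≤ h ((1 - t) * x + t * y)) :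
    (∫⁻ x, f x) ^ (1 - t) * (∫⁻ x, g x) ^ t ≤ ∫⁻ x, h x := by
  have h1 : 0 < 1 - t := by linarith
  have hs : ∀ u : ℝ → ℝ≥0∞, Measurable u →
      ∫⁻ x, u x = ⨆ N : ℕ, ∫⁻ x, min (u x) (N : ℝ≥0∞) := by
    intro u hu
    rw [← lintegral_iSup (fun N => hu.min measurable_const)]
    · refine lintegral_congr fun x => ?_
      rw [← inf_iSup_eq, ENNReal.iSup_natCast]; simp
    · intro N M hNM x
      exact min_le_min_left _ (by exact_mod_cast hNM)
  have hr : ∀ (u : ℕ → ℝ≥0∞) (s : ℝ), 0 < s → (⨆ N, u N) ^ s = ⨆ N, u N ^ s := by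
    intro u s hs
    exact (ENNReal.orderIsoRpow s hs).map_iSup u
  rw [hs f hf, hs g hg, hr _ _ h1, hr _ _ ht0]
  rw [ENNReal.iSup_mul]
  refine iSup_le fun N => ?_
  rw [ENNReal.mul_iSup]
  refine iSup_le fun M => ?_
  refine pl1_bdd _ _ h (hf.min measurable_const) (hg.min measurable_const) hh ?_ ?_ t ht0 ht1 ?_
  · exact ne_top_of_le_ne_top (ENNReal.natCast_ne_top N) (iSup_le fun x => min_le_right _ _)
  · exact ne_top_of_le_ne_top (ENNReal.natCast_ne_top M) (iSup_le fun x => min_le_right _ _)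
  · intro x y
    refine le_trans ?_ (H x y)
    gcongr <;> exact min_le_left _ _

theorem pi_symm_eq {n : ℕ} (i : Fin (n+1)) (p : ℝ × (Fin n → ℝ)) :
    (MeasurableEquiv.piFinSuccAbove (fun _ : Fin (n+1) => ℝ) i).symm p
      = Fin.insertNth (α := fun _ => ℝ) i p.1 p.2 := rfl

theorem meas_insertNth {n : ℕ} (i : Fin (n+1)) (u : (Fin (n+1) → ℝ) → ℝ≥0∞) (hu : Measurable u) :
    Measurable (fun p : ℝ × (Fin n → ℝ) => u (Fin.insertNth (α := fun _ => ℝ) i p.1 p.2)) := by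
  have := hu.comp (MeasurableEquiv.piFinSuccAbove (fun _ : Fin (n+1) => ℝ) i).symm.measurable
  exact this

theorem lint_insertNth {n : ℕ} (i : Fin (n+1)) (u : (Fin (n+1) → ℝ) → ℝ≥0∞) (hu : Measurable u) :
    ∫⁻ x, u x = ∫⁻ s : ℝ, ∫⁻ y : Fin n → ℝ, u (Fin.insertNth (α := fun _ => ℝ) i s y) := by
  have mp := (volume_preserving_piFinSuccAbove (fun _ : Fin (n+1) => ℝ) i).symm
  rw [← mp.lintegral_comp hu]
  rw [Measure.volume_eq_prod, lintegral_prod _ (by fun_prop)]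
  rfl

/-- Prekopa-Leindler on `Fin n → ℝ`. -/
theorem plN (n : ℕ) : ∀ (f g h : (Fin n → ℝ) → ℝ≥0∞), Measurable f → Measurable g → Measurable h →
    ∀ (t : ℝ), 0 < t → t < 1 →
    (∀ x y, f x ^ (1 - t) * g y ^ t ≤ h ((1 - t) • x + t • y)) →
    (∫⁻ x, f x) ^ (1 - t) * (∫⁻ x, g x) ^ t ≤ ∫⁻ x, h x := by
  induction n with
  | zero =>
    intro f g h hf hg hh t ht0 ht1 H
    have : ∀ u : (Fin 0 → ℝ) → ℝ≥0∞, ∫⁻ x, u x = u default := by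
      intro u
      rw [lintegral_unique]
      simp [volume_pi]
      congr 1; exact Subsingleton.elim _ _
    rw [this, this, this]
    convert H default default
  | succ n ih =>
    intro f g h hf hg hh t ht0 ht1 H
    have e : ∀ u : (Fin (n+1) → ℝ) → ℝ≥0∞, Measurable u →
        ∫⁻ x, u x = ∫⁻ s : ℝ, ∫⁻ y : Fin n → ℝ, u (Fin.insertNth (α := fun _ => ℝ) 0 s y) :=
      fun u hu => lint_insertNth 0 u hu
    have mc : ∀ u : (Fin (n+1) → ℝ) → ℝ≥0∞, Measurable u →
        Measurable (fun p : ℝ × (Fin n → ℝ) =>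
          u (Fin.insertNth (α := fun _ => ℝ) 0 p.1 p.2)) :=
      fun u hu => meas_insertNth 0 u hu
    rw [e f hf, e g hg, e h hh]
    refine pl1 _ _ _ (mc f hf).lintegral_prod_right (mc g hg).lintegral_prod_right
      (mc h hh).lintegral_prod_right t ht0 ht1 ?_
    intro r s
    refine ih _ _ _ ((mc f hf).comp measurable_prodMk_left)
      ((mc g hg).comp measurable_prodMk_left)
      ((mc h hh).comp measurable_prodMk_left) t ht0 ht1 ?_
    intro x y
    have e2 : Fin.insertNth (α := fun _ => ℝ) 0 ((1 - t) * r + t * s) ((1 - t) • x + t • y)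
        = (1 - t) • (Fin.insertNth (α := fun _ => ℝ) 0 r x : Fin (n+1) → ℝ)
          + t • (Fin.insertNth (α := fun _ => ℝ) 0 s y : Fin (n+1) → ℝ) := by
      funext i
      refine Fin.cases ?_ (fun j => ?_) i <;> simp
    simp only [Function.comp_apply]
    rw [e2]
    exact H _ _

theorem plE (n : ℕ) (f g h : Eucl n → ℝ≥0∞) (hf : Measurable f) (hg : Measurable g)
    (hh : Measurable h) (t : ℝ) (ht0 : 0 < t) (ht1 : t < 1)
    (H : ∀ x y, f x ^ (1 - t) * g y ^ t ≤ h ((1 - t) • x + t • y)) :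
    (∫⁻ x, f x) ^ (1 - t) * (∫⁻ x, g x) ^ t ≤ ∫⁻ x, h x := by
  have mp := PiLp.volume_preserving_toLp (Fin n)
  rw [← mp.lintegral_comp hf, ← mp.lintegral_comp hg, ← mp.lintegral_comp hh]
  refine plN n _ _ _ (hf.comp mp.measurable) (hg.comp mp.measurable) (hh.comp mp.measurable)
    t ht0 ht1 ?_
  intro x y
  exact H _ _

theorem rem_ins {n : ℕ} (j : Fin (n+1)) (s : ℝ) (x : Fin (n+1) → ℝ) :
    Fin.removeNth (α := fun _ => ℝ) j.succ (Fin.insertNth (α := fun _ => ℝ) 0 s x)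
      = Fin.insertNth (α := fun _ => ℝ) 0 s (Fin.removeNth (α := fun _ => ℝ) j x) := by
  funext i
  refine Fin.cases ?_ (fun k => ?_) i <;> simp [Fin.removeNth, Fin.succ_succAbove_succ]

theorem meas_removeNth {n : ℕ} (j : Fin (n+1)) :
    Measurable (fun x : Fin (n+1) → ℝ => Fin.removeNth (α := fun _ => ℝ) j x) := by
  apply measurable_pi_lambda
  intro i
  exact measurable_pi_apply _

theorem meas_lw {n : ℕ} (r : ℝ) (u : Fin (n+1) → (Fin n → ℝ) → ℝ≥0∞) (hu : ∀ i, Measurable (u i)) :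
    Measurable (fun x : Fin (n+1) → ℝ => ∏ i, u i (Fin.removeNth (α := fun _ => ℝ) i x) ^ r) :=
  Finset.measurable_prod _ fun i _ => ((hu i).comp (meas_removeNth i)).pow_const _

theorem loomis_base : ∀ (u : Fin 2 → (Fin 1 → ℝ) → ℝ≥0∞),
    (∀ i, Measurable (u i)) →
    ∫⁻ x : Fin 2 → ℝ, ∏ i, u i (Fin.removeNth (α := fun _ => ℝ) i x) ^ ((1:ℝ) / (1:ℕ))
      ≤ ∏ i, (∫⁻ y, u i y) ^ ((1:ℝ) / (1:ℕ)) := by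
  intro u hu
  rw [lint_insertNth 0 _ (meas_lw _ u hu)]
  simp only [Fin.prod_univ_two, Nat.cast_one, div_one, ENNReal.rpow_one]
  have e1 : ∀ (s : ℝ) (y : Fin 1 → ℝ), Fin.removeNth (α := fun _ => ℝ) 1
      (Fin.insertNth (α := fun _ => ℝ) 0 s y) = fun _ => s := by
    intro s y; funext i
    have := congrFun (rem_ins (n := 0) 0 s y) i
    rw [Subsingleton.elim i 0] at this ⊢
    exact this
  have e2 : ∫⁻ y, u 1 y = ∫⁻ s : ℝ, u 1 (fun _ => s) := by
    rw [lint_insertNth 0 _ (hu 1)]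
    refine lintegral_congr fun s => ?_
    have : ∀ y : Fin 0 → ℝ, (Fin.insertNth (α := fun _ : Fin 1 => ℝ) 0 s y : Fin 1 → ℝ) = fun _ => s := by
      intro y
      funext i; rw [Subsingleton.elim (α := Fin 1) i 0]; rfl
    simp only [this]
    simp [volume_pi]
  have m1 : Measurable (fun s : ℝ => u 1 (fun _ => s)) := (hu 1).comp (by fun_prop)
  rw [e2, ← lintegral_const_mul _ m1]
  refine le_of_eq (lintegral_congr fun s => ?_)
  rw [← lintegral_mul_const _ (hu 0)]
  refine lintegral_congr fun y => ?_
  refine (Fin.prod_univ_two _).trans ?_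
  congr 2
  exact e1 s y

theorem loomis (n : ℕ) (hn : 1 ≤ n) : ∀ (u : Fin (n+1) → (Fin n → ℝ) → ℝ≥0∞),
    (∀ i, Measurable (u i)) →
    ∫⁻ x : Fin (n+1) → ℝ, ∏ i, u i (Fin.removeNth (α := fun _ => ℝ) i x) ^ ((1:ℝ) / n)
      ≤ ∏ i, (∫⁻ y, u i y) ^ ((1:ℝ) / n) := by
  induction n, hn using Nat.le_induction with
  | base =>
    exact loomis_base
  | succ n hn ih =>
    intro u hu
    have hn0 : (0:ℝ) < n := by exact_mod_cast hn
    rw [lint_insertNth 0 _ (meas_lw _ u hu)]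
    simp only [Fin.prod_univ_succ (n := n + 1), rem_ins, Fin.removeNth_insertNth]
    set q : ℝ := 1 / ((n + 1 : ℕ) : ℝ) with hq
    have hq0 : 0 < q := by positivity
    have hqn : (1:ℝ) / n * (n * q) = q := by field_simp
    have hnq : q + n * q = 1 := by rw [hq]; push_cast; field_simp; ring
    set I : Fin (n+1) → ℝ → ℝ≥0∞ := fun j s =>
      ∫⁻ y : Fin n → ℝ, u j.succ (Fin.insertNth (α := fun _ => ℝ) 0 s y) with hI
    have mI : ∀ j, Measurable (I j) := fun j => (meas_insertNth 0 _ (hu j.succ)).lintegral_prod_right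
    have mu : ∀ (j : Fin (n+1)) (s : ℝ), Measurable (fun y : Fin n → ℝ =>
        u j.succ (Fin.insertNth (α := fun _ => ℝ) 0 s y)) := fun j s =>
      (meas_insertNth 0 _ (hu j.succ)).comp measurable_prodMk_left
    have step : ∀ s : ℝ, ∫⁻ x : Fin (n+1) → ℝ, u 0 x ^ q * ∏ j, u (Fin.succ j)
        (Fin.insertNth (α := fun _ => ℝ) 0 s (Fin.removeNth (α := fun _ => ℝ) j x)) ^ q
        ≤ (∫⁻ x, u 0 x) ^ q * ∏ j, I j s ^ q := by
      intro s
      have hold := ENNReal.lintegral_mul_norm_pow_le (μ := (volume : Measure (Fin (n+1) → ℝ)))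
        (f := u 0) (g := fun x => ∏ j, u (Fin.succ j)
        (Fin.insertNth (α := fun _ => ℝ) 0 s (Fin.removeNth (α := fun _ => ℝ) j x)) ^ ((1:ℝ)/n))
        (hu 0).aemeasurable (Finset.measurable_prod _ fun j _ =>
          (((mu j s).comp (meas_removeNth j))).pow_const _).aemeasurable
        hq0.le (mul_nonneg hn0.le hq0.le) hnq
      have e : ∀ a : Fin (n+1) → ℝ≥0∞, (∏ j, a j ^ ((1:ℝ)/n)) ^ (n * q) = ∏ j, a j ^ q := by
        intro a
        rw [← ENNReal.prod_rpow_of_nonneg (mul_nonneg hn0.le hq0.le)]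
        refine Finset.prod_congr rfl fun j _ => ?_
        rw [← ENNReal.rpow_mul, hqn]
      simp only [e] at hold
      refine hold.trans ?_
      gcongr
      rw [← e]
      refine ENNReal.rpow_le_rpow ?_ (mul_nonneg hn0.le hq0.le)
      exact ih _ (fun j => mu j s)
    refine (lintegral_mono step).trans ?_
    rw [lintegral_const_mul _ (Finset.measurable_prod _ fun j _ => (mI j).pow_const _)]
    gcongr
    refine (ENNReal.lintegral_prod_norm_pow_le Finset.univ (fun j _ => (mI j).aemeasurable)
      (p := fun _ => q) ?_ ?_).trans ?_
    · simp [hq]; field_simp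
    · intro _ _; exact hq0.le
    · refine le_of_eq (Finset.prod_congr rfl fun j _ => ?_)
      rw [lint_insertNth 0 _ (hu j.succ)]

theorem det_expand {n : ℕ} (v : Fin n → Fin n → ℝ) :
    (Matrix.of v).det ^ 2 = ∑ τ : Equiv.Perm (Fin n), ∑ σ : Equiv.Perm (Fin n),
      ((τ.sign : ℤ) : ℝ) * (((σ.sign : ℤ) : ℝ) * ∏ i, (v i (σ i) * v i (τ i))) := by
  have h : (Matrix.of v).det = ∑ σ : Equiv.Perm (Fin n), ((σ.sign : ℤ) : ℝ) * ∏ i, v i (σ i) := by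
    rw [← Matrix.det_transpose, Matrix.det_apply']
    simp
  rw [sq, h, Finset.sum_mul_sum, Finset.sum_comm]
  refine Finset.sum_congr rfl fun τ _ => Finset.sum_congr rfl fun σ _ => ?_
  rw [Finset.prod_mul_distrib]; ring

theorem det_sum {n : ℕ} (M : Matrix (Fin n) (Fin n) ℝ) :
    ∑ τ : Equiv.Perm (Fin n), ∑ σ : Equiv.Perm (Fin n),
      ((τ.sign : ℤ) : ℝ) * (((σ.sign : ℤ) : ℝ) * ∏ i, M (σ i) (τ i)) = n.factorial * M.det := by
  have : ∀ τ : Equiv.Perm (Fin n), ∑ σ : Equiv.Perm (Fin n),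
      ((τ.sign : ℤ) : ℝ) * (((σ.sign : ℤ) : ℝ) * ∏ i, M (σ i) (τ i)) = M.det := by
    intro τ
    rw [← Finset.mul_sum]
    have h := Matrix.det_permute' τ M
    rw [Matrix.det_apply'] at h
    simp only [Matrix.submatrix_apply, id] at h
    rw [h, ← mul_assoc]
    have : (((τ.sign : ℤ) : ℝ)) * ((τ.sign : ℤ) : ℝ) = 1 := by
      rcases Int.units_eq_one_or τ.sign with h | h <;> simp [h]
    rw [this, one_mul]
  rw [Finset.sum_congr rfl fun τ _ => this τ]
  simp [Fintype.card_perm]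

theorem det_integral {n : ℕ} (μ : Measure (Fin n → ℝ)) [IsProbabilityMeasure μ]
    (hi : ∀ j k, Integrable (fun x : Fin n → ℝ => x j * x k) μ) :
    Integrable (fun v : Fin n → Fin n → ℝ => (Matrix.of v).det ^ 2) (Measure.pi fun _ => μ) ∧
    ∫ v : Fin n → Fin n → ℝ, (Matrix.of v).det ^ 2 ∂(Measure.pi fun _ => μ)
      = n.factorial * (Matrix.of fun j k => ∫ x : Fin n → ℝ, x j * x k ∂μ).det := by
  have hI : ∀ τ σ : Equiv.Perm (Fin n), Integrable (fun v : Fin n → Fin n → ℝ =>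
      ∏ i, (v i (σ i) * v i (τ i))) (Measure.pi fun _ => μ) := fun τ σ =>
    Integrable.fintype_prod (f := fun i (x : Fin n → ℝ) => x (σ i) * x (τ i)) (fun i => hi _ _)
  simp only [det_expand]
  constructor
  · exact integrable_finsetSum _ fun τ _ => integrable_finsetSum _ fun σ _ =>
      ((hI τ σ).const_mul _).const_mul _
  rw [integral_finsetSum _ fun τ _ => integrable_finsetSum _ fun σ _ =>
      ((hI τ σ).const_mul _).const_mul _]
  rw [← det_sum]
  refine Finset.sum_congr rfl fun τ _ => ?_
  rw [integral_finsetSum _ fun σ _ => ((hI τ σ).const_mul _).const_mul _]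
  refine Finset.sum_congr rfl fun σ _ => ?_
  rw [integral_const_mul, integral_const_mul]
  rw [integral_fintype_prod_eq_prod (f := fun i (x : Fin n → ℝ) => x (σ i) * x (τ i))]
  rfl

theorem gauss_lint {n : ℕ} (T : Matrix (Fin n) (Fin n) ℝ) (hT : T.det ≠ 0) :
    Integrable (fun x : Fin n → ℝ => Real.exp (- (∑ i, (T.mulVec x i)^2) / 2)) ∧
    ∫ x : Fin n → ℝ, Real.exp (- (∑ i, (T.mulVec x i)^2) / 2) =
      |T.det|⁻¹ * Real.sqrt (2 * Real.pi) ^ n := by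
  have e : ∀ y : Fin n → ℝ, Real.exp (- (∑ i, (y i)^2) / 2) = ∏ i, Real.exp (- (1/2) * (y i)^2) := by
    intro y
    rw [← Real.exp_sum, ← Finset.mul_sum]; congr 1; ring
  have hg : Integrable (fun y : Fin n → ℝ => Real.exp (- (∑ i, (y i)^2) / 2)) := by
    simp only [e]
    exact Integrable.fintype_prod (f := fun _ x => Real.exp (-(1/2) * x^2))
      (fun i => integrable_exp_neg_mul_sq (by norm_num))
  have hgi : ∫ y : Fin n → ℝ, Real.exp (- (∑ i, (y i)^2) / 2) = Real.sqrt (2 * Real.pi) ^ n := by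
    simp only [e]
    rw [integral_fintype_prod_volume_eq_pow (fun x => Real.exp (-(1/2) * x^2)), integral_gaussian]
    simp [mul_comm]
  have hm := Real.map_matrix_volume_pi_eq_smul_volume_pi hT
  have hmeas : Measurable (Matrix.toLin' T) := (LinearMap.continuous_on_pi _).measurable
  have hg2 : Integrable (fun y : Fin n → ℝ => Real.exp (- (∑ i, (y i)^2) / 2))
      (Measure.map (Matrix.toLin' T) volume) := by
    rw [hm]; exact hg.smul_measure (by simp)
  constructor
  · have := (integrable_map_measure hg2.aestronglyMeasurable hmeas.aemeasurable).1 hg2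
    exact this
  · have := integral_map hmeas.aemeasurable hg2.aestronglyMeasurable
    rw [hm, integral_smul_measure, hgi] at this
    rw [ENNReal.toReal_ofReal (abs_nonneg _), abs_inv] at this
    simpa using this.symm

open scoped MatrixOrder in
theorem posdef_factor {n : ℕ} (M : Matrix (Fin n) (Fin n) ℝ) (hM : M.PosDef) :
    ∃ T : Matrix (Fin n) (Fin n) ℝ, T.det ≠ 0 ∧ T * M * T.transpose = 1 := by
  obtain ⟨B, hB⟩ := CStarAlgebra.nonneg_iff_eq_star_mul_self.mp hM.posSemidef.nonneg
  rw [Matrix.star_eq_conjTranspose, Matrix.conjTranspose_eq_transpose_of_trivial] at hB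
  have hd : M.det ≠ 0 := hM.det_pos.ne'
  have hdB : B.det ≠ 0 := by
    intro h; apply hd; rw [hB]; simp [h]
  have hu : IsUnit B.det := isUnit_iff_ne_zero.2 hdB
  have hut : IsUnit (B.transpose).det := by simpa using hu
  refine ⟨(B.transpose)⁻¹, ?_, ?_⟩
  · rw [Matrix.det_nonsing_inv]; simp [hdB]
  · rw [hB, ← mul_assoc, Matrix.nonsing_inv_mul _ hut, one_mul, Matrix.transpose_nonsing_inv,
      Matrix.transpose_transpose, Matrix.mul_nonsing_inv _ hu]

theorem quad_integral {n : ℕ} (μ : Measure (Fin n → ℝ))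
    (hi : ∀ j k, Integrable (fun x : Fin n → ℝ => x j * x k) μ) (w : Fin n → ℝ) :
    Integrable (fun x : Fin n → ℝ => (w ⬝ᵥ x)^2) μ ∧
    ∫ x : Fin n → ℝ, (w ⬝ᵥ x)^2 ∂μ =
      w ⬝ᵥ ((Matrix.of fun j k => ∫ x : Fin n → ℝ, x j * x k ∂μ).mulVec w) := by
  have e : ∀ x : Fin n → ℝ, (w ⬝ᵥ x)^2 = ∑ j, ∑ k, (w j * w k) * (x j * x k) := by
    intro x
    rw [sq, dotProduct, Finset.sum_mul_sum]
    refine Finset.sum_congr rfl fun j _ => Finset.sum_congr rfl fun k _ => by ring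
  simp only [e]
  refine ⟨integrable_finsetSum _ fun j _ => integrable_finsetSum _ fun k _ =>
    (hi j k).const_mul _, ?_⟩
  rw [integral_finsetSum _ fun j _ => integrable_finsetSum _ fun k _ => (hi j k).const_mul _]
  simp only [dotProduct, Matrix.mulVec, Matrix.of_apply, Finset.mul_sum]
  refine Finset.sum_congr rfl fun j _ => ?_
  rw [integral_finsetSum _ fun k _ => (hi j k).const_mul _]
  refine Finset.sum_congr rfl fun k _ => ?_
  rw [integral_const_mul]; ring

open ProbabilityTheory in
theorem cov_bound {n : ℕ} (A : Set (Fin n → ℝ)) (hA : MeasurableSet A) (h0 : volume A ≠ 0)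
    (ht : volume A ≠ ∞)
    (hi : ∀ j k, Integrable (fun x : Fin n → ℝ => x j * x k) (cond volume A)) :
    (volume A).toReal ^ 2 ≤ (2 * Real.pi * Real.exp 1) ^ n *
      (Matrix.of fun j k => ∫ x : Fin n → ℝ, x j * x k ∂(cond volume A)).det := by
  set μ := cond (volume : Measure (Fin n → ℝ)) A with hμ
  have hp : IsProbabilityMeasure μ := cond_isProbabilityMeasure_of_finite h0 ht
  set M := (Matrix.of fun j k => ∫ x : Fin n → ℝ, x j * x k ∂μ) with hM
  have hq := quad_integral μ hi
  have hpd : M.PosDef := by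
    apply Matrix.PosDef.of_dotProduct_mulVec_pos
    · ext j k
      simp [hM, mul_comm]
    · intro w hw
      have := (hq w).2
      simp only [star_trivial]
      rw [← this]
      have hnn : 0 ≤ ∫ x : Fin n → ℝ, (w ⬝ᵥ x)^2 ∂μ := integral_nonneg fun x => sq_nonneg _
      refine lt_of_le_of_ne hnn fun hz => ?_
      rw [eq_comm, integral_eq_zero_iff_of_nonneg (fun x => sq_nonneg _) (hq w).1] at hz
      have hz' : ∀ᵐ x ∂(volume.restrict A), w ⬝ᵥ x = 0 := by
        have : ∀ᵐ x ∂μ, w ⬝ᵥ x = 0 := by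
          filter_upwards [hz] with x hx
          simpa using hx
        rw [hμ, ProbabilityTheory.cond, Measure.ae_ennreal_smul_measure_iff] at this
        · exact this
        · simpa using ht
      rw [ae_restrict_iff' hA] at hz'
      let L : (Fin n → ℝ) →ₗ[ℝ] ℝ := (dotProductBilin ℝ ℝ) w
      have hL : ∀ x, L x = w ⬝ᵥ x := fun x => rfl
      have hk : volume (L.ker : Set (Fin n → ℝ)) = 0 := by
        apply Measure.addHaar_submodule
        intro h
        have := LinearMap.mem_ker.1 (h ▸ Submodule.mem_top : w ∈ L.ker)
        rw [hL] at this
        exact hw (dotProduct_self_eq_zero.1 this)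
      apply h0
      refine measure_mono_null_ae ?_ hk
      filter_upwards [hz'] with x hx hxA
      exact LinearMap.mem_ker.2 (hx hxA)
  obtain ⟨T, hT, hTM⟩ := posdef_factor M hpd
  have hg := gauss_lint T hT
  have hrow : ∀ x i, T.mulVec x i = (fun j => T i j) ⬝ᵥ x := fun x i => rfl
  have hsum : ∫ x, (∑ i, (T.mulVec x i)^2) ∂μ = n := by
    simp only [hrow]
    rw [integral_finsetSum _ fun i _ => (hq _).1]
    have : ∀ i, ∫ x : Fin n → ℝ, ((fun j => T i j) ⬝ᵥ x)^2 ∂μ = 1 := by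
      intro i
      rw [(hq _).2, ← hM]
      have := congrFun (congrFun hTM i) i
      rw [Matrix.one_apply_eq, mul_assoc] at this
      rw [← this]
      rfl
    simp [this]
  have hintg : Integrable (fun x => - (∑ i, (T.mulVec x i)^2) / 2) μ := by
    simp only [hrow]
    exact ((integrable_finsetSum _ fun i _ => (hq _).1).neg).div_const 2
  have hge : Integrable (fun x => Real.exp (- (∑ i, (T.mulVec x i)^2) / 2)) μ := by
    rw [hμ, ProbabilityTheory.cond]
    exact hg.1.restrict.smul_measure (by simpa using h0)
  have hJ := convexOn_exp.map_integral_le (μ := μ) (f := fun x => - (∑ i, (T.mulVec x i)^2) / 2)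
    Real.continuous_exp.continuousOn isClosed_univ (by simp) hintg hge
  rw [integral_div, integral_neg, hsum] at hJ
  have hJ2 : ∫ x, Real.exp (- (∑ i, (T.mulVec x i)^2) / 2) ∂μ ≤
      (volume A).toReal⁻¹ * (|T.det|⁻¹ * Real.sqrt (2 * Real.pi) ^ n) := by
    rw [← hg.2, hμ, ProbabilityTheory.cond, integral_smul_measure, ENNReal.toReal_inv, smul_eq_mul]
    refine mul_le_mul_of_nonneg_left ?_ (by positivity)
    exact setIntegral_le_integral hg.1 (Filter.Eventually.of_forall fun x => (Real.exp_pos _).le)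
  have ha : 0 < (volume A).toReal := ENNReal.toReal_pos h0 ht
  have hdet : T.det ^ 2 * M.det = 1 := by
    have := congrArg Matrix.det hTM
    simp only [Matrix.det_mul, Matrix.det_transpose, Matrix.det_one] at this
    linarith
  have hJ3 := hJ.trans hJ2
  have hTa : 0 < |T.det| := abs_pos.2 hT
  have h1 : (volume A).toReal * |T.det| ≤ Real.exp (n/2) * Real.sqrt (2 * Real.pi) ^ n := by
    have : Real.exp (-(n:ℝ)/2) * ((volume A).toReal * |T.det|) ≤ Real.sqrt (2 * Real.pi) ^ n := by
      calc _ ≤ ((volume A).toReal⁻¹ * (|T.det|⁻¹ * Real.sqrt (2 * Real.pi) ^ n)) *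
        ((volume A).toReal * |T.det|) := by gcongr
        _ = _ := by field_simp
    calc _ = Real.exp (n/2) * (Real.exp (-(n:ℝ)/2) * ((volume A).toReal * |T.det|)) := by
          rw [← mul_assoc, ← Real.exp_add]; ring_nf; simp
      _ ≤ _ := by gcongr
  have h2 : ((volume A).toReal * |T.det|)^2 ≤ (2 * Real.pi * Real.exp 1) ^ n := by
    calc _ ≤ (Real.exp (n/2) * Real.sqrt (2 * Real.pi) ^ n)^2 := by gcongr
      _ = _ := by
        rw [mul_pow, ← pow_mul, mul_comm n 2, pow_mul, Real.sq_sqrt (by positivity), mul_pow (2 * Real.pi),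
          ← Real.exp_nat_mul, ← Real.exp_nat_mul, mul_comm]
        congr 2; push_cast; ring
  calc (volume A).toReal ^ 2 = ((volume A).toReal * |T.det|)^2 * M.det := by
        rw [mul_pow, sq_abs, mul_assoc, hdet, mul_one]
    _ ≤ _ := by
      have := hpd.det_pos.le
      gcongr

open ProbabilityTheory in
theorem det_select {n : ℕ} (A : Set (Fin n → ℝ)) (hA : MeasurableSet A)
    (hb : Bornology.IsBounded A) (h0 : volume A ≠ 0) :
    ∃ v : Fin n → Fin n → ℝ, (∀ i, v i ∈ A) ∧
      n.factorial * (volume A).toReal ^ 2 ≤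
        (2 * Real.pi * Real.exp 1) ^ n * (Matrix.of v).det ^ 2 := by
  have ht : volume A ≠ ∞ := hb.measure_lt_top.ne
  set μ := cond (volume : Measure (Fin n → ℝ)) A with hμ
  have hp : IsProbabilityMeasure μ := cond_isProbabilityMeasure_of_finite h0 ht
  have hmem : ∀ᵐ x ∂μ, x ∈ A := ae_cond_mem hA
  obtain ⟨C, hC⟩ := hb.exists_norm_le
  have hi : ∀ j k, Integrable (fun x : Fin n → ℝ => x j * x k) μ := by
    intro j k
    apply Integrable.of_bound (C := C * C)
    · exact ((measurable_pi_apply j).mul (measurable_pi_apply k)).aestronglyMeasurable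
    · filter_upwards [hmem] with x hx
      rw [norm_mul]
      have := hC x hx
      have h1 := (norm_le_pi_norm x j).trans this
      have h2 := (norm_le_pi_norm x k).trans this
      have := norm_nonneg (x j)
      gcongr
      linarith
  have hD := det_integral μ hi
  have hN : (Measure.pi fun _ : Fin n => μ) {v | ∀ i, v i ∈ A}ᶜ = 0 := by
    have : ∀ᵐ v ∂(Measure.pi fun _ : Fin n => μ), ∀ i, v i ∈ A := by
      rw [ae_all_iff]
      intro i
      exact (measurePreserving_eval (fun _ : Fin n => μ) i).quasiMeasurePreserving.ae hmem
    exact this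
  obtain ⟨v, hv, hle⟩ := exists_notMem_null_integral_le hD.1 hN
  refine ⟨v, by simpa using hv, ?_⟩
  rw [hD.2] at hle
  have := cov_bound A hA h0 ht hi
  calc _ ≤ n.factorial * ((2 * Real.pi * Real.exp 1) ^ n *
      (Matrix.of fun j k => ∫ x : Fin n → ℝ, x j * x k ∂μ).det) := by gcongr
    _ = (2 * Real.pi * Real.exp 1) ^ n * (n.factorial *
      (Matrix.of fun j k => ∫ x : Fin n → ℝ, x j * x k ∂μ).det) := by ring
    _ ≤ _ := by gcongr

/-- The directional supremum. -/
def PF {n : ℕ} (F : Eucl n → ℝ≥0∞) (θ x : Eucl n) : ℝ≥0∞ := ⨆ s : ℝ, F (x + s • θ)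

/-- The covariogram. -/
def GG {n : ℕ} (F : Eucl n → ℝ≥0∞) (x : Eucl n) : ℝ≥0∞ := ∫⁻ y, min (F y) (F (y + x))

/-- The extended-valued version of a function. -/
def EF {n : ℕ} (f : Eucl n → ℝ) (x : Eucl n) : ℝ≥0∞ := ENNReal.ofReal (f x)

theorem EF_usc {n : ℕ} {f : Eucl n → ℝ} (hf : MemQ0 f) : UpperSemicontinuous (EF f) :=
  ENNReal.continuous_ofReal.comp_upperSemicontinuous hf.2.2.1 (fun _ _ h => ENNReal.ofReal_le_ofReal h)

theorem EF_meas {n : ℕ} {f : Eucl n → ℝ} (hf : MemQ0 f) : Measurable (EF f) :=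
  (EF_usc hf).measurable

theorem EF_lc {n : ℕ} {f : Eucl n → ℝ} (hf : MemQ0 f) (x y : Eucl n) (t : ℝ) (h0 : 0 ≤ t)
    (h1 : t ≤ 1) : EF f x ^ (1-t) * EF f y ^ t ≤ EF f ((1-t) • x + t • y) := by
  rcases h0.eq_or_lt with rfl | h0
  · simp
  rcases h1.eq_or_lt with rfl | h1
  · simp
  unfold EF
  rw [ENNReal.ofReal_rpow_of_nonneg (hf.1 x) (by linarith), ENNReal.ofReal_rpow_of_nonneg (hf.1 y) h0.le,
    ← ENNReal.ofReal_mul (Real.rpow_nonneg (hf.1 x) _)]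
  apply ENNReal.ofReal_le_ofReal
  have := hf.2.1 x y (1-t) (by linarith) (by linarith)
  simpa using this

theorem EF_lint {n : ℕ} {f : Eucl n → ℝ} (hf : MemQ0 f) :
    ∫⁻ x, EF f x = ENNReal.ofReal (∫ x, f x) :=
  (ofReal_integral_eq_lintegral_ofReal hf.2.2.2.1 (Filter.Eventually.of_forall hf.1)).symm

theorem EF_ne_top {n : ℕ} {f : Eucl n → ℝ} (x) : EF f x ≠ ∞ := ENNReal.ofReal_ne_top

theorem scale_lint {n : ℕ} (u : Eucl n → ℝ≥0∞) (r : ℝ) (hr : 0 < r) (hu : Measurable u) (x : Eucl n) :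
    ∫⁻ y, u (x + r • y) = ENNReal.ofReal (r⁻¹ ^ n) * ∫⁻ y, u y := by
  have h1 : ∫⁻ y, u (x + r • y) = ∫⁻ z, u (x + z) ∂(Measure.map (fun y => r • y) volume) := by
    exact (lintegral_map (f := fun z => u (x + z)) (hu.comp (measurable_const_add x)) (measurable_const_smul r)).symm
  rw [h1, Measure.map_addHaar_smul _ hr.ne', lintegral_smul_measure, lintegral_add_left_eq_self]
  simp [abs_of_pos hr]

theorem f_bdd {n : ℕ} {f : Eucl n → ℝ} (hf : MemQ0 f) : ∃ C : ℝ, ∀ x, f x ≤ C := by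
  set F := EF f with hF
  have hm : Measurable F := EF_meas hf
  set J := ∫⁻ y, F y ^ (1/2:ℝ) with hJ
  have hI : ∫⁻ y, F y ≠ ∞ := by rw [EF_lint hf]; exact ENNReal.ofReal_ne_top
  have hI0 : ∫⁻ y, F y ≠ 0 := by
    rw [EF_lint hf]; simpa using hf.2.2.2.2
  have hJ0 : J ≠ 0 := by
    intro h
    rw [hJ, lintegral_eq_zero_iff (hm.pow_const _)] at h
    apply hI0
    rw [lintegral_eq_zero_iff hm]
    filter_upwards [h] with x hx
    have h2 : ¬ ((2:ℝ) < 0) := by norm_num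
    simpa [h2] using hx
  have key : ∀ x, F x ^ (1/2:ℝ) * J ≤ ENNReal.ofReal (2 ^ n) * ∫⁻ y, F y := by
    intro x
    have := scale_lint F (1/2) (by norm_num) hm ((1/2:ℝ) • x)
    have h2 : ENNReal.ofReal ((1/2:ℝ)⁻¹ ^ n) = ENNReal.ofReal (2^n) := by norm_num
    rw [h2] at this
    rw [← this, hJ, ← lintegral_const_mul _ (hm.pow_const _)]
    apply lintegral_mono
    intro y
    have := EF_lc hf x y (1/2) (by norm_num) (by norm_num)
    norm_num at this ⊢
    exact this
  set K := (ENNReal.ofReal (2 ^ n) * ∫⁻ y, F y) / J with hK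
  have hKt : K ≠ ∞ := ENNReal.div_ne_top (ENNReal.mul_ne_top ENNReal.ofReal_ne_top hI) hJ0
  refine ⟨(K ^ (2:ℝ)).toReal, fun x => ?_⟩
  have h1 : F x ^ (1/2:ℝ) ≤ K := by
    have hJt : J ≠ ∞ ∨ J = ∞ := by tauto
    rcases hJt with hJt | hJt
    · rw [hK, ENNReal.le_div_iff_mul_le (Or.inl hJ0) (Or.inl hJt)]; exact key x
    · have := key x
      rw [hJt] at this
      by_cases hz : F x ^ (1/2:ℝ) = 0
      · rw [hz]; exact zero_le
      · rw [ENNReal.mul_top hz, top_le_iff] at this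
        exact absurd this (ENNReal.mul_ne_top ENNReal.ofReal_ne_top hI)
  have h2 : F x ≤ K ^ (2:ℝ) := by
    have := ENNReal.rpow_le_rpow h1 (z := 2) (by norm_num)
    rw [← ENNReal.rpow_mul] at this
    norm_num at this
    exact_mod_cast this
  have h3 := ENNReal.toReal_mono (ENNReal.rpow_ne_top_of_nonneg (by norm_num) hKt) h2
  rwa [hF, EF, ENNReal.toReal_ofReal (hf.1 x)] at h3

theorem f_le_sup {n : ℕ} {f : Eucl n → ℝ} (hf : MemQ0 f) (x) : f x ≤ supNorm f := by
  obtain ⟨C, hC⟩ := f_bdd hf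
  exact le_ciSup (f := f) ⟨C, by rintro _ ⟨x, rfl⟩; exact hC x⟩ x

theorem sup_pos {n : ℕ} {f : Eucl n → ℝ} (hf : MemQ0 f) : 0 < supNorm f := by
  by_contra h
  have : ∀ x, f x = 0 := fun x => le_antisymm ((f_le_sup hf x).trans (not_lt.1 h)) (hf.1 x)
  have h2 := hf.2.2.2.2
  simp [this] at h2

theorem PF_meas {n : ℕ} (F : Eucl n → ℝ≥0∞) (hF : UpperSemicontinuous F) (θ : Eucl n) :
    Measurable (PF F θ) := by
  apply measurable_of_Ioi
  intro c
  have e : PF F θ ⁻¹' Ioi c = ⋃ q : ℚ, ⋃ (_ : c < ((Real.toNNReal q : NNReal) : ℝ≥0∞)),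
      (fun p : Eucl n × ℝ => p.1 - p.2 • θ) ''
        ((F ⁻¹' Ici ((Real.toNNReal q : NNReal) : ℝ≥0∞)) ×ˢ (univ : Set ℝ)) := by
    ext x
    simp only [mem_preimage, mem_Ioi, PF, lt_iSup_iff, mem_iUnion, mem_image, mem_prod, mem_Ici,
      mem_univ, and_true, Prod.exists, exists_prop]
    constructor
    · rintro ⟨s, hs⟩
      obtain ⟨q, -, h1, h2⟩ := ENNReal.lt_iff_exists_rat_btwn.1 hs
      exact ⟨q, h1, x + s • θ, s, h2.le, by simp⟩
    · rintro ⟨q, h1, y, s, h2, rfl⟩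
      exact ⟨s, by simpa using h1.trans_le h2⟩
  rw [e]
  refine MeasurableSet.iUnion fun q => MeasurableSet.iUnion fun _ => ?_
  have hc : IsClosed ((F ⁻¹' Ici ((Real.toNNReal q : NNReal) : ℝ≥0∞)) ×ˢ (univ : Set ℝ)) :=
    (hF.isClosed_preimage _).prod isClosed_univ
  have := (isSigmaCompact_univ.of_isClosed_subset hc (subset_univ _)).image (f := fun p : Eucl n × ℝ => p.1 - p.2 • θ) (by fun_prop)
  obtain ⟨K, hK, hU⟩ := this
  rw [← hU]
  exact MeasurableSet.iUnion fun i => (hK i).measurableSet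

theorem projL1_eq {n : ℕ} {f : Eucl n → ℝ} (hf : MemQ0 f) (θ : Eucl n) :
    projL1 f (Submodule.span ℝ {θ})ᗮ =
      (∫⁻ y : (Submodule.span ℝ {θ})ᗮ, PF (EF f) θ (y : Eucl n)).toReal := by
  unfold projL1
  have hb : ∀ x, PF (EF f) θ x < ∞ := by
    intro x
    refine lt_of_le_of_lt (iSup_le fun s => ?_) (ENNReal.ofReal_lt_top (r := supNorm f))
    exact ENNReal.ofReal_le_ofReal (f_le_sup hf _)
  have hme : AEMeasurable (fun y : (Submodule.span ℝ {θ})ᗮ => PF (EF f) θ (y : Eucl n)) volume :=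
    ((PF_meas _ (EF_usc hf) θ).comp measurable_subtype_coe).aemeasurable
  rw [← integral_toReal hme (Filter.Eventually.of_forall fun y => hb y)]
  congr 1
  funext y
  have : PF (EF f) θ (y : Eucl n) = ⨆ z : (Submodule.span ℝ {θ})ᗮᗮ, EF f (y + z) := by
    apply le_antisymm
    · refine iSup_le fun s => ?_
      have hm : s • θ ∈ (Submodule.span ℝ {θ})ᗮᗮ := by
        rw [Submodule.orthogonal_orthogonal]
        exact Submodule.smul_mem _ _ (Submodule.mem_span_singleton_self θ)
      exact le_iSup (fun z : (Submodule.span ℝ {θ})ᗮᗮ => EF f (y + z)) ⟨_, hm⟩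
    · refine iSup_le ?_
      rintro ⟨z, hz⟩
      rw [Submodule.orthogonal_orthogonal, Submodule.mem_span_singleton] at hz
      obtain ⟨a, ha⟩ := hz
      simp only [← ha]
      exact le_iSup (fun s : ℝ => EF f (y + s • θ)) a
  rw [this, ENNReal.toReal_iSup (fun _ => EF_ne_top _)]
  congr 1
  funext z
  rw [EF, ENNReal.toReal_ofReal (hf.1 _)]

theorem supp_convex {n : ℕ} {f : Eucl n → ℝ} (hf : MemQ0 f) : Convex ℝ {x | 0 < f x} := by
  intro x hx y hy a b ha hb hab
  rcases ha.eq_or_lt with rfl | ha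
  · have : b = 1 := by linarith
    simpa [this] using hy
  rcases hb.eq_or_lt with rfl | hb
  · have : a = 1 := by linarith
    simpa [this] using hx
  have := hf.2.1 x y a ha (by linarith)
  have hb' : 1 - a = b := by linarith
  rw [hb'] at this
  exact lt_of_lt_of_le (mul_pos (Real.rpow_pos_of_pos hx _) (Real.rpow_pos_of_pos hy _)) this

theorem supp_interior {n : ℕ} {f : Eucl n → ℝ} (hf : MemQ0 f) : (interior {x | 0 < f x}).Nonempty := by
  by_contra h
  rw [not_nonempty_iff_eq_empty] at h
  have hfr := (supp_convex hf).addHaar_frontier (volume : Measure (Eucl n))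
  have : volume {x | 0 < f x} = 0 := by
    refine measure_mono_null ?_ hfr
    rw [frontier, h, sdiff_empty]
    exact subset_closure
  have hz : ∫ x, f x = 0 := by
    apply integral_eq_zero_of_ae
    have : ∀ᵐ x, ¬ (0 < f x) := measure_eq_zero_iff_ae_notMem.1 this
    filter_upwards [this] with x hx
    exact le_antisymm (not_lt.1 hx) (hf.1 x)
  exact hf.2.2.2.2.ne' hz

/-- The isometry `ℝ × θ⊥ → E`. -/
def splitIso {n : ℕ} (θ : Eucl n) (hθ : ‖θ‖ = 1) :
    WithLp 2 ((Submodule.span ℝ {θ})ᗮ × ℝ) ≃ₗᵢ[ℝ] Eucl n :=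
  LinearIsometryEquiv.ofSurjective
    { toFun := fun p => (p.fst : Eucl n) + p.snd • θ
      map_add' := by
        intro x y
        simp only [WithLp.add_fst, WithLp.add_snd, Submodule.coe_add, add_smul]
        abel
      map_smul' := by
        intro c x
        simp only [WithLp.smul_fst, WithLp.smul_snd, Submodule.coe_smul, smul_eq_mul, mul_smul,
          RingHom.id_apply, smul_add]
      norm_map' := by
        intro p
        have ho : inner ℝ (p.fst : Eucl n) (p.snd • θ) = 0 := by
          rw [inner_smul_right]
          have := (Submodule.mem_orthogonal_singleton_iff_inner_left).1 p.fst.2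
          rw [this, mul_zero]
        have h1 := norm_add_sq_eq_norm_sq_add_norm_sq_of_inner_eq_zero _ _ ho
        have h2 := WithLp.prod_norm_sq_eq_of_L2 p
        rw [norm_smul, hθ, mul_one] at h1
        have : ‖(p.fst : Eucl n) + p.snd • θ‖ ^ 2 = ‖p‖ ^ 2 := by
          rw [h2, sq, h1]; simp [sq]
        exact (sq_eq_sq₀ (norm_nonneg _) (norm_nonneg _)).1 this }
    (by
      intro x
      refine ⟨WithLp.toLp 2 (⟨x - inner ℝ θ x • θ, ?_⟩, inner ℝ θ x), ?_⟩
      · rw [Submodule.mem_orthogonal_singleton_iff_inner_right, inner_sub_right, inner_smul_right,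
          real_inner_self_eq_norm_sq, hθ]
        ring
      · simp)

theorem split_mp {n : ℕ} (θ : Eucl n) (hθ : ‖θ‖ = 1) :
    MeasurePreserving (fun p : (Submodule.span ℝ {θ})ᗮ × ℝ => (p.1 : Eucl n) + p.2 • θ) := by
  exact (splitIso θ hθ).measurePreserving.comp (WithLp.volume_preserving_toLp _ _)

theorem split_lint {n : ℕ} (θ : Eucl n) (hθ : ‖θ‖ = 1) (u : Eucl n → ℝ≥0∞) (hu : Measurable u) :
    ∫⁻ x, u x = ∫⁻ y : (Submodule.span ℝ {θ})ᗮ, ∫⁻ s : ℝ, u (y + s • θ) := by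
  have h := split_mp θ hθ
  rw [← h.lintegral_comp hu, Measure.volume_eq_prod]
  exact lintegral_prod _ (hu.comp h.measurable).aemeasurable

theorem PF_inv {n : ℕ} (F : Eucl n → ℝ≥0∞) (θ x : Eucl n) (s : ℝ) : PF F θ (x + s • θ) = PF F θ x := by
  unfold PF
  refine (Equiv.addLeft s).iSup_congr (fun t => ?_)
  simp [add_smul, add_assoc]

theorem PF_smul {n : ℕ} (F : Eucl n → ℝ≥0∞) (θ x : Eucl n) (r : ℝ) (hr : r ≠ 0) :
    PF F (r • θ) x = PF F θ x := by
  unfold PF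
  refine (Equiv.mulRight₀ r hr).iSup_congr (fun t => ?_)
  simp [smul_smul]

theorem fund_dom {n : ℕ} (θ : Eucl n) (hθ : ‖θ‖ = 1) (Φ : Eucl n → ℝ≥0∞) (hΦ : Measurable Φ)
    (hinv : ∀ x, ∀ s : ℝ, Φ (x + s • θ) = Φ x) (D : Eucl n → ℝ≥0∞) (hD : Measurable D) (c : ℝ≥0∞)
    (hc : ∀ x, ∫⁻ s : ℝ, D (x + s • θ) = c) :
    ∫⁻ x, Φ x * D x = c * ∫⁻ y : (Submodule.span ℝ {θ})ᗮ, Φ y := by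
  rw [split_lint θ hθ (fun x => Φ x * D x) (hΦ.mul hD)]
  have : ∀ y : (Submodule.span ℝ {θ})ᗮ, ∫⁻ s : ℝ, Φ (y + s • θ) * D (y + s • θ) = c * Φ y := by
    intro y
    simp only [hinv]
    rw [lintegral_const_mul, hc, mul_comm]
    exact hD.comp (by fun_prop)
  simp only [this]
  rw [lintegral_const_mul]
  exact hΦ.comp measurable_subtype_coe

theorem GG_meas_aux {n : ℕ} {F : Eucl n → ℝ≥0∞} (hF : Measurable F) (x : Eucl n) :
    Measurable (fun y => min (F y) (F (y + x))) :=
  hF.min (hF.comp (measurable_add_const x))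

theorem GG_lc {n : ℕ} {f : Eucl n → ℝ} (hf : MemQ0 f) (x z : Eucl n) (t : ℝ) (h0 : 0 < t)
    (h1 : t < 1) : GG (EF f) x ^ (1-t) * GG (EF f) z ^ t ≤ GG (EF f) ((1-t) • x + t • z) := by
  have hF := EF_meas hf
  refine plE n _ _ _ (GG_meas_aux hF x) (GG_meas_aux hF z) (GG_meas_aux hF _) t h0 h1 ?_
  intro a b
  apply le_min
  · refine le_trans ?_ (EF_lc hf a b t h0.le h1.le)
    gcongr
    · exact min_le_left _ _
    · exact min_le_left _ _
  · refine le_trans ?_ ((EF_lc hf (a+x) (b+z) t h0.le h1.le).trans_eq ?_)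
    · gcongr
      · exact min_le_right _ _
      · exact min_le_right _ _
    · congr 1
      simp only [smul_add]; abel

theorem GG_zero {n : ℕ} (F : Eucl n → ℝ≥0∞) : GG F 0 = ∫⁻ y, F y := by
  simp [GG]

theorem GG_le {n : ℕ} (F : Eucl n → ℝ≥0∞) (x : Eucl n) : GG F x ≤ GG F 0 := by
  rw [GG_zero]; exact lintegral_mono fun y => min_le_left _ _

theorem fibre_ineq (g : ℝ → ℝ≥0∞) (hg : Measurable g) (a b : ℝ) (c : ℝ≥0∞) (hc : ∀ s ∈ Icc a b, c ≤ g s)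
    (t : ℝ) (ht : 0 < t) (htb : t ≤ b - a) :
    (∫⁻ s, min (g s) (g (s + t))) + ENNReal.ofReal t * c ≤ ∫⁻ s, g s := by
  have e1 := lintegral_add_compl (μ := volume) (fun s => min (g s) (g (s+t))) (measurableSet_Iio (a := a))
  have e2 := lintegral_add_compl (μ := volume) g (measurableSet_Iio (a := a))
  have e3 : ∫⁻ s in Ici a, g s = (∫⁻ s in Ico a (a+t), g s) + ∫⁻ s in Ici (a+t), g s := by
    rw [← lintegral_union measurableSet_Ici]
    · rw [Ico_union_Ici_eq_Ici (by linarith)]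
    · rw [Set.disjoint_left]; intro s hs hs'; exact absurd hs.2 (not_lt.2 hs')
  rw [compl_Iio] at e1 e2
  rw [← e1, ← e2, e3]
  have i1 : ∫⁻ s in Iio a, min (g s) (g (s+t)) ≤ ∫⁻ s in Iio a, g s :=
    lintegral_mono fun s => min_le_left _ _
  have i2 : ∫⁻ s in Ici a, min (g s) (g (s+t)) ≤ ∫⁻ s in Ici (a+t), g s := by
    have hmp : MeasurePreserving (fun s : ℝ => s + t) := measurePreserving_add_right volume t
    have := hmp.setLIntegral_comp_preimage (measurableSet_Ici (a := a+t)) hg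
    have hp : (fun s : ℝ => s + t) ⁻¹' Ici (a+t) = Ici a := by ext s; simp
    rw [hp] at this
    rw [← this]
    exact lintegral_mono fun s => min_le_right _ _
  have i3 : ENNReal.ofReal t * c ≤ ∫⁻ s in Ico a (a+t), g s := by
    calc ENNReal.ofReal t * c = ∫⁻ s in Ico a (a+t), c := by
          rw [setLIntegral_const]; simp [mul_comm]
      _ ≤ _ := setLIntegral_mono hg fun s hs => hc s ⟨hs.1, by linarith [hs.2]⟩
  calc _ ≤ (∫⁻ s in Iio a, g s) + (∫⁻ s in Ici (a+t), g s) + ∫⁻ s in Ico a (a+t), g s := by gcongr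
    _ = _ := by ring

theorem line_interval (g : ℝ → ℝ) (hlc : ∀ x y t : ℝ, 0 < t → t < 1 →
      g x ^ (1-t) * g y ^ t ≤ g ((1-t) * x + t * y)) (s1 s0 c : ℝ) (hne : s0 ≠ s1) (hc : 0 ≤ c)
    (h1 : c < g s1) (h0 : 0 < g s0) :
    ∃ a b : ℝ, a < b ∧ ∀ s ∈ Icc a b, c ≤ g s := by
  have hA : 0 < g s1 := hc.trans_lt h1
  have hcont : Filter.Tendsto (fun t : ℝ => g s1 ^ (1-t) * g s0 ^ t) (nhds 0) (nhds (g s1)) := by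
    have : Continuous (fun t : ℝ => g s1 ^ (1-t) * g s0 ^ t) :=
      (Continuous.rpow continuous_const (by fun_prop) (fun _ => Or.inl hA.ne')).mul
        (Continuous.rpow continuous_const continuous_id (fun _ => Or.inl h0.ne'))
    have h := this.tendsto 0
    simpa using h
  obtain ⟨δ, hδ, hδ'⟩ := Metric.eventually_nhds_iff.1 (hcont.eventually (lt_mem_nhds h1))
  set m := min (δ/2) (1/2) with hm
  have hm0 : 0 < m := by positivity
  have hm1 : m ≤ 1/2 := min_le_right _ _
  have hm2 : m ≤ δ/2 := min_le_left _ _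
  have key : ∀ t, 0 ≤ t → t ≤ m → c ≤ g ((1-t) * s1 + t * s0) := by
    intro t ht0 ht1
    rcases ht0.eq_or_lt with rfl | ht0
    · simpa using h1.le
    refine le_trans (le_of_lt ?_) (hlc s1 s0 t ht0 (by linarith))
    apply hδ'
    rw [Real.dist_eq, sub_zero, abs_of_pos ht0]; linarith
  rcases lt_or_gt_of_ne hne with hlt | hlt
  · refine ⟨s1 + m * (s0 - s1), s1, by nlinarith, fun s hs => ?_⟩
    have hd : 0 < s1 - s0 := by linarith
    have := key ((s1 - s) / (s1 - s0)) (div_nonneg (by linarith [hs.2]) hd.le)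
      (by rw [div_le_iff₀ hd]; nlinarith [hs.1])
    convert this using 2
    field_simp; ring
  · refine ⟨s1, s1 + m * (s0 - s1), by nlinarith, fun s hs => ?_⟩
    have hd : 0 < s0 - s1 := by linarith
    have := key ((s - s1) / (s0 - s1)) (div_nonneg (by linarith [hs.1]) hd.le)
      (by rw [div_le_iff₀ hd]; nlinarith [hs.2])
    convert this using 2
    field_simp; ring

theorem ae_fibre {n : ℕ} {f : Eucl n → ℝ} (hf : MemQ0 f) (θ : Eucl n) (hθ : ‖θ‖ = 1) :
    ∀ᵐ y : (Submodule.span ℝ {θ})ᗮ, ∀ c < PF (EF f) θ (y : Eucl n),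
      ∃ a b : ℝ, a < b ∧ ∀ s ∈ Icc a b, c ≤ EF f (y + s • θ) := by
  set H := (Submodule.span ℝ {θ})ᗮ with hH
  set D := {x | 0 < f x} with hD
  have hcv : Convex ℝ D := supp_convex hf
  have hne := supp_interior hf
  set U := interior D with hU
  let P : Eucl n →L[ℝ] H := H.orthogonalProjectionOnto
  have hPs : Function.Surjective P := fun y => ⟨y, Submodule.orthogonalProjectionOnto_mem_subspace_eq_self y⟩
  have hPo : IsOpenMap P := P.isOpenMap hPs
  have hPy : ∀ (y : H) (s : ℝ), P (y + s • θ) = y := by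
    intro y s
    rw [map_add, map_smul]
    have h1 : P (y : Eucl n) = y := Submodule.orthogonalProjectionOnto_mem_subspace_eq_self y
    have h2 : P θ = 0 := by
      apply Submodule.orthogonalProjectionOnto_apply_of_mem_orthogonal
      rw [hH, Submodule.orthogonal_orthogonal]
      exact Submodule.mem_span_singleton_self θ
    rw [h1, h2]; simp
  have hVo : IsOpen (P '' U) := hPo _ isOpen_interior
  have hVc : Convex ℝ (P '' U) := hcv.interior.is_linear_image P.toLinearMap.isLinear
  have hfr := hVc.addHaar_frontier (volume : Measure H)
  filter_upwards [measure_eq_zero_iff_ae_notMem.1 hfr] with y hy c hc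
  obtain ⟨s1, hs1⟩ := lt_iSup_iff.1 hc
  have hf1 : 0 < f (y + s1 • θ) := by
    have := pos_of_gt hs1
    simpa [EF] using this
  have hyc : y ∈ closure (P '' U) := by
    have h1 : (y : Eucl n) + s1 • θ ∈ closure U := by
      rw [hU, hcv.closure_interior_eq_closure_of_nonempty_interior hne]
      exact subset_closure hf1
    have := image_closure_subset_closure_image P.continuous (mem_image_of_mem P h1)
    rwa [hPy] at this
  have hyV : y ∈ P '' U := by
    by_contra h
    apply hy
    rw [frontier, hVo.interior_eq]
    exact ⟨hyc, h⟩
  obtain ⟨w, hw, hwy⟩ := hyV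
  have hws : ∃ s : ℝ, w = y + s • θ := by
    have : w - y ∈ Hᗮ := by
      rw [← hwy]; exact Submodule.sub_starProjection_mem_orthogonal w
    have hHo : Hᗮ = Submodule.span ℝ {θ} := by rw [hH, Submodule.orthogonal_orthogonal]
    rw [hHo, Submodule.mem_span_singleton] at this
    obtain ⟨s, hs⟩ := this
    exact ⟨s, by rw [hs]; abel⟩
  obtain ⟨s, rfl⟩ := hws
  have hpos : ∃ s0, s0 ≠ s1 ∧ 0 < f (y + s0 • θ) := by
    have hcn : Continuous (fun s : ℝ => (y : Eucl n) + s • θ) := by fun_prop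
    have hop : IsOpen ((fun s : ℝ => (y : Eucl n) + s • θ) ⁻¹' U) := isOpen_interior.preimage hcn
    obtain ⟨ε, hε, hb⟩ := Metric.isOpen_iff.1 hop s hw
    have hin : ∀ s', |s' - s| < ε → 0 < f (y + s' • θ) := by
      intro s' hs'
      have := hb (show s' ∈ Metric.ball s ε by rwa [Metric.mem_ball, Real.dist_eq])
      exact interior_subset (s := D) this
    by_cases hss : s = s1
    · refine ⟨s + ε/2, ?_, hin _ ?_⟩
      · rw [hss]; intro h; linarith
      · rw [add_sub_cancel_left, abs_of_pos (by linarith)]; linarith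
    · exact ⟨s, hss, hin _ (by simpa using hε)⟩
  obtain ⟨s0, hs0, hf0⟩ := hpos
  have hct : c ≠ ∞ := ne_top_of_lt hs1
  have hc1 : c.toReal < f (y + s1 • θ) := by
    rw [EF] at hs1
    exact (ENNReal.lt_ofReal_iff_toReal_lt hct).1 hs1
  have hlc : ∀ p q t : ℝ, 0 < t → t < 1 → f (y + p • θ) ^ (1-t) * f (y + q • θ) ^ t ≤
      f (y + ((1-t) * p + t * q) • θ) := by
    intro p q t ht0 ht1
    have := hf.2.1 (y + p • θ) (y + q • θ) (1-t) (by linarith) (by linarith)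
    simp only [sub_sub_cancel] at this
    refine this.trans_eq ?_
    congr 1
    module
  obtain ⟨a, b, hab, hI⟩ := line_interval (fun s => f (y + s • θ)) hlc s1 s0 c.toReal hs0
    ENNReal.toReal_nonneg hc1 hf0
  refine ⟨a, b, hab, fun s hs => ?_⟩
  rw [EF, ← ENNReal.ofReal_toReal hct]
  exact ENNReal.ofReal_le_ofReal (hI s hs)

theorem fatou_step {n : ℕ} {f : Eucl n → ℝ} (hf : MemQ0 f) (θ : Eucl n) (hθ : ‖θ‖ = 1) (B : ℝ≥0∞)
    (hB : ∀ᶠ k : ℕ in Filter.atTop, GG (EF f) 0 ≤ GG (EF f) ((1/(k:ℝ)) • θ) + ENNReal.ofReal (1/(k:ℝ)) * B) :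
    ∫⁻ y : (Submodule.span ℝ {θ})ᗮ, PF (EF f) θ y ≤ B := by
  set H := (Submodule.span ℝ {θ})ᗮ with hH
  have hF := EF_meas hf
  have hfin : ∫⁻ x, EF f x ≠ ∞ := by rw [EF_lint hf]; exact ENNReal.ofReal_ne_top
  set g : H → ℝ → ℝ≥0∞ := fun y s => EF f (y + s • θ) with hg
  have hgm : ∀ y, Measurable (g y) := fun y => hF.comp (by fun_prop)
  have hgm2 : Measurable (Function.uncurry g) := hF.comp (by fun_prop)
  set m : ℕ → H → ℝ≥0∞ := fun k y => ∫⁻ s, min (g y s) (g y (s + 1/(k:ℝ))) with hm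
  have hmm : ∀ k, Measurable (m k) := by
    intro k
    have hme : Measurable (fun p : H × ℝ => min (g p.1 p.2) (g p.1 (p.2 + 1/(k:ℝ)))) :=
      hgm2.min (hgm2.comp (by fun_prop : Measurable fun p : H × ℝ => (p.1, p.2 + 1/(k:ℝ))))
    exact hme.lintegral_prod_right'
  set I : H → ℝ≥0∞ := fun y => ∫⁻ s, g y s with hI
  have hIm : Measurable I := hgm2.lintegral_prod_right'
  have hIint : ∫⁻ y, I y = GG (EF f) 0 := by
    rw [GG_zero, split_lint θ hθ _ hF]
  have hIfin : ∫⁻ y, I y ≠ ∞ := by rw [hIint, GG_zero]; exact hfin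
  have hmint : ∀ k, ∫⁻ y, m k y = GG (EF f) ((1/(k:ℝ)) • θ) := by
    intro k
    rw [GG, split_lint θ hθ _ (GG_meas_aux hF _)]
    refine lintegral_congr fun y => lintegral_congr fun s => ?_
    simp only [hg]
    rw [add_smul, add_assoc]
  have hmI : ∀ k y, m k y ≤ I y := fun k y => lintegral_mono fun s => min_le_left _ _
  set φ : ℕ → H → ℝ≥0∞ := fun k y => (k : ℝ≥0∞) * (I y - m k y) with hφ
  have hsm : ∀ k, Measurable (fun y => I y - m k y) := fun k => hIm.sub (hmm k)
  have hφm : ∀ k, Measurable (φ k) := fun k => (hsm k).const_mul _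
  have hlim : ∀ᵐ y : H, PF (EF f) θ (y : Eucl n) ≤ Filter.liminf (fun k => φ k y) Filter.atTop := by
    filter_upwards [ae_fibre hf θ hθ, ae_lt_top hIm hIfin] with y hy hyI
    refine le_of_forall_lt fun c hc => ?_
    obtain ⟨c', hcc', hc'⟩ := exists_between hc
    refine lt_of_lt_of_le hcc' ?_
    obtain ⟨a, b, hab, hs⟩ := hy c' hc'
    apply Filter.le_liminf_of_le (by isBoundedDefault)
    obtain ⟨N, hN⟩ := exists_nat_one_div_lt (sub_pos.2 hab)
    filter_upwards [Filter.eventually_ge_atTop (N+1)] with k hk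
    have hk0 : (0:ℝ) < k := by exact_mod_cast (by omega : 0 < k)
    have hk1 : 1/(k:ℝ) ≤ b - a := by
      refine le_trans ?_ hN.le
      apply one_div_le_one_div_of_le (by positivity)
      exact_mod_cast hk
    have := fibre_ineq (g y) (hgm y) a b c' hs (1/(k:ℝ)) (by positivity) hk1
    have h2 : ENNReal.ofReal (1/(k:ℝ)) * c' ≤ I y - m k y := by
      apply ENNReal.le_sub_of_add_le_left
      · exact ((hmI k y).trans_lt hyI).ne
      · exact this
    calc c' = (k : ℝ≥0∞) * (ENNReal.ofReal (1/(k:ℝ)) * c') := by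
          rw [← mul_assoc, ← ENNReal.ofReal_natCast, ← ENNReal.ofReal_mul hk0.le,
            mul_one_div_cancel hk0.ne', ENNReal.ofReal_one, one_mul]
      _ ≤ _ := by simp only [hφ]; gcongr
  calc _ ≤ ∫⁻ y, Filter.liminf (fun k => φ k y) Filter.atTop := lintegral_mono_ae hlim
    _ ≤ Filter.liminf (fun k => ∫⁻ y, φ k y) Filter.atTop := lintegral_liminf_le hφm
    _ ≤ Filter.liminf (fun k : ℕ => B) Filter.atTop := by
      refine Filter.liminf_le_liminf ?_
      filter_upwards [hB, Filter.eventually_ge_atTop 1] with k hk hk1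
      have hk0 : (0:ℝ) < k := by exact_mod_cast hk1
      have hmf : ∫⁻ y, m k y ≠ ∞ := ne_top_of_le_ne_top hIfin (lintegral_mono (hmI k))
      simp only [hφ]
      rw [lintegral_const_mul _ (hsm k), lintegral_sub (hmm k) hmf
        (Filter.Eventually.of_forall (hmI k)), hIint, hmint]
      have : GG (EF f) 0 - GG (EF f) ((1/(k:ℝ)) • θ) ≤ ENNReal.ofReal (1/(k:ℝ)) * B := by
        rw [tsub_le_iff_left]; exact hk
      calc _ ≤ (k : ℝ≥0∞) * (ENNReal.ofReal (1/(k:ℝ)) * B) := by gcongr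
        _ = B := by
          rw [← mul_assoc, ← ENNReal.ofReal_natCast, ← ENNReal.ofReal_mul hk0.le,
            mul_one_div_cancel hk0.ne', ENNReal.ofReal_one, one_mul]
    _ = B := by simp

theorem proj_bound {n : ℕ} {f : Eucl n → ℝ} (hf : MemQ0 f) (θ : Eucl n) (hθ : ‖θ‖ = 1) (r : ℝ)
    (hr : 0 < r) (L : ℝ) (hL : 0 ≤ L)
    (hG : ENNReal.ofReal (Real.exp (-L)) * GG (EF f) 0 ≤ GG (EF f) (r • θ)) :
    ENNReal.ofReal r * ∫⁻ y : (Submodule.span ℝ {θ})ᗮ, PF (EF f) θ y ≤ ENNReal.ofReal L * GG (EF f) 0 := by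
  have hfin : GG (EF f) 0 ≠ ∞ := by rw [GG_zero, EF_lint hf]; exact ENNReal.ofReal_ne_top
  have h := fatou_step hf θ hθ (ENNReal.ofReal (L / r) * GG (EF f) 0) ?_
  · calc _ ≤ ENNReal.ofReal r * (ENNReal.ofReal (L / r) * GG (EF f) 0) := by gcongr
      _ = _ := by
        rw [← mul_assoc, ← ENNReal.ofReal_mul hr.le]; congr 2; field_simp
  obtain ⟨N, hN⟩ := exists_nat_gt (1/r)
  filter_upwards [Filter.eventually_ge_atTop (N+1)] with k hk
  have hkN : (N:ℝ) < k := by exact_mod_cast hk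
  have hk0 : (0:ℝ) < k := by
    have : 0 < 1/r := by positivity
    linarith
  set t := 1 / (k * r) with ht
  have ht0 : 0 < t := by positivity
  have ht1 : t < 1 := by
    rw [ht, div_lt_one (by positivity)]
    have : 1 / r < k := hN.trans hkN
    rw [div_lt_iff₀ hr] at this
    exact this
  have hlc := GG_lc hf 0 (r • θ) t ht0 ht1
  have e : (1 - t) • (0 : Eucl n) + t • r • θ = (1/(k:ℝ)) • θ := by
    rw [smul_zero, zero_add, smul_smul]; congr 1; rw [ht]; field_simp
  rw [e] at hlc
  have h1 : ENNReal.ofReal (Real.exp (-(L*t))) * GG (EF f) 0 ≤ GG (EF f) ((1/(k:ℝ)) • θ) := by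
    refine le_trans ?_ hlc
    calc _ = GG (EF f) 0 ^ (1-t) * (ENNReal.ofReal (Real.exp (-L)) * GG (EF f) 0) ^ t := by
          rw [ENNReal.mul_rpow_of_nonneg _ _ ht0.le, ENNReal.ofReal_rpow_of_pos (Real.exp_pos _),
            ← Real.exp_mul, mul_left_comm, ← ENNReal.rpow_add_of_nonneg _ _ (by linarith) ht0.le]
          simp
      _ ≤ _ := by gcongr
  have h2 : 1 ≤ ENNReal.ofReal (Real.exp (-(L*t))) + ENNReal.ofReal (L * t) := by
    rw [← ENNReal.ofReal_add (Real.exp_pos _).le (by positivity), ← ENNReal.ofReal_one]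
    apply ENNReal.ofReal_le_ofReal
    have := Real.add_one_le_exp (-(L*t))
    linarith
  calc GG (EF f) 0 = 1 * GG (EF f) 0 := (one_mul _).symm
    _ ≤ (ENNReal.ofReal (Real.exp (-(L*t))) + ENNReal.ofReal (L * t)) * GG (EF f) 0 := by gcongr
    _ = ENNReal.ofReal (Real.exp (-(L*t))) * GG (EF f) 0 + ENNReal.ofReal (L * t) * GG (EF f) 0 := by ring
    _ ≤ _ := by
      refine add_le_add h1 ?_
      · rw [← mul_assoc, ← ENNReal.ofReal_mul (by positivity)]
        apply le_of_eq; congr 2; rw [ht]; field_simp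

theorem GG_pos_small {n : ℕ} {f : Eucl n → ℝ} (hf : MemQ0 f) (θ : Eucl n) (hθ : ‖θ‖ = 1) :
    ∃ r : ℝ, 0 < r ∧ GG (EF f) (r • θ) ≠ 0 := by
  obtain ⟨x, hx⟩ := supp_interior hf
  obtain ⟨ε, hε, hb⟩ := Metric.isOpen_iff.1 isOpen_interior x hx
  have hb' : ∀ z, dist z x < ε → 0 < f z := fun z hz => interior_subset (s := {x | 0 < f x}) (hb hz)
  refine ⟨ε/2, by positivity, fun h => ?_⟩
  rw [GG, lintegral_eq_zero_iff (GG_meas_aux (EF_meas hf) _)] at h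
  have h2 : ∀ᵐ z : Eucl n, z ∉ Metric.ball x (ε/2) := by
    filter_upwards [h] with z hz hzb
    rw [Metric.mem_ball] at hzb
    have h1 := hb' z (by linarith)
    have h2 := hb' (z + (ε/2) • θ) (by
      calc dist (z + (ε/2) • θ) x ≤ dist (z + (ε/2) • θ) z + dist z x := dist_triangle _ _ _
        _ < ε := by
          rw [dist_self_add_left, norm_smul, hθ, Real.norm_of_nonneg (by positivity)]; linarith)
    have : 0 < min (EF f z) (EF f (z + (ε/2) • θ)) :=
      lt_min (ENNReal.ofReal_pos.2 h1) (ENNReal.ofReal_pos.2 h2)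
    exact this.ne' hz
  have h3 := measure_eq_zero_iff_ae_notMem.2 h2
  exact (Metric.measure_ball_pos volume x (by positivity : 0 < ε/2)).ne' h3

theorem proj_fin {n : ℕ} {f : Eucl n → ℝ} (hf : MemQ0 f) (θ : Eucl n) (hθ : ‖θ‖ = 1) :
    ∫⁻ y : (Submodule.span ℝ {θ})ᗮ, PF (EF f) θ y ≠ ∞ := by
  obtain ⟨r, hr, hG⟩ := GG_pos_small hf θ hθ
  have hfin : GG (EF f) 0 ≠ ∞ := by rw [GG_zero, EF_lint hf]; exact ENNReal.ofReal_ne_top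
  have hGle := GG_le (EF f) (r • θ)
  have hfin2 : GG (EF f) (r • θ) ≠ ∞ := ne_top_of_le_ne_top hfin hGle
  have hGp := ENNReal.toReal_pos hG hfin2
  have hle := ENNReal.toReal_mono hfin hGle
  have hG0 := hGp.trans_le hle
  set p := (GG (EF f) (r • θ)).toReal / (GG (EF f) 0).toReal with hp
  have hp0 : 0 < p := by positivity
  have hp1 : p ≤ 1 := by rw [hp, div_le_one hG0]; exact hle
  have := proj_bound hf θ hθ r hr (-Real.log p) (by
    have := Real.log_nonpos hp0.le hp1
    linarith) (by
    rw [neg_neg, Real.exp_log hp0]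
    conv_lhs => rw [← ENNReal.ofReal_toReal hfin]
    rw [← ENNReal.ofReal_mul hp0.le, hp, div_mul_cancel₀ _ hG0.ne', ENNReal.ofReal_toReal hfin2])
  intro h
  rw [h, ENNReal.mul_top (by simpa using hr), top_le_iff] at this
  exact ENNReal.mul_ne_top ENNReal.ofReal_ne_top hfin this

theorem GG_meas {n : ℕ} {F : Eucl n → ℝ≥0∞} (hF : Measurable F) : Measurable (GG F) := by
  have h : Measurable (fun p : Eucl n × Eucl n => min (F p.2) (F (p.2 + p.1))) :=
    (hF.comp measurable_snd).min (hF.comp (measurable_snd.add measurable_fst))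
  exact h.lintegral_prod_right'

theorem GG_scale {n : ℕ} {f : Eucl n → ℝ} (hf : MemQ0 f) (x : Eucl n) (L t : ℝ) (ht0 : 0 < t)
    (ht1 : t < 1) (h : ENNReal.ofReal (Real.exp (-L)) * GG (EF f) 0 ≤ GG (EF f) x) :
    ENNReal.ofReal (Real.exp (-(L*t))) * GG (EF f) 0 ≤ GG (EF f) (t • x) := by
  have hlc := GG_lc hf 0 x t ht0 ht1
  rw [smul_zero, zero_add] at hlc
  refine le_trans ?_ hlc
  calc _ = GG (EF f) 0 ^ (1-t) * (ENNReal.ofReal (Real.exp (-L)) * GG (EF f) 0) ^ t := by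
        rw [ENNReal.mul_rpow_of_nonneg _ _ ht0.le, ENNReal.ofReal_rpow_of_pos (Real.exp_pos _),
          ← Real.exp_mul, mul_left_comm, ← ENNReal.rpow_add_of_nonneg _ _ (by linarith) ht0.le]
        simp
    _ ≤ _ := by gcongr

theorem GG_lower {n : ℕ} {f : Eucl n → ℝ} (hf : MemQ0 f) :
    GG (EF f) 0 * GG (EF f) 0 ≤ ENNReal.ofReal (supNorm f) * ∫⁻ x, GG (EF f) x := by
  have hF := EF_meas hf
  rw [← lintegral_const_mul _ (GG_meas hF)]
  have hb : ∀ x, EF f x ≤ ENNReal.ofReal (supNorm f) := fun x =>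
    ENNReal.ofReal_le_ofReal (f_le_sup hf x)
  have h1 : ∀ x, ∫⁻ y, EF f y * EF f (y + x) ≤ ENNReal.ofReal (supNorm f) * GG (EF f) x := by
    intro x
    rw [GG, ← lintegral_const_mul _ (GG_meas_aux hF x)]
    refine lintegral_mono fun y => ?_
    rcases le_total (EF f y) (EF f (y + x)) with h | h
    · simp only [min_eq_left h]; rw [mul_comm]; gcongr; exact hb _
    · simp only [min_eq_right h]; gcongr; exact hb _
  refine le_trans (le_of_eq ?_) (lintegral_mono h1)
  rw [lintegral_lintegral_swap]
  · have : ∀ y, ∫⁻ x, EF f y * EF f (y + x) = EF f y * GG (EF f) 0 := by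
      intro y
      have hc : Measurable (fun x => EF f (y + x)) := hF.comp (measurable_const_add y)
      rw [lintegral_const_mul _ hc, lintegral_add_left_eq_self, GG_zero]
    simp only [this]
    rw [lintegral_mul_const _ hF, GG_zero]
  · have : Measurable (fun p : Eucl n × Eucl n => EF f p.2 * EF f (p.2 + p.1)) :=
      (hF.comp measurable_snd).mul (hF.comp (measurable_snd.add measurable_fst))
    exact this.aemeasurable

theorem exp_tail (l : ℝ) : ∫⁻ r in Ioi l, ENNReal.ofReal (Real.exp (-r)) = ENNReal.ofReal (Real.exp (-l)) := by
  rw [← integral_exp_neg_Ioi, ofReal_integral_eq_lintegral_ofReal]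
  · exact integrableOn_exp_neg_Ioi l
  · exact Filter.Eventually.of_forall fun _ => (Real.exp_pos _).le

theorem gamma_lint (n : ℕ) : ∫⁻ r in Ioi (0:ℝ), ENNReal.ofReal (Real.exp (-r) * r ^ n) =
    ENNReal.ofReal n.factorial := by
  have h := Real.Gamma_eq_integral (s := n + 1) (by positivity)
  rw [Real.Gamma_nat_eq_factorial] at h
  have hc := Real.GammaIntegral_convergent (s := n + 1) (by positivity)
  simp only [add_sub_cancel_right, Real.rpow_natCast] at h hc
  rw [h, ofReal_integral_eq_lintegral_ofReal hc]
  filter_upwards [ae_restrict_mem measurableSet_Ioi] with r hr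
  have : (0:ℝ) < r := hr
  simp only [Pi.zero_apply]
  positivity

theorem GG_upper {n : ℕ} {f : Eucl n → ℝ} (hf : MemQ0 f) (R : ℝ) (hR : 0 < R)
    (hRn : R ^ n = n.factorial) :
    ∫⁻ x, GG (EF f) x ≤ GG (EF f) 0 * (2 * volume {x | ENNReal.ofReal (Real.exp (-R)) * GG (EF f) 0 ≤ GG (EF f) x}) := by
  have hF := EF_meas hf
  have hGm := GG_meas hF
  have hfin : GG (EF f) 0 ≠ ∞ := by rw [GG_zero, EF_lint hf]; exact ENNReal.ofReal_ne_top
  set D : ℝ → Set (Eucl n) := fun r => {x | ENNReal.ofReal (Real.exp (-r)) * GG (EF f) 0 ≤ GG (EF f) x} with hD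
  have hJ : MeasurableSet {p : Eucl n × ℝ | ENNReal.ofReal (Real.exp (-p.2)) * GG (EF f) 0 ≤ GG (EF f) p.1} := by
    apply measurableSet_le
    · exact Measurable.mul_const (by fun_prop) _
    · exact hGm.comp measurable_fst
  have hDm : ∀ r, MeasurableSet (D r) := fun r => measurableSet_le measurable_const hGm
  have hJ2 : Measurable (fun p : Eucl n × ℝ => ENNReal.ofReal (Real.exp (-p.2)) * (D p.2).indicator 1 p.1) := by
    apply Measurable.mul (by fun_prop)
    have : (fun p : Eucl n × ℝ => (D p.2).indicator (1 : Eucl n → ℝ≥0∞) p.1) =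
      {p : Eucl n × ℝ | ENNReal.ofReal (Real.exp (-p.2)) * GG (EF f) 0 ≤ GG (EF f) p.1}.indicator 1 := by
      funext p
      simp [Set.indicator, hD]
    rw [this]
    exact measurable_one.indicator hJ
  have h1 : ∀ x, GG (EF f) x ≤ GG (EF f) 0 * ∫⁻ r in Ioi (0:ℝ),
      ENNReal.ofReal (Real.exp (-r)) * (D r).indicator 1 x := by
    intro x
    by_cases hz : GG (EF f) x = 0
    · rw [hz]; exact zero_le
    have hle := GG_le (EF f) x
    have hfx : GG (EF f) x ≠ ∞ := ne_top_of_le_ne_top hfin hle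
    have hx0 := ENNReal.toReal_pos hz hfx
    have hle' := ENNReal.toReal_mono hfin hle
    have hG0 := hx0.trans_le hle'
    set p := (GG (EF f) x).toReal / (GG (EF f) 0).toReal with hp
    have hp0 : 0 < p := by positivity
    have hp1 : p ≤ 1 := by rw [hp, div_le_one hG0]; exact hle'
    have hl : 0 ≤ -Real.log p := by have := Real.log_nonpos hp0.le hp1; linarith
    have hpG : ENNReal.ofReal p * GG (EF f) 0 = GG (EF f) x := by
      conv_lhs => rw [← ENNReal.ofReal_toReal hfin]
      rw [← ENNReal.ofReal_mul hp0.le, hp, div_mul_cancel₀ _ hG0.ne', ENNReal.ofReal_toReal hfx]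
    have h2 : ENNReal.ofReal p ≤ ∫⁻ r in Ioi (0:ℝ), ENNReal.ofReal (Real.exp (-r)) * (D r).indicator 1 x := by
      calc ENNReal.ofReal p = ∫⁻ r in Ioi (-Real.log p), ENNReal.ofReal (Real.exp (-r)) := by
            rw [exp_tail, neg_neg, Real.exp_log hp0]
        _ ≤ ∫⁻ r in Ioi (-Real.log p), ENNReal.ofReal (Real.exp (-r)) * (D r).indicator 1 x := by
          apply setLIntegral_mono' measurableSet_Ioi
          intro r hr
          have hmem : x ∈ D r := by
            show ENNReal.ofReal (Real.exp (-r)) * GG (EF f) 0 ≤ GG (EF f) x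
            rw [← hpG]
            gcongr
            rw [← Real.le_log_iff_exp_le hp0]
            have : -Real.log p < r := hr
            linarith
          rw [indicator_of_mem hmem]; simp
        _ ≤ _ := lintegral_mono_set (Ioi_subset_Ioi hl)
    calc GG (EF f) x = GG (EF f) 0 * ENNReal.ofReal p := by rw [← hpG, mul_comm]
      _ ≤ _ := by gcongr
  have hvol : ∀ r, 0 < r → volume (D r) ≤ ENNReal.ofReal (1 + (r/R)^n) * volume (D R) := by
    intro r hr
    rcases le_or_gt r R with hrR | hrR
    · calc volume (D r) ≤ volume (D R) := by
            apply measure_mono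
            intro x hx
            have hx' : ENNReal.ofReal (Real.exp (-r)) * GG (EF f) 0 ≤ GG (EF f) x := hx
            refine le_trans (b := ENNReal.ofReal (Real.exp (-r)) * GG (EF f) 0) ?_ hx'
            gcongr
        _ = ENNReal.ofReal 1 * volume (D R) := by simp
        _ ≤ _ := by
          gcongr
          have : 0 ≤ (r/R)^n := by positivity
          linarith
    · have hsub : D r ⊆ (fun x => (R/r) • x) ⁻¹' (D R) := by
        intro x hx
        have := GG_scale hf x r (R/r) (by positivity) (by rwa [div_lt_one hr]) hx
        rwa [mul_div_cancel₀ _ hr.ne'] at this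
      calc volume (D r) ≤ _ := measure_mono hsub
        _ = ENNReal.ofReal ((r/R)^n) * volume (D R) := by
          rw [Measure.addHaar_preimage_smul _ (by positivity)]
          congr 2
          rw [abs_of_pos (by positivity)]
          simp [← inv_pow]
        _ ≤ _ := by
          gcongr
          linarith
  calc ∫⁻ x, GG (EF f) x ≤ ∫⁻ x, GG (EF f) 0 * ∫⁻ r in Ioi (0:ℝ),
      ENNReal.ofReal (Real.exp (-r)) * (D r).indicator 1 x := lintegral_mono h1
    _ = GG (EF f) 0 * ∫⁻ x, ∫⁻ r in Ioi (0:ℝ), ENNReal.ofReal (Real.exp (-r)) * (D r).indicator 1 x := by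
      rw [lintegral_const_mul]
      exact hJ2.lintegral_prod_right'
    _ = GG (EF f) 0 * ∫⁻ r in Ioi (0:ℝ), ∫⁻ x, ENNReal.ofReal (Real.exp (-r)) * (D r).indicator 1 x := by
      rw [lintegral_lintegral_swap]
      exact hJ2.aemeasurable
    _ = GG (EF f) 0 * ∫⁻ r in Ioi (0:ℝ), ENNReal.ofReal (Real.exp (-r)) * volume (D r) := by
      congr 2
      funext r
      rw [lintegral_const_mul _ (measurable_one.indicator (hDm r)), lintegral_indicator_one (hDm r)]
    _ ≤ GG (EF f) 0 * ∫⁻ r in Ioi (0:ℝ), (ENNReal.ofReal (Real.exp (-r)) +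
          ENNReal.ofReal (R^n)⁻¹ * ENNReal.ofReal (Real.exp (-r) * r^n)) * volume (D R) := by
      refine mul_le_mul_right (setLIntegral_mono' measurableSet_Ioi fun r hr => ?_) _
      have hr' : (0:ℝ) < r := hr
      calc _ ≤ ENNReal.ofReal (Real.exp (-r)) * (ENNReal.ofReal (1 + (r/R)^n) * volume (D R)) := by
            gcongr; exact hvol r hr
        _ = _ := by
          rw [← mul_assoc, ← ENNReal.ofReal_mul (by positivity), ← ENNReal.ofReal_mul (by positivity),
            ← ENNReal.ofReal_add (by positivity) (by positivity), div_pow]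
          congr 2; field_simp
    _ = GG (EF f) 0 * (2 * volume (D R)) := by
      congr 1
      rw [lintegral_mul_const _ (by fun_prop), lintegral_add_left (by fun_prop),
        lintegral_const_mul _ (by fun_prop), exp_tail, gamma_lint, ← hRn,
        ← ENNReal.ofReal_mul (by positivity), inv_mul_cancel₀ (by positivity)]
      simp [one_add_one_eq_two]

theorem select {n : ℕ} {f : Eucl n → ℝ} (hf : MemQ0 f) (R : ℝ) (hR : 0 < R)
    (hRn : R ^ n = n.factorial) :
    ∃ v : Fin n → Eucl n,
      (∀ i, ENNReal.ofReal (Real.exp (-R)) * GG (EF f) 0 ≤ GG (EF f) (v i)) ∧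
      n.factorial * ((∫ x, f x) / (3 * supNorm f)) ^ 2 ≤
        (2 * Real.pi * Real.exp 1) ^ n * (Matrix.of fun i j => v i j).det ^ 2 := by
  set I := ∫ x, f x with hI
  set S := supNorm f with hS
  have hI0 : 0 < I := hf.2.2.2.2
  have hS0 : 0 < S := sup_pos hf
  set M := {x | ENNReal.ofReal (Real.exp (-R)) * GG (EF f) 0 ≤ GG (EF f) x} with hM
  have hMm : MeasurableSet M := measurableSet_le measurable_const (GG_meas (EF_meas hf))
  have hG0 : GG (EF f) 0 = ENNReal.ofReal I := by rw [GG_zero, EF_lint hf]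
  have h1 : ENNReal.ofReal I ≤ ENNReal.ofReal (2 * S) * volume M := by
    have h2 := (GG_lower hf).trans (mul_le_mul_right (GG_upper hf R hR hRn) _)
    rw [← hM, hG0, ← hS] at h2
    have h3 : ENNReal.ofReal I * ENNReal.ofReal I ≤
        ENNReal.ofReal I * (ENNReal.ofReal (2 * S) * volume M) := by
      refine h2.trans_eq ?_
      rw [ENNReal.ofReal_mul (by norm_num), ENNReal.ofReal_ofNat]; ring
    rwa [ENNReal.mul_le_mul_iff_right (by simpa using hI0) ENNReal.ofReal_ne_top] at h3
  have h2 : ENNReal.ofReal (I / (3 * S)) < volume M := by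
    rw [ENNReal.ofReal_mul (by norm_num)] at h1
    by_contra hcon
    have hcon := not_lt.1 hcon
    have h4 : ENNReal.ofReal I ≤ ENNReal.ofReal (2 * S * (I / (3 * S))) := by
      refine h1.trans ?_
      rw [← ENNReal.ofReal_mul (by norm_num), ENNReal.ofReal_mul (by positivity : 0 ≤ 2 * S)]
      gcongr
    rw [ENNReal.ofReal_le_ofReal_iff (by positivity)] at h4
    have : 2 * S * (I / (3 * S)) = 2 / 3 * I := by field_simp
    linarith
  have hU : M = ⋃ k : ℕ, M ∩ Metric.closedBall 0 k := by
    rw [← inter_iUnion, Metric.iUnion_closedBall_nat, inter_univ]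
  have hmono : Monotone (fun k : ℕ => M ∩ Metric.closedBall (0 : Eucl n) k) := by
    intro a b hab
    apply inter_subset_inter_right
    apply Metric.closedBall_subset_closedBall
    exact_mod_cast hab
  rw [hU, hmono.measure_iUnion, lt_iSup_iff] at h2
  obtain ⟨k, hk⟩ := h2
  set A := M ∩ Metric.closedBall (0 : Eucl n) k with hA
  have hAm : MeasurableSet A := hMm.inter Metric.isClosed_closedBall.measurableSet
  set A' : Set (Fin n → ℝ) := WithLp.toLp 2 ⁻¹' A with hA'
  have hmp := PiLp.volume_preserving_toLp (Fin n)
  have hvA : volume A' = volume A := hmp.measure_preimage hAm.nullMeasurableSet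
  have hA'm : MeasurableSet A' := hmp.measurable hAm
  have hA'b : Bornology.IsBounded A' := by
    rw [isBounded_iff_forall_norm_le]
    refine ⟨k, fun x hx => ?_⟩
    rw [pi_norm_le_iff_of_nonneg (by positivity)]
    intro i
    have hx2 : WithLp.toLp 2 x ∈ Metric.closedBall (0 : Eucl n) k := hx.2
    rw [mem_closedBall_zero_iff] at hx2
    exact (PiLp.norm_apply_le (WithLp.toLp 2 x) i).trans hx2
  have hA'0 : volume A' ≠ 0 := by
    rw [hvA]; exact (pos_of_gt hk).ne'
  obtain ⟨v, hv, hd⟩ := det_select A' hA'm hA'b hA'0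
  refine ⟨fun i => WithLp.toLp 2 (v i), fun i => (hv i).1, ?_⟩
  refine le_trans ?_ hd
  have hlt := (ENNReal.ofReal_lt_iff_lt_toReal (by positivity) (hvA ▸ hA'b.measure_lt_top.ne)).1 hk
  rw [hvA]
  gcongr

/-- The linear map sending the standard basis to `v`. -/
def VV {n : ℕ} (v : Fin n → Eucl n) (x : Fin n → ℝ) : Eucl n :=
  WithLp.toLp 2 ((Matrix.of fun i j => v i j).transpose.mulVec x)

theorem VV_eq {n : ℕ} (v : Fin n → Eucl n) (x : Fin n → ℝ) : VV v x = ∑ i, x i • v i := by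
  ext j
  simp [VV, Matrix.mulVec, dotProduct, mul_comm]

theorem VV_meas {n : ℕ} (v : Fin n → Eucl n) : Measurable (VV v) := by
  have : VV v = fun x => ∑ i, x i • v i := funext (VV_eq v)
  rw [this]
  fun_prop

theorem VV_lint {n : ℕ} (v : Fin n → Eucl n) (hd : (Matrix.of fun i j => v i j).det ≠ 0)
    (u : Eucl n → ℝ≥0∞) (hu : Measurable u) :
    ∫⁻ x, u x = ENNReal.ofReal |(Matrix.of fun i j => v i j).det| * ∫⁻ x : Fin n → ℝ, u (VV v x) := by
  set M := (Matrix.of fun i j => v i j) with hM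
  have hdt : M.transpose.det ≠ 0 := by rwa [Matrix.det_transpose]
  have hm := Real.map_matrix_volume_pi_eq_smul_volume_pi hdt
  have hmeas : Measurable (Matrix.toLin' M.transpose) := (LinearMap.continuous_on_pi _).measurable
  have hmp := PiLp.volume_preserving_toLp (Fin n)
  rw [← hmp.lintegral_comp hu]
  have h2 : ∫⁻ x : Fin n → ℝ, u (VV v x) =
      ∫⁻ y, u (WithLp.toLp 2 y) ∂(Measure.map (Matrix.toLin' M.transpose) volume) :=
    (lintegral_map (f := fun y => u (WithLp.toLp 2 y)) (hu.comp hmp.measurable) hmeas).symm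
  rw [h2, hm, lintegral_smul_measure, smul_eq_mul, ← mul_assoc, ← ENNReal.ofReal_mul (abs_nonneg _),
    Matrix.det_transpose, abs_inv, mul_inv_cancel₀ (abs_ne_zero.2 hd), ENNReal.ofReal_one, one_mul]

theorem VV_ins {m : ℕ} (v : Fin (m+1) → Eucl (m+1)) (i : Fin (m+1)) (s : ℝ) (y : Fin m → ℝ) :
    VV v (Fin.insertNth (α := fun _ => ℝ) i s y) =
      VV v (Fin.insertNth (α := fun _ => ℝ) i 0 y) + s • v i := by
  rw [VV_eq, VV_eq, Fin.sum_univ_succAbove _ i, Fin.sum_univ_succAbove _ i]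
  simp [add_comm]

theorem slab {m : ℕ} (v : Fin (m+1) → Eucl (m+1)) (hd : (Matrix.of fun i j => v i j).det ≠ 0)
    (F : Eucl (m+1) → ℝ≥0∞) (hF : UpperSemicontinuous F) (i : Fin (m+1)) :
    Measurable (fun y : Fin m → ℝ => PF F (v i) (VV v (Fin.insertNth (α := fun _ => ℝ) i 0 y))) ∧
    ENNReal.ofReal |(Matrix.of fun i j => v i j).det| *
      ∫⁻ y : Fin m → ℝ, PF F (v i) (VV v (Fin.insertNth (α := fun _ => ℝ) i 0 y)) =
    ENNReal.ofReal ‖v i‖ * ∫⁻ y : (Submodule.span ℝ {‖v i‖⁻¹ • v i})ᗮ,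
      PF F (‖v i‖⁻¹ • v i) (y : Eucl (m+1)) := by
  have hΦ := PF_meas F hF (v i)
  have hins : Measurable (fun y : Fin m → ℝ => Fin.insertNth (α := fun _ => ℝ) i (0:ℝ) y) := by
    apply measurable_pi_lambda
    intro j
    refine Fin.succAboveCases i ?_ (fun k => ?_) j
    · simp
    · simpa using measurable_pi_apply k
  refine ⟨hΦ.comp ((VV_meas v).comp hins), ?_⟩
  set M := (Matrix.of fun i j => v i j) with hM
  have hv0 : v i ≠ 0 := by
    intro h
    apply hd
    apply Matrix.det_eq_zero_of_row_eq_zero i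
    intro j
    simp [hM, h]
  have hn0 : 0 < ‖v i‖ := norm_pos_iff.2 hv0
  set θ := ‖v i‖⁻¹ • v i with hθ
  have hθ1 : ‖θ‖ = 1 := by rw [hθ, norm_smul, norm_inv, norm_norm, inv_mul_cancel₀ hn0.ne']
  have hPF : ∀ x, PF F (v i) x = PF F θ x := fun x => (PF_smul F (v i) x _ (inv_ne_zero hn0.ne')).symm
  -- the coordinate functional
  let l : Eucl (m+1) → ℝ := fun x => ((M.transpose)⁻¹.mulVec x) i
  have hu : IsUnit M.transpose.det := by rw [Matrix.det_transpose]; exact isUnit_iff_ne_zero.2 hd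
  have hlV : ∀ x, l (VV v x) = x i := by
    intro x
    simp only [l, VV, Matrix.mulVec_mulVec]
    rw [Matrix.nonsing_inv_mul _ hu, Matrix.one_mulVec]
  have hladd : ∀ x y, l (x + y) = l x + l y := by
    intro x y
    simp [l, Matrix.mulVec_add]
  have hlsmul : ∀ (c : ℝ) x, l (c • x) = c * l x := by
    intro c x
    simp [l, Matrix.mulVec_smul]
  have hlm : Measurable l := by
    simp only [l, Matrix.mulVec, dotProduct]
    fun_prop
  have hlv : l (v i) = 1 := by
    have : v i = VV v (Pi.single i 1) := by rw [VV_eq]; simp [Pi.single_apply]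
    rw [this, hlV]; simp
  have hlθ : l θ = ‖v i‖⁻¹ := by rw [hθ, hlsmul, hlv, mul_one]
  let D : Eucl (m+1) → ℝ≥0∞ := fun x => (Ico (0:ℝ) 1).indicator 1 (l x)
  have hDm : Measurable D := (measurable_one.indicator measurableSet_Ico).comp hlm
  have hDc : ∀ x, ∫⁻ s : ℝ, D (x + s • θ) = ENNReal.ofReal ‖v i‖ := by
    intro x
    have : (fun s : ℝ => D (x + s • θ)) =
        (Ico (-l x * ‖v i‖) ((1 - l x) * ‖v i‖)).indicator 1 := by
      funext s
      simp only [D, hladd, hlsmul, hlθ]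
      have : l x + s * ‖v i‖⁻¹ ∈ Ico (0:ℝ) 1 ↔ s ∈ Ico (-l x * ‖v i‖) ((1 - l x) * ‖v i‖) := by
        rw [mem_Ico, mem_Ico, ← div_eq_mul_inv, ← le_div_iff₀ hn0, ← div_lt_iff₀ hn0]
        constructor <;> rintro ⟨h1, h2⟩ <;> constructor <;> linarith
      by_cases h : l x + s * ‖v i‖⁻¹ ∈ Ico (0:ℝ) 1
      · rw [indicator_of_mem h, indicator_of_mem (this.1 h)]; rfl
      · rw [indicator_of_notMem h, indicator_of_notMem (fun h' => h (this.2 h'))]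
    rw [this, lintegral_indicator_one measurableSet_Ico, Real.volume_Ico]
    congr 1; ring
  have key := fund_dom θ hθ1 (PF F θ) (PF_meas F hF θ) (fun x s => PF_inv F θ x s) D hDm _ hDc
  rw [← key, VV_lint v hd (fun x => PF F θ x * D x) ((PF_meas F hF θ).mul hDm)]
  congr 1
  have hmm : Measurable (fun x => PF F θ (VV v x) * D (VV v x)) :=
    ((PF_meas F hF θ).comp (VV_meas v)).mul (hDm.comp (VV_meas v))
  rw [lint_insertNth i _ hmm]
  have e : ∀ (s : ℝ) (y : Fin m → ℝ),
      PF F θ (VV v (Fin.insertNth (α := fun _ => ℝ) i s y)) *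
        D (VV v (Fin.insertNth (α := fun _ => ℝ) i s y)) =
      PF F θ (VV v (Fin.insertNth (α := fun _ => ℝ) i 0 y)) * (Ico (0:ℝ) 1).indicator 1 s := by
    intro s y
    congr 1
    · rw [VV_ins, ← hPF, PF_inv, hPF]
    · simp only [D, hlV]; simp
  simp only [e, hPF]
  have hm2 : Measurable (fun y : Fin m → ℝ => PF F θ (VV v (Fin.insertNth (α := fun _ => ℝ) i 0 y))) :=
    (PF_meas F hF θ).comp ((VV_meas v).comp hins)
  simp only [lintegral_mul_const _ hm2]
  rw [lintegral_const_mul _ (measurable_one.indicator measurableSet_Ico),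
    lintegral_indicator_one measurableSet_Ico]
  simp

theorem lw_basis {m : ℕ} (hm : 1 ≤ m) (v : Fin (m+1) → Eucl (m+1))
    (hd : (Matrix.of fun i j => v i j).det ≠ 0)
    (F : Eucl (m+1) → ℝ≥0∞) (hF : UpperSemicontinuous F) :
    (∫⁻ x, F x ^ (((m:ℝ)+1)/m)) ^ m * ENNReal.ofReal |(Matrix.of fun i j => v i j).det| ≤
    ∏ i, (ENNReal.ofReal ‖v i‖ * ∫⁻ y : (Submodule.span ℝ {‖v i‖⁻¹ • v i})ᗮ,
      PF F (‖v i‖⁻¹ • v i) (y : Eucl (m+1))) := by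
  have hm0 : (0:ℝ) < m := by exact_mod_cast hm
  have hsl := slab v hd F hF
  set d := ENNReal.ofReal |(Matrix.of fun i j => v i j).det| with hdd
  set u : Fin (m+1) → (Fin m → ℝ) → ℝ≥0∞ := fun i y =>
    PF F (v i) (VV v (Fin.insertNth (α := fun _ => ℝ) i 0 y)) with hu
  have hlo := loomis m hm u (fun i => (hsl i).1)
  have hpt : ∀ x : Fin (m+1) → ℝ, F (VV v x) ^ (((m:ℝ)+1)/m) ≤
      ∏ i, u i (Fin.removeNth (α := fun _ => ℝ) i x) ^ ((1:ℝ)/m) := by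
    intro x
    have h1 : ∀ i, F (VV v x) ≤ u i (Fin.removeNth (α := fun _ => ℝ) i x) := by
      intro i
      have : VV v x = VV v (Fin.insertNth (α := fun _ => ℝ) i 0 (Fin.removeNth (α := fun _ => ℝ) i x)) + x i • v i := by
        rw [← VV_ins]; simp
      rw [this]
      exact le_iSup (fun s : ℝ => F (VV v (Fin.insertNth (α := fun _ => ℝ) i 0 (Fin.removeNth (α := fun _ => ℝ) i x)) + s • v i)) (x i)
    calc F (VV v x) ^ (((m:ℝ)+1)/m) = ∏ _i : Fin (m+1), F (VV v x) ^ ((1:ℝ)/m) := by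
          rw [Finset.prod_const, Finset.card_univ, Fintype.card_fin, ← ENNReal.rpow_natCast,
            ← ENNReal.rpow_mul]
          congr 1; push_cast; ring
      _ ≤ _ := by
        apply Finset.prod_le_prod' fun i _ => ?_
        exact ENNReal.rpow_le_rpow (h1 i) (by positivity)
  have hW : ∫⁻ x, F x ^ (((m:ℝ)+1)/m) ≤ d * ∏ i, (∫⁻ y, u i y) ^ ((1:ℝ)/m) := by
    rw [VV_lint v hd _ (hF.measurable.pow_const _)]
    gcongr
    exact (lintegral_mono hpt).trans hlo
  calc _ ≤ (d * ∏ i, (∫⁻ y, u i y) ^ ((1:ℝ)/m)) ^ m * d := by gcongr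
    _ = d ^ (m+1) * ∏ i, (∫⁻ y, u i y) := by
      rw [mul_pow, ← Finset.prod_pow]
      have : ∀ i, ((∫⁻ y, u i y) ^ ((1:ℝ)/m)) ^ m = ∫⁻ y, u i y := by
        intro i
        rw [← ENNReal.rpow_natCast, ← ENNReal.rpow_mul, one_div, inv_mul_cancel₀ hm0.ne', ENNReal.rpow_one]
      simp only [this]
      ring
    _ = ∏ i, (d * ∫⁻ y, u i y) := by
      rw [Finset.prod_mul_distrib, Finset.prod_const, Finset.card_univ, Fintype.card_fin]
    _ = _ := Finset.prod_congr rfl fun i _ => (hsl i).2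

theorem final_num (m : ℕ) (hm : 1 ≤ m) (w I S D : ℝ) (hw : 0 ≤ w) (hI : 0 < I) (hS : 0 < S)
    (hD : ((m+1).factorial : ℝ) * (I / (3 * S)) ^ 2 ≤ (2 * Real.pi * Real.exp 1) ^ (m+1) * D ^ 2)
    (hD0 : 0 < D)
    (h : w ^ m * D ≤ (m+1).factorial * I ^ (m+1)) :
    w ^ m ≤ (8 * Real.sqrt ((m:ℝ)+1)) ^ (m+1) * S * I ^ m := by
  set N : ℝ := ((m+1).factorial : ℝ) with hN
  have hN0 : 0 < N := by rw [hN]; exact_mod_cast Nat.factorial_pos _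
  set K : ℝ := (2 * Real.pi * Real.exp 1) ^ (m+1) with hK
  have hK0 : 0 < K := by rw [hK]; have := Real.pi_pos; positivity
  have hc : 2 * Real.pi * Real.exp 1 ≤ 18 := by
    have h1 := Real.pi_lt_d2
    have h2 := Real.exp_one_lt_d9
    have h3 := Real.pi_pos
    have h4 := Real.exp_pos 1
    nlinarith
  have hK1 : 9 * K ≤ 64 ^ (m+1) := by
    have a : K ≤ 18 ^ (m+1) := by
      rw [hK]; apply pow_le_pow_left₀ _ hc; have := Real.pi_pos; positivity
    have b : (9:ℝ) * 18 ^ (m+1) ≤ 64 ^ (m+1) := by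
      obtain ⟨k, rfl⟩ : ∃ k, m = k + 1 := ⟨m - 1, by omega⟩
      have : (18:ℝ) ^ k ≤ 64 ^ k := pow_le_pow_left₀ (by norm_num) (by norm_num) _
      rw [pow_succ, pow_succ, pow_succ, pow_succ]
      have : (0:ℝ) < 18 ^ k := by positivity
      nlinarith
    linarith
  have hN1 : N ≤ ((m:ℝ)+1) ^ (m+1) := by
    rw [hN]; exact_mod_cast Nat.factorial_le_pow (m+1)
  have e1 : N * I ^ 2 ≤ 9 * S ^ 2 * K * D ^ 2 := by
    have : N * (I / (3 * S)) ^ 2 = N * I ^ 2 / (9 * S ^ 2) := by field_simp; ring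
    rw [this, div_le_iff₀ (by positivity)] at hD
    linarith
  have e2 : (w ^ m * D) ^ 2 ≤ (N * I ^ (m+1)) ^ 2 := pow_le_pow_left₀ (by positivity) h 2
  have e3 : (w ^ m) ^ 2 ≤ 9 * K * N * (S ^ 2 * (I ^ m) ^ 2) := by
    have : (w ^ m) ^ 2 * D ^ 2 ≤ (9 * K * N * (S ^ 2 * (I ^ m) ^ 2)) * D ^ 2 := by
      calc (w ^ m) ^ 2 * D ^ 2 = (w ^ m * D) ^ 2 := by ring
        _ ≤ (N * I ^ (m+1)) ^ 2 := e2
        _ = (N * (I ^ m) ^ 2) * (N * I ^ 2) := by ring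
        _ ≤ (N * (I ^ m) ^ 2) * (9 * S ^ 2 * K * D ^ 2) := by gcongr
        _ = _ := by ring
    exact le_of_mul_le_mul_right this (by positivity)
  refine (sq_le_sq₀ (by positivity) (by positivity)).1 ?_
  calc (w ^ m) ^ 2 ≤ 9 * K * N * (S ^ 2 * (I ^ m) ^ 2) := e3
    _ ≤ 64 ^ (m+1) * ((m:ℝ)+1) ^ (m+1) * (S ^ 2 * (I ^ m) ^ 2) := by gcongr
    _ = _ := by
      have : Real.sqrt ((m:ℝ)+1) ^ 2 = (m:ℝ)+1 := Real.sq_sqrt (by positivity)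
      have h8 : (64 * ((m:ℝ)+1)) = (8 * Real.sqrt ((m:ℝ)+1)) ^ 2 := by rw [mul_pow, this]; norm_num
      rw [← mul_pow, h8]; generalize 8 * Real.sqrt ((m:ℝ)+1) = c; ring

theorem final_root (m : ℕ) (hm : 1 ≤ m) (w I S : ℝ) (hw : 0 ≤ w) (hI : 0 < I) (hS : 0 < S)
    (h : w ^ m ≤ (8 * Real.sqrt ((m:ℝ)+1)) ^ (m+1) * S * I ^ m) :
    w ^ (1 / (((m:ℝ)+1) / m)) ≤ 8 * Real.sqrt ((m:ℝ)+1) * S ^ (1 / ((m:ℝ)+1)) * I ^ ((m:ℝ)/((m:ℝ)+1)) := by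
  have hm0 : (0:ℝ) < m := by exact_mod_cast hm
  have e : w ^ (1 / (((m:ℝ)+1) / m)) = (w ^ m) ^ (1 / ((m:ℝ)+1)) := by
    rw [← Real.rpow_natCast, ← Real.rpow_mul hw]; congr 1; field_simp
  rw [e]
  refine (Real.rpow_le_rpow (by positivity) h (by positivity)).trans (le_of_eq ?_)
  rw [Real.mul_rpow (by positivity) (by positivity), Real.mul_rpow (by positivity) (by positivity)]
  congr 1
  · congr 1
    rw [← Real.rpow_natCast, ← Real.rpow_mul (by positivity)]
    push_cast
    rw [mul_one_div_cancel (by positivity), Real.rpow_one]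
  · rw [← Real.rpow_natCast, ← Real.rpow_mul hI.le]; congr 1; field_simp

theorem main_succ (m : ℕ) (hm : 1 ≤ m)
    (f₁ f₂ : Eucl (m+1) → ℝ) (hf₁ : MemQ0 f₁) (hf₂ : MemQ0 f₂)
    (hcond : ∀ θ : Eucl (m+1), ‖θ‖ = 1 →
      projL1 f₁ (Submodule.span ℝ {θ})ᗮ ≤ projL1 f₂ (Submodule.span ℝ {θ})ᗮ) :
    lpNorm (((m:ℝ)+1) / m) f₁ ≤
      8 * Real.sqrt ((m:ℝ)+1) * supNorm f₂ ^ (1 / ((m:ℝ)+1)) *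
        (∫ x, f₂ x) ^ ((m:ℝ) / ((m:ℝ)+1)) := by
  have hI : 0 < ∫ x, f₂ x := hf₂.2.2.2.2
  have hS := sup_pos hf₂
  have hfac : (0:ℝ) < ((m+1).factorial : ℝ) := by exact_mod_cast Nat.factorial_pos _
  obtain ⟨R, hR, hRn⟩ : ∃ R : ℝ, 0 < R ∧ R ^ (m+1) = ((m+1).factorial : ℝ) :=
    ⟨((m+1).factorial : ℝ) ^ (((m+1 : ℕ) : ℝ)⁻¹), by positivity,
      Real.rpow_inv_natCast_pow hfac.le (by omega)⟩
  obtain ⟨v, hv, hdet⟩ := select hf₂ R hR hRn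
  set D := (Matrix.of fun i j => v i j).det with hDdef
  have hD0 : D ≠ 0 := by
    intro h0
    rw [h0] at hdet
    have : 0 < ((m+1).factorial : ℝ) * ((∫ x, f₂ x) / (3 * supNorm f₂)) ^ 2 := by positivity
    simp at hdet
    linarith
  have hvne : ∀ i, v i ≠ 0 := by
    intro i hi
    apply hD0
    rw [hDdef]
    apply Matrix.det_eq_zero_of_row_eq_zero i
    intro j
    simp [hi]
  have hlw := lw_basis hm v hD0 (EF f₁) (EF_usc hf₁)
  have hfac1 : ∀ i, ENNReal.ofReal ‖v i‖ * ∫⁻ y : (Submodule.span ℝ {‖v i‖⁻¹ • v i})ᗮ,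
      PF (EF f₁) (‖v i‖⁻¹ • v i) (y : Eucl (m+1)) ≤ ENNReal.ofReal (R * ∫ x, f₂ x) := by
    intro i
    have hn0 : 0 < ‖v i‖ := norm_pos_iff.2 (hvne i)
    have hθ : ‖‖v i‖⁻¹ • v i‖ = 1 := by
      rw [norm_smul, norm_inv, norm_norm, inv_mul_cancel₀ hn0.ne']
    have hc := hcond _ hθ
    rw [projL1_eq hf₁, projL1_eq hf₂, ENNReal.toReal_le_toReal (proj_fin hf₁ _ hθ) (proj_fin hf₂ _ hθ)] at hc
    have hb := proj_bound hf₂ _ hθ ‖v i‖ hn0 R hR.le (by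
      rw [smul_smul, mul_inv_cancel₀ hn0.ne', one_smul]; exact hv i)
    rw [GG_zero, EF_lint hf₂, ← ENNReal.ofReal_mul hR.le] at hb
    exact (mul_le_mul_right hc _).trans hb
  have hlw2 := hlw.trans (Finset.prod_le_prod' fun i _ => hfac1 i)
  rw [Finset.prod_const, Finset.card_univ, Fintype.card_fin, ← ENNReal.ofReal_pow (by positivity),
    mul_pow, hRn] at hlw2
  have hreal := ENNReal.toReal_mono ENNReal.ofReal_ne_top hlw2
  rw [ENNReal.toReal_mul, ENNReal.toReal_pow, ENNReal.toReal_ofReal (abs_nonneg _),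
    ENNReal.toReal_ofReal (by positivity)] at hreal
  have hW : ∫ x, f₁ x ^ (((m:ℝ)+1) / m) = (∫⁻ x, EF f₁ x ^ (((m:ℝ)+1)/m)).toReal := by
    rw [integral_eq_lintegral_of_nonneg_ae]
    · congr 1
      apply lintegral_congr
      intro x
      exact (ENNReal.ofReal_rpow_of_nonneg (hf₁.1 x) (by positivity)).symm
    · exact Filter.Eventually.of_forall fun x => Real.rpow_nonneg (hf₁.1 x) _
    · exact (hf₁.2.2.1.measurable.pow_const _).aestronglyMeasurable
  unfold _root_.lpNorm
  rw [hW]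
  apply final_root m hm _ _ _ ENNReal.toReal_nonneg hI hS
  refine final_num m hm _ _ _ |D| ENNReal.toReal_nonneg hI hS ?_ (abs_pos.2 hD0) hreal
  rw [sq_abs]; exact hdet

end

/-- **Functional Shephard problem of codimension one** (Theorem 3.1).
If `f₁, f₂ ∈ Q₀ⁿ` and `‖P_{θ⊥} f₁‖_{L¹} ≤ ‖P_{θ⊥} f₂‖_{L¹}` for all unit vectors `θ`,
then `‖f₁‖_{n/(n−1)} ≤ 8·√n·‖f₂‖_∞^{1/n}·‖f₂‖₁^{(n−1)/n}`. -/
theorem functional_shephard_codim_one (n : ℕ) (hn : 2 ≤ n)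
    (f₁ f₂ : Eucl n → ℝ) (hf₁ : MemQ0 f₁) (hf₂ : MemQ0 f₂)
    (hcond : ∀ θ : Eucl n, ‖θ‖ = 1 →
      projL1 f₁ (Submodule.span ℝ {θ})ᗮ ≤ projL1 f₂ (Submodule.span ℝ {θ})ᗮ) :
    lpNorm ((n : ℝ) / ((n : ℝ) - 1)) f₁ ≤
      8 * Real.sqrt n * supNorm f₂ ^ ((1 : ℝ) / n) *
        (∫ x, f₂ x) ^ (((n : ℝ) - 1) / n) := by
  obtain ⟨m, rfl⟩ : ∃ m, n = m + 1 := ⟨n - 1, by omega⟩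
  have h := main_succ m (by omega) f₁ f₂ hf₁ hf₂ hcond
  simpa only [Nat.cast_add, Nat.cast_one, add_sub_cancel_right] using h
end
end

section
/- Let n ≥ 2 and let f₁, f₂ ∈ Q₀ⁿ. Assume that for every unit vector θ ∈ ℝⁿ one has ‖P_{θ⊥} f₁‖_{L¹(θ⊥)} ≤ ‖P_{θ⊥} f₂‖_{L¹(θ⊥)}. Then ‖f₁‖_{n/(n−1)} ≤ 8·e·√n · ‖f₂‖_{n/(n−1)}. -/
open MeasureTheory

noncomputable section

/-- Loomis–Whitney, inductive form. -/
lemma lw_marginal {n : ℕ} (hn : 2 ≤ n) (g : Fin n → (Fin n → ℝ) → ENNReal)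
    (hg : ∀ i, Measurable (g i))
    (hinv : ∀ i x t, g i (Function.update x i t) = g i x) (s : Finset (Fin n)) :
    ∀ x, lmarginal (fun _ => volume) s (fun y => ∏ i, (g i y) ^ (1 / ((n : ℝ) - 1))) x ≤
      ∏ i, (lmarginal (fun _ => volume) (s.erase i) (g i) x) ^ (1 / ((n : ℝ) - 1)) := by
  have hn1 : (0:ℝ) < (n:ℝ) - 1 := by
    have : (2:ℝ) ≤ n := by exact_mod_cast hn
    linarith
  have hp0 : (0:ℝ) ≤ 1 / ((n : ℝ) - 1) := by positivity
  have hmeas : Measurable (fun y => ∏ i, (g i y) ^ (1 / ((n : ℝ) - 1))) :=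
    Finset.measurable_prod _ fun i _ => (hg i).pow_const _
  induction s using Finset.induction with
  | empty => intro x; simp
  | insert j s hj ih =>
    intro x
    rw [lmarginal_insert _ hmeas hj]
    calc _ ≤ ∫⁻ t, ∏ i, (lmarginal (fun _ => volume) (s.erase i) (g i) (Function.update x j t)) ^ (1 / ((n : ℝ) - 1)) :=
          lintegral_mono fun t => ih _
      _ = ∫⁻ t, (lmarginal (fun _ => volume) (s.erase j) (g j) x) ^ (1 / ((n : ℝ) - 1)) * ∏ i ∈ Finset.univ.erase j, (lmarginal (fun _ => volume) (s.erase i) (g i) (Function.update x j t)) ^ (1 / ((n : ℝ) - 1)) := by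
          refine lintegral_congr fun t => ?_
          rw [← Finset.mul_prod_erase Finset.univ _ (Finset.mem_univ j)]
          congr 2
          rw [lmarginal_update_of_notMem (hg j) (by simp)]
          congr 1
          funext y
          exact hinv j y t
      _ = (lmarginal (fun _ => volume) (s.erase j) (g j) x) ^ (1 / ((n : ℝ) - 1)) * ∫⁻ t, ∏ i ∈ Finset.univ.erase j, (lmarginal (fun _ => volume) (s.erase i) (g i) (Function.update x j t)) ^ (1 / ((n : ℝ) - 1)) := by
          rw [lintegral_const_mul]
          refine Finset.measurable_prod _ fun i _ => ?_
          exact (((hg i).lmarginal _).comp (measurable_update x)).pow_const _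
      _ ≤ (lmarginal (fun _ => volume) (s.erase j) (g j) x) ^ (1 / ((n : ℝ) - 1)) * ∏ i ∈ Finset.univ.erase j, (∫⁻ t, lmarginal (fun _ => volume) (s.erase i) (g i) (Function.update x j t)) ^ (1 / ((n : ℝ) - 1)) := by
          gcongr
          apply ENNReal.lintegral_prod_norm_pow_le
          · intro i _
            exact (((hg i).lmarginal _).comp (measurable_update x)).aemeasurable
          · rw [Finset.sum_const, Finset.card_erase_of_mem (Finset.mem_univ j)]
            simp only [Finset.card_univ, Fintype.card_fin, nsmul_eq_mul]
            rw [Nat.cast_sub (by omega)]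
            push_cast
            field_simp
          · intro i _; exact hp0
      _ = _ := by
          rw [← Finset.mul_prod_erase Finset.univ _ (Finset.mem_univ j)]
          congr 1
          · rw [Finset.erase_insert hj, Finset.erase_eq_of_notMem hj]
          · refine Finset.prod_congr rfl fun i hi => ?_
            have hij : j ≠ i := (Finset.ne_of_mem_erase hi).symm
            rw [Finset.erase_insert_of_ne hij, lmarginal_insert _ (hg i)]
            simp [hj]

lemma lw_pi {n : ℕ} (hn : 2 ≤ n) (g : Fin n → (Fin n → ℝ) → ENNReal)
    (hg : ∀ i, Measurable (g i))
    (hinv : ∀ i x t, g i (Function.update x i t) = g i x) :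
    ∫⁻ y, ∏ i, (g i y) ^ (1 / ((n : ℝ) - 1)) ≤
      ∏ i, (lmarginal (fun _ => volume) (Finset.univ.erase i) (g i) 0) ^ (1 / ((n : ℝ) - 1)) := by
  have := lw_marginal hn g hg hinv Finset.univ 0
  rw [lmarginal_univ] at this
  exact this


/-- Sup of `f` along the line `x + ℝ u`. -/
def hSup {n : ℕ} (f : Eucl n → ℝ) (u x : Eucl n) : ENNReal :=
  ⨆ s : ℝ, ENNReal.ofReal (f (x + s • u))

def slab_s1 {n : ℕ} (u : Eucl n) : Set (Eucl n) := {x | 0 ≤ inner ℝ u x ∧ inner ℝ u x < ‖u‖ ^ 2}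

/-- Integral of `hSup` over the slab. -/
def slabInt {n : ℕ} (f : Eucl n → ℝ) (u : Eucl n) : ENNReal := ∫⁻ x in slab_s1 u, hSup f u x

lemma measurableSet_slab {n : ℕ} (u : Eucl n) : MeasurableSet (slab_s1 u) := by
  have hm : Measurable fun x : Eucl n => inner ℝ u x := by fun_prop
  exact (measurableSet_le measurable_const hm).inter (measurableSet_lt hm measurable_const)

lemma hSup_add_smul {n : ℕ} (f : Eucl n → ℝ) (u x : Eucl n) (t : ℝ) :
    hSup f u (x + t • u) = hSup f u x := by
  unfold hSup
  apply le_antisymm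
  · refine iSup_le fun s => ?_
    refine le_trans (le_of_eq ?_) (le_iSup _ (t + s))
    congr 2; rw [add_smul, add_assoc]
  · refine iSup_le fun s => ?_
    refine le_trans (le_of_eq ?_) (le_iSup _ (s - t))
    congr 2; rw [sub_smul]; abel

lemma le_hSup {n : ℕ} (f : Eucl n → ℝ) (u x : Eucl n) : ENNReal.ofReal (f x) ≤ hSup f u x := by
  refine le_trans (le_of_eq ?_) (le_iSup _ (0:ℝ))
  simp

lemma measurable_hSup {n : ℕ} {f : Eucl n → ℝ} (h0 : ∀ x, 0 ≤ f x) (hf : UpperSemicontinuous f)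
    (u : Eucl n) : Measurable (hSup f u) := by
  refine measurable_of_Ioi fun a => ?_
  have key : hSup f u ⁻¹' Set.Ioi a = ⋃ q ∈ {q : ℚ | a < ENNReal.ofReal q},
      (fun p : Eucl n × ℝ => p.1 - p.2 • u) '' ({y | (q:ℝ) ≤ f y} ×ˢ Set.univ) := by
    ext x
    simp only [Set.mem_preimage, Set.mem_Ioi, hSup, lt_iSup_iff, Set.mem_iUnion, Set.mem_image,
      Set.mem_prod, Set.mem_ofPred_eq, Set.mem_univ, and_true, Prod.exists, exists_prop]
    constructor
    · rintro ⟨s, hs⟩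
      obtain ⟨q, _, h1, h2⟩ := ENNReal.lt_iff_exists_rat_btwn.1 hs
      refine ⟨q, h1, x + s • u, s, ?_, by simp⟩
      exact (ENNReal.ofReal_le_ofReal_iff (h0 _)).1 h2.le
    · rintro ⟨q, hq, y, s, hy, rfl⟩
      refine ⟨s, ?_⟩
      refine lt_of_lt_of_le hq (ENNReal.ofReal_le_ofReal ?_)
      simpa using hy
  rw [key]
  refine MeasurableSet.biUnion (Set.to_countable _) fun q _ => ?_
  have hc : IsClosed ({y | (q:ℝ) ≤ f y} ×ˢ (Set.univ : Set ℝ)) :=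
    (hf.isClosed_preimage q).prod isClosed_univ
  have hs : IsSigmaCompact ({y | (q:ℝ) ≤ f y} ×ˢ (Set.univ : Set ℝ)) :=
    isSigmaCompact_univ.of_isClosed_subset hc (Set.subset_univ _)
  have hi := hs.image (f := fun p : Eucl n × ℝ => p.1 - p.2 • u) (by fun_prop)
  obtain ⟨K, hK, hKe⟩ := hi
  rw [← hKe]
  exact MeasurableSet.iUnion fun k => (hK k).isClosed.measurableSet

def comb {n : ℕ} (U : Fin n → Eucl n) (t : Fin n → ℝ) : Eucl n := ∑ j, t j • U j

def mat {n : ℕ} (U : Fin n → Eucl n) : Matrix (Fin n) (Fin n) ℝ := Matrix.of fun i j => U j i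

lemma comb_eq {n : ℕ} (U : Fin n → Eucl n) (t : Fin n → ℝ) :
    comb U t = WithLp.toLp 2 (Matrix.toLin' (mat U) t) := by
  ext i
  simp [comb, mat, Matrix.mulVec, dotProduct, mul_comm]

lemma measurable_comb {n : ℕ} (U : Fin n → Eucl n) : Measurable (comb U) := by
  unfold comb; fun_prop

lemma lintegral_comb {n : ℕ} (U : Fin n → Eucl n) (hD : (mat U).det ≠ 0) (φ : Eucl n → ENNReal)
    (hφ : Measurable φ) :
    ∫⁻ x, φ x = ENNReal.ofReal |(mat U).det| * ∫⁻ t, φ (comb U t) := by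
  have h1 : ∫⁻ x, φ x = ∫⁻ z : Fin n → ℝ, φ (WithLp.toLp 2 z) :=
    ((PiLp.volume_preserving_toLp (Fin n)).lintegral_comp hφ).symm
  have h2 := Real.map_matrix_volume_pi_eq_smul_volume_pi hD
  have hm : Measurable fun z : Fin n → ℝ => φ (WithLp.toLp 2 z) := hφ.comp (by fun_prop)
  have h3 : ∫⁻ t, φ (comb U t) = ENNReal.ofReal |(mat U).det⁻¹| * ∫⁻ z : Fin n → ℝ, φ (WithLp.toLp 2 z) := by
    rw [← smul_eq_mul, ← lintegral_smul_measure, ← h2, lintegral_map hm]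
    · simp_rw [comb_eq]
    · exact (LinearMap.continuous_of_finiteDimensional _).measurable
  rw [h3, h1, ← mul_assoc, ← ENNReal.ofReal_mul (abs_nonneg _), ← abs_mul, mul_inv_cancel₀ hD]
  simp

lemma comb_update {n : ℕ} (U : Fin n → Eucl n) (t : Fin n → ℝ) (i : Fin n) (s : ℝ) :
    comb U (Function.update t i s) = comb U t + (s - t i) • U i := by
  unfold comb
  rw [← Finset.add_sum_erase _ _ (Finset.mem_univ i), ← Finset.add_sum_erase (a := i) _ (fun j => t j • U j) (Finset.mem_univ i)]
  rw [Finset.sum_congr rfl (g := fun j => t j • U j)]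
  · simp [sub_smul]; abel
  · intro j hj
    rw [Function.update_of_ne (Finset.ne_of_mem_erase hj)]

lemma slabInt_comb {n : ℕ} {f : Eucl n → ℝ} (h0 : ∀ x, 0 ≤ f x) (hf : UpperSemicontinuous f)
    (U : Fin n → Eucl n) (hD : (mat U).det ≠ 0) (i : Fin n) (hU : U i ≠ 0) :
    slabInt f (U i) = ENNReal.ofReal |(mat U).det| *
      lmarginal (fun _ => volume) (Finset.univ.erase i) (fun t => hSup f (U i) (comb U t)) 0 := by
  have hm := measurable_hSup h0 hf (U i)
  have hind : Measurable ((slab_s1 (U i)).indicator (hSup f (U i))) := hm.indicator (measurableSet_slab _)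
  rw [slabInt, ← lintegral_indicator (measurableSet_slab _), lintegral_comb U hD _ hind]
  congr 1
  have e1 : ∫⁻ t, (slab_s1 (U i)).indicator (hSup f (U i)) (comb U t) =
    lmarginal (fun _ => volume) Finset.univ (fun t => (slab_s1 (U i)).indicator (hSup f (U i)) (comb U t)) 0 := by
    rw [lmarginal_univ]; rfl
  have hind2 : Measurable (fun t => (slab_s1 (U i)).indicator (hSup f (U i)) (comb U t)) :=
    hind.comp (measurable_comb U)
  rw [e1, lmarginal_erase' _ hind2 (Finset.mem_univ i)]
  congr 1
  funext t
  have hpos : 0 < ‖U i‖ ^ 2 := by positivity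
  set c : ℝ := inner ℝ (U i) (comb U t) / ‖U i‖ ^ 2 with hc
  have hset : ∀ s : ℝ, (slab_s1 (U i)).indicator (hSup f (U i)) (comb U (Function.update t i s)) =
      (Set.Ico (t i - c) (t i - c + 1)).indicator (fun _ => hSup f (U i) (comb U t)) s := by
    intro s
    rw [comb_update]
    have hmem : comb U t + (s - t i) • U i ∈ slab_s1 (U i) ↔ s ∈ Set.Ico (t i - c) (t i - c + 1) := by
      have : inner ℝ (U i) (comb U t + (s - t i) • U i) = (c + (s - t i)) * ‖U i‖ ^ 2 := by
        rw [inner_add_right, inner_smul_right, real_inner_self_eq_norm_sq, hc]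
        field_simp
      simp only [slab_s1, Set.mem_ofPred_eq, this, Set.mem_Ico]
      constructor
      · rintro ⟨h1, h2⟩
        constructor
        · have := nonneg_of_mul_nonneg_left h1 hpos
          linarith
        · have : (c + (s - t i)) < 1 := by
            by_contra h
            push Not at h
            nlinarith
          linarith
      · rintro ⟨h1, h2⟩
        constructor
        · apply mul_nonneg _ hpos.le
          linarith
        · have : (c + (s - t i)) < 1 := by linarith
          nlinarith
    by_cases h : s ∈ Set.Ico (t i - c) (t i - c + 1)
    · rw [Set.indicator_of_mem h, Set.indicator_of_mem (hmem.2 h), hSup_add_smul]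
    · rw [Set.indicator_of_notMem h, Set.indicator_of_notMem (fun h' => h (hmem.1 h'))]
  simp_rw [hset]
  rw [lintegral_indicator measurableSet_Ico]
  simp

lemma lw_eucl {n : ℕ} (hn : 2 ≤ n) {f : Eucl n → ℝ} (h0 : ∀ x, 0 ≤ f x) (hf : UpperSemicontinuous f)
    (U : Fin n → Eucl n) (hD : (mat U).det ≠ 0) (hU : ∀ i, U i ≠ 0) :
    (∫⁻ x, ENNReal.ofReal (f x) ^ ((n:ℝ) / ((n:ℝ) - 1))) ^ (n - 1) * ENNReal.ofReal |(mat U).det| ≤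
      ∏ i, slabInt f (U i) := by
  have hn1 : (0:ℝ) < (n:ℝ) - 1 := by
    have : (2:ℝ) ≤ n := by exact_mod_cast hn
    linarith
  have hfm : Measurable f := hf.measurable
  have hdet : ENNReal.ofReal |(mat U).det| ≠ 0 := by simpa using hD
  set d := ENNReal.ofReal |(mat U).det| with hd
  set g : Fin n → (Fin n → ℝ) → ENNReal := fun i t => hSup f (U i) (comb U t) with hg
  set m : Fin n → ENNReal := fun i => lmarginal (fun _ => volume) (Finset.univ.erase i) (g i) 0 with hm
  have h1 : ∫⁻ x, ENNReal.ofReal (f x) ^ ((n:ℝ) / ((n:ℝ) - 1)) ≤ d * ∏ i, (m i) ^ (1 / ((n : ℝ) - 1)) := by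
    rw [lintegral_comb U hD _ (by fun_prop)]
    gcongr
    refine le_trans ?_ (lw_pi hn g (fun i => (measurable_hSup h0 hf (U i)).comp (measurable_comb U)) ?_)
    · refine lintegral_mono fun t => ?_
      calc ENNReal.ofReal (f (comb U t)) ^ ((n:ℝ) / ((n:ℝ) - 1)) = ∏ i : Fin n, ENNReal.ofReal (f (comb U t)) ^ (1 / ((n:ℝ) - 1)) := by
            rw [Finset.prod_const, Finset.card_univ, Fintype.card_fin, ← ENNReal.rpow_mul_natCast]
            congr 1
            field_simp
        _ ≤ _ := by
            refine Finset.prod_le_prod' fun i _ => ?_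
            exact ENNReal.rpow_le_rpow (le_hSup _ _ _) (by positivity)
    · intro i x t
      simp only [hg, comb_update, hSup_add_smul]
  have hm1 : ((n - 1 : ℕ) : ℝ) = (n:ℝ) - 1 := by
    rw [Nat.cast_sub (by omega)]; simp
  calc _ ≤ (d * ∏ i, (m i) ^ (1 / ((n : ℝ) - 1))) ^ (n - 1) * d := by gcongr
    _ = d ^ n * ∏ i, m i := by
      rw [mul_pow, ← Finset.prod_pow]
      have : ∀ i, ((m i) ^ (1 / ((n : ℝ) - 1))) ^ (n - 1) = m i := by
        intro i
        rw [← ENNReal.rpow_mul_natCast, hm1, one_div, inv_mul_cancel₀ hn1.ne', ENNReal.rpow_one]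
      simp_rw [this]
      have : d ^ n = d ^ (n-1) * d := by rw [← pow_succ]; congr 1; omega
      rw [this]; ring
    _ = ∏ i, slabInt f (U i) := by
      simp_rw [slabInt_comb h0 hf U hD _ (hU _)]
      rw [Finset.prod_mul_distrib, Finset.prod_const, Finset.card_univ, Fintype.card_fin]


lemma proj_slab {n : ℕ} (u : Eucl n) (hu : u ≠ 0) : ∃ c : ENNReal, c ≠ 0 ∧ c ≠ ⊤ ∧
    ∀ f : Eucl n → ℝ, (∀ x, 0 ≤ f x) → UpperSemicontinuous f →
      slabInt f u = c * ∫⁻ y : (Submodule.span ℝ {u})ᗮ, hSup f u y := by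
  set H := (Submodule.span ℝ {u})ᗮ with hH
  have hHo : Hᗮ = Submodule.span ℝ {u} := Submodule.orthogonal_orthogonal _
  have humem : u ∈ Hᗮ := by rw [hHo]; exact Submodule.mem_span_singleton_self u
  have hpos : 0 < ‖u‖ := norm_pos_iff.2 hu
  let S : Set Hᗮ := {z | 0 ≤ inner ℝ u (z : Eucl n) ∧ inner ℝ u (z : Eucl n) < ‖u‖ ^ 2}
  have hc : Continuous fun z : Hᗮ => inner ℝ u (z : Eucl n) := by fun_prop
  have hSm : MeasurableSet S :=
    (measurableSet_le measurable_const hc.measurable).inter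
      (measurableSet_lt hc.measurable measurable_const)
  refine ⟨volume S, ?_, ?_, ?_⟩
  · let O : Set Hᗮ := {z | 0 < inner ℝ u (z : Eucl n) ∧ inner ℝ u (z : Eucl n) < ‖u‖ ^ 2}
    have hO : IsOpen O := (isOpen_lt continuous_const hc).inter (isOpen_lt hc continuous_const)
    have hne : O.Nonempty := by
      refine ⟨⟨(1/2:ℝ) • u, Hᗮ.smul_mem _ humem⟩, ?_⟩
      have : inner ℝ u ((1/2:ℝ) • u) = 1/2 * ‖u‖^2 := by
        rw [inner_smul_right, real_inner_self_eq_norm_sq]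
      show 0 < inner ℝ u ((1/2:ℝ) • u) ∧ inner ℝ u ((1/2:ℝ) • u) < ‖u‖ ^ 2
      rw [this]
      constructor <;> nlinarith [sq_pos_of_pos hpos]
    have h1 : 0 < volume O := hO.measure_pos _ hne
    have h2 : volume O ≤ volume S := measure_mono fun z hz => ⟨hz.1.le, hz.2⟩
    exact (h1.trans_le h2).ne'
  · have hsub : S ⊆ Metric.ball 0 (‖u‖) := by
      rintro ⟨z, hz⟩ ⟨h1, h2⟩
      rw [hHo] at hz
      obtain ⟨s, rfl⟩ := Submodule.mem_span_singleton.1 hz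
      simp only [inner_smul_right, real_inner_self_eq_norm_sq] at h1 h2
      have hq := sq_pos_of_pos hpos
      have s0 : 0 ≤ s := nonneg_of_mul_nonneg_left h1 hq
      have s1 : s < 1 := by by_contra h; push Not at h; nlinarith
      rw [mem_ball_zero_iff]
      show ‖s • u‖ < ‖u‖
      rw [norm_smul, Real.norm_eq_abs, abs_of_nonneg s0]
      nlinarith
    exact ((measure_mono hsub).trans_lt measure_ball_lt_top).ne
  · intro f h0 hf
    have hm := measurable_hSup h0 hf u
    have hind : Measurable ((slab_s1 u).indicator (hSup f u)) := hm.indicator (measurableSet_slab _)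
    rw [slabInt, ← lintegral_indicator (measurableSet_slab _)]
    have mp1 := (H.orthogonalDecomposition).symm.measurePreserving
    have mp2 := WithLp.volume_preserving_toLp H Hᗮ
    have mp := mp1.comp mp2
    rw [← mp.lintegral_comp hind]
    have hcomp : ∀ p : H × Hᗮ, (slab_s1 u).indicator (hSup f u)
        (((H.orthogonalDecomposition).symm ∘ WithLp.toLp 2) p) =
        hSup f u (p.1 : Eucl n) * S.indicator (fun _ => 1) p.2 := by
      rintro ⟨y, z⟩
      have e : ((H.orthogonalDecomposition).symm ∘ WithLp.toLp 2) (y, z) = (y : Eucl n) + z := by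
        simp
      rw [e]
      have hin : inner ℝ u ((y : Eucl n) + z) = inner ℝ u (z : Eucl n) := by
        rw [inner_add_right, Submodule.inner_left_of_mem_orthogonal y.2 humem, zero_add]
      have hz : (z : Eucl n) ∈ Submodule.span ℝ {u} := hHo ▸ z.2
      obtain ⟨s, hs⟩ := Submodule.mem_span_singleton.1 hz
      have hh : hSup f u ((y : Eucl n) + z) = hSup f u y := by
        rw [← hs, hSup_add_smul]
      by_cases hzS : z ∈ S
      · have : (y : Eucl n) + z ∈ slab_s1 u := by
          show 0 ≤ inner ℝ u _ ∧ inner ℝ u _ < _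
          rw [hin]; exact hzS
        rw [Set.indicator_of_mem this, Set.indicator_of_mem hzS, hh, mul_one]
      · have : (y : Eucl n) + z ∉ slab_s1 u := by
          intro h
          apply hzS
          have h' : 0 ≤ inner ℝ u ((y : Eucl n) + z) ∧ inner ℝ u ((y : Eucl n) + z) < _ := h
          rw [hin] at h'
          exact h'
        rw [Set.indicator_of_notMem this, Set.indicator_of_notMem hzS, mul_zero]
    simp_rw [hcomp]
    have hmH : Measurable fun y : H => hSup f u (y : Eucl n) := hm.comp measurable_subtype_coe
    rw [Measure.volume_eq_prod, lintegral_prod_mul hmH.aemeasurable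
      ((measurable_const.indicator hSm).aemeasurable), lintegral_indicator hSm, mul_comm]
    simp

lemma projL1_eq_s1 {n : ℕ} {f : Eucl n → ℝ} (h0 : ∀ x, 0 ≤ f x) (hf : UpperSemicontinuous f)
    {C : ℝ} (hC : ∀ x, f x ≤ C) (u : Eucl n) :
    projL1 f (Submodule.span ℝ {u})ᗮ =
      (∫⁻ y : (Submodule.span ℝ {u})ᗮ, hSup f u y).toReal := by
  have hm := measurable_hSup h0 hf u
  have hHo : (Submodule.span ℝ {u})ᗮᗮ = Submodule.span ℝ {u} := Submodule.orthogonal_orthogonal _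
  have hmH : Measurable fun y : (Submodule.span ℝ {u})ᗮ => hSup f u (y : Eucl n) :=
    hm.comp measurable_subtype_coe
  rw [← integral_toReal hmH.aemeasurable]
  · unfold projL1
    congr 1
    funext y
    unfold hSup
    rw [ENNReal.toReal_iSup (fun _ => ENNReal.ofReal_ne_top)]
    simp_rw [ENNReal.toReal_ofReal (h0 _)]
    let g : ℝ → (Submodule.span ℝ {u})ᗮᗮ := fun s =>
      ⟨s • u, by rw [hHo]; exact Submodule.smul_mem _ _ (Submodule.mem_span_singleton_self u)⟩
    have hg : Function.Surjective g := by
      rintro ⟨z, hz⟩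
      have hz' := hz
      rw [hHo] at hz'
      obtain ⟨s, hs⟩ := Submodule.mem_span_singleton.1 hz'
      exact ⟨s, Subtype.ext hs⟩
    rw [← hg.iSup_comp]
  · refine Filter.Eventually.of_forall fun y => ?_
    refine lt_of_le_of_lt (iSup_le fun s => ENNReal.ofReal_le_ofReal (hC _)) ENNReal.ofReal_lt_top

lemma slabInt_mono_of_proj {n : ℕ} {f₁ f₂ : Eucl n → ℝ} (h1 : ∀ x, 0 ≤ f₁ x)
    (hf1 : UpperSemicontinuous f₁) {C₁ : ℝ} (hC1 : ∀ x, f₁ x ≤ C₁) (h2 : ∀ x, 0 ≤ f₂ x)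
    (hf2 : UpperSemicontinuous f₂) {C₂ : ℝ} (hC2 : ∀ x, f₂ x ≤ C₂) (u : Eucl n) (hu : u ≠ 0)
    (hfin1 : slabInt f₁ u ≠ ⊤) (hfin2 : slabInt f₂ u ≠ ⊤)
    (hcond : ∀ θ : Eucl n, ‖θ‖ = 1 →
      projL1 f₁ (Submodule.span ℝ {θ})ᗮ ≤ projL1 f₂ (Submodule.span ℝ {θ})ᗮ) :
    slabInt f₁ u ≤ slabInt f₂ u := by
  have hn : ‖u‖ ≠ 0 := norm_ne_zero_iff.2 hu
  have hspan : Submodule.span ℝ {(‖u‖⁻¹ • u : Eucl n)} = Submodule.span ℝ {u} :=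
    Submodule.span_singleton_smul_eq (IsUnit.mk0 _ (inv_ne_zero hn)) u
  have h := hcond (‖u‖⁻¹ • u) (by rw [norm_smul, norm_inv, norm_norm, inv_mul_cancel₀ hn])
  rw [hspan, projL1_eq_s1 h1 hf1 hC1, projL1_eq_s1 h2 hf2 hC2] at h
  obtain ⟨c, c0, ct, hc⟩ := proj_slab u hu
  rw [hc f₁ h1 hf1] at hfin1 ⊢
  rw [hc f₂ h2 hf2] at hfin2 ⊢
  have key : ∀ x : ENNReal, c * x ≠ ⊤ → x ≠ ⊤ := by
    rintro x hx rfl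
    exact hx (ENNReal.mul_top c0)
  have := (ENNReal.toReal_le_toReal (key _ hfin1) (key _ hfin2)).1 h
  gcongr


lemma lintegral_affine {n : ℕ} (φ : Eucl n → ENNReal) (hφ : Measurable φ) (r : ℝ) (hr : 0 < r)
    (v : Eucl n) : ∫⁻ x, φ (r • x + v) = ENNReal.ofReal (r⁻¹ ^ n) * ∫⁻ x, φ x := by
  have h1 := Measure.map_addHaar_smul (volume : Measure (Eucl n)) hr.ne'
  have hm : Measurable fun x : Eucl n => φ (x + v) := hφ.comp (by fun_prop)
  calc ∫⁻ x, φ (r • x + v) = ∫⁻ x, φ (x + v) ∂(Measure.map (r • ·) (volume : Measure (Eucl n))) := by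
        rw [lintegral_map hm (by fun_prop)]
    _ = ENNReal.ofReal (r⁻¹ ^ n) * ∫⁻ x, φ (x + v) := by
        rw [h1, lintegral_smul_measure, smul_eq_mul]
        congr 2
        rw [finrank_euclideanSpace_fin, abs_of_pos (by positivity), inv_pow]
    _ = _ := by rw [lintegral_add_right_eq_self]

lemma bdd_of_memQ0 {n : ℕ} {f : Eucl n → ℝ} (hf : MemQ0 f) : ∃ C, 0 ≤ C ∧ ∀ x, f x ≤ C := by
  obtain ⟨h0, hlc, husc, hintg, hpos⟩ := hf
  have hfm : Measurable f := husc.measurable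
  set c := ∫⁻ x, ENNReal.ofReal (f x ^ (1/2:ℝ)) with hc
  have hc0 : c ≠ 0 := by
    intro h
    rw [hc, lintegral_eq_zero_iff (by fun_prop)] at h
    have : f =ᵐ[volume] 0 := by
      filter_upwards [h] with x hx
      simp only [Pi.zero_apply, ENNReal.ofReal_eq_zero] at hx
      by_contra hne
      have : 0 < f x := lt_of_le_of_ne (h0 x) (Ne.symm hne)
      have := Real.rpow_pos_of_pos this (1/2)
      linarith
    rw [integral_congr_ae this] at hpos
    simp at hpos
  have hI : ∫⁻ x, ENNReal.ofReal (f x) ≠ ⊤ := by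
    rw [← ofReal_integral_eq_lintegral_ofReal hintg (Filter.Eventually.of_forall h0)]
    exact ENNReal.ofReal_ne_top
  set K := ENNReal.ofReal ((1/2:ℝ)⁻¹ ^ n) * ∫⁻ x, ENNReal.ofReal (f x) with hK
  have hKt : K ≠ ⊤ := ENNReal.mul_ne_top ENNReal.ofReal_ne_top hI
  have key : ∀ o, ENNReal.ofReal (f o ^ (1/2:ℝ)) ≤ K / c := by
    intro o
    rw [ENNReal.le_div_iff_mul_le (Or.inl hc0) (Or.inr hKt), mul_comm, hc,
      ← lintegral_mul_const _ (by fun_prop), hK,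
      ← lintegral_affine _ (by fun_prop) (1/2) (by norm_num) ((1/2:ℝ) • o)]
    refine lintegral_mono fun x => ?_
    rw [← ENNReal.ofReal_mul (Real.rpow_nonneg (h0 _) _)]
    apply ENNReal.ofReal_le_ofReal
    have := hlc x o (1/2) (by norm_num) (by norm_num)
    norm_num at this ⊢
    exact this
  have hdt : K / c ≠ ⊤ := ENNReal.div_ne_top hKt hc0
  refine ⟨(K / c).toReal ^ 2, by positivity, fun o => ?_⟩
  have h := (ENNReal.ofReal_le_iff_le_toReal hdt).1 (key o)
  calc f o = (f o ^ (1/2:ℝ)) ^ 2 := by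
        rw [← Real.rpow_natCast, ← Real.rpow_mul (h0 o)]; norm_num
    _ ≤ _ := by
        have := Real.rpow_nonneg (h0 o) (1/2)
        gcongr

lemma mean_exp {a b : ℝ} (ha : 0 < a) (hb : 0 < b) :
    ENNReal.ofReal (Real.sqrt (a * b)) ≤
      ∫⁻ τ in Set.Ioc (0:ℝ) 1, ENNReal.ofReal (a ^ (1 - τ) * b ^ τ) := by
  have hcont : Continuous fun τ : ℝ => a ^ (1 - τ) * b ^ τ := by
    have h1 : Continuous fun τ : ℝ => a ^ (1 - τ) := by
      exact Continuous.rpow continuous_const (by fun_prop) (fun _ => Or.inl ha.ne')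
    have h2 : Continuous fun τ : ℝ => b ^ τ := by
      exact Continuous.rpow continuous_const (by fun_prop) (fun _ => Or.inl hb.ne')
    exact h1.mul h2
  have hi : IntegrableOn (fun τ : ℝ => a ^ (1 - τ) * b ^ τ) (Set.Ioc 0 1) :=
    (hcont.integrableOn_Icc (a := 0) (b := 1)).mono_set Set.Ioc_subset_Icc_self
  rw [← ofReal_integral_eq_lintegral_ofReal hi
    (Filter.Eventually.of_forall fun τ => by positivity)]
  apply ENNReal.ofReal_le_ofReal
  rw [← intervalIntegral.integral_of_le (by norm_num)]
  set c := Real.log b - Real.log a with hc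
  have hsq : Real.sqrt (a * b) = Real.exp ((Real.log a + Real.log b) / 2) := by
    rw [Real.sqrt_eq_rpow, Real.rpow_def_of_pos (by positivity), Real.log_mul ha.ne' hb.ne']
    congr 1; ring
  have hlow : ∀ τ : ℝ, Real.sqrt (a * b) * (1 + (τ - 1/2) * c) ≤ a ^ (1 - τ) * b ^ τ := by
    intro τ
    have e : a ^ (1 - τ) * b ^ τ = Real.sqrt (a * b) * Real.exp ((τ - 1/2) * c) := by
      rw [hsq, Real.rpow_def_of_pos ha, Real.rpow_def_of_pos hb, ← Real.exp_add, ← Real.exp_add]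
      congr 1
      rw [hc]; ring
    rw [e]
    apply mul_le_mul_of_nonneg_left _ (Real.sqrt_nonneg _)
    have := Real.add_one_le_exp ((τ - 1/2) * c)
    linarith
  calc Real.sqrt (a * b) = ∫ τ in (0:ℝ)..1, Real.sqrt (a * b) * (1 + (τ - 1/2) * c) := by
        rw [intervalIntegral.integral_const_mul, intervalIntegral.integral_add (by simp)
          (Continuous.intervalIntegrable (by fun_prop) _ _), intervalIntegral.integral_mul_const,
          intervalIntegral.integral_sub (Continuous.intervalIntegrable (by fun_prop) _ _) (by simp)]
        simp
    _ ≤ _ := by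
        apply intervalIntegral.integral_mono_on (by norm_num)
          (Continuous.intervalIntegrable (by fun_prop) _ _) (hcont.intervalIntegrable _ _)
        intro τ _
        exact hlow τ

lemma chord_point {n : ℕ} (hn : 2 ≤ n) {f : Eucl n → ℝ} (h0 : ∀ x, 0 ≤ f x)
    (hlc : IsLogConcave f) (hfm : Measurable f) (o u x : Eucl n) (ho : 0 < f o) (hou : 0 < f (o + u)) :
    hSup f u x * ENNReal.ofReal (Real.sqrt (f o ^ (1 / ((n:ℝ) - 1)) * f (o + u) ^ (1 / ((n:ℝ) - 1))) / n)
      ≤ ∫⁻ τ : ℝ, ENNReal.ofReal (f ((1 - 1 / (n:ℝ)) • x + (1 / (n:ℝ)) • o + τ • u)) ^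
        ((n:ℝ) / ((n:ℝ) - 1)) := by
  have hn2 : (2:ℝ) ≤ n := by exact_mod_cast hn
  have hn1 : (0:ℝ) < (n:ℝ) - 1 := by linarith
  have hn0 : (0:ℝ) < n := by linarith
  set a := f o ^ (1 / ((n:ℝ) - 1)) with ha
  set b := f (o + u) ^ (1 / ((n:ℝ) - 1)) with hb
  have ha0 : 0 < a := Real.rpow_pos_of_pos ho _
  have hb0 : 0 < b := Real.rpow_pos_of_pos hou _
  set q : ℝ := (n:ℝ) / ((n:ℝ) - 1) with hq
  have hq0 : 0 ≤ q := by positivity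
  rw [hSup, ENNReal.iSup_mul]
  refine iSup_le fun s => ?_
  set y := (1 - 1 / (n:ℝ)) • x + (1 / (n:ℝ)) • o with hy
  set Φ : ℝ → ENNReal := fun τ => ENNReal.ofReal (f (y + τ • u)) ^ q with hΦ
  have hΦm : Measurable Φ := by
    have : Measurable fun τ : ℝ => f (y + τ • u) := hfm.comp (by fun_prop)
    fun_prop
  -- change of variables
  have hcv : ∫⁻ τ, Φ τ = ENNReal.ofReal (1 / (n:ℝ)) *
      ∫⁻ τ, Φ ((1 / (n:ℝ)) * τ + (1 - 1 / (n:ℝ)) * s) := by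
    have h1 := Real.map_volume_mul_left (a := 1 / (n:ℝ)) (by positivity)
    have hm : Measurable fun τ => Φ (τ + (1 - 1 / (n:ℝ)) * s) := hΦm.comp (by fun_prop)
    have h2 : ∫⁻ τ, Φ ((1 / (n:ℝ)) * τ + (1 - 1 / (n:ℝ)) * s) =
        ENNReal.ofReal |(1 / (n:ℝ))⁻¹| * ∫⁻ τ, Φ (τ + (1 - 1 / (n:ℝ)) * s) := by
      rw [← smul_eq_mul (ENNReal.ofReal _), ← lintegral_smul_measure, ← h1, lintegral_map hm (by fun_prop)]
    rw [h2, lintegral_add_right_eq_self, ← mul_assoc, ← ENNReal.ofReal_mul (by positivity),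
      abs_of_pos (by positivity), mul_inv_cancel₀ (by positivity)]
    simp
  have hpt : ∀ τ ∈ Set.Ioc (0:ℝ) 1, ENNReal.ofReal (f (x + s • u)) * ENNReal.ofReal (a ^ (1 - τ) * b ^ τ) ≤
      Φ ((1 / (n:ℝ)) * τ + (1 - 1 / (n:ℝ)) * s) := by
    intro τ hτ
    have hg : a ^ (1 - τ) * b ^ τ ≤ f (o + τ • u) ^ (1 / ((n:ℝ) - 1)) := by
      rcases eq_or_lt_of_le hτ.2 with h | h
      · subst h; simp [hb]
      · have h3 := hlc (o + u) o τ hτ.1 h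
        have e : τ • (o + u) + (1 - τ) • o = o + τ • u := by module
        rw [e] at h3
        have h4 := Real.rpow_le_rpow (by have := h0 o; have := h0 (o+u); positivity) h3
          (show 0 ≤ 1 / ((n:ℝ) - 1) by positivity)
        rw [Real.mul_rpow (Real.rpow_nonneg (h0 _) _) (Real.rpow_nonneg (h0 _) _),
          ← Real.rpow_mul (h0 _), ← Real.rpow_mul (h0 _), mul_comm τ, mul_comm (1 - τ),
          Real.rpow_mul (h0 _), Real.rpow_mul (h0 _)] at h4
        rw [mul_comm]
        exact h4
    have hlam : 0 < 1 / (n:ℝ) := by positivity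
    have hlam1 : 1 / (n:ℝ) < 1 := by rw [div_lt_one hn0]; linarith
    have h5 := hlc (o + τ • u) (x + s • u) (1 / (n:ℝ)) hlam hlam1
    have e2 : (1 / (n:ℝ)) • (o + τ • u) + (1 - 1 / (n:ℝ)) • (x + s • u) =
        y + ((1 / (n:ℝ)) * τ + (1 - 1 / (n:ℝ)) * s) • u := by rw [hy]; module
    rw [e2] at h5
    have h6 := Real.rpow_le_rpow (mul_nonneg (Real.rpow_nonneg (h0 _) _) (Real.rpow_nonneg (h0 _) _)) h5 hq0
    rw [Real.mul_rpow (Real.rpow_nonneg (h0 _) _) (Real.rpow_nonneg (h0 _) _),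
      ← Real.rpow_mul (h0 _), ← Real.rpow_mul (h0 _)] at h6
    have e3 : 1 / (n:ℝ) * q = 1 / ((n:ℝ) - 1) := by rw [hq]; field_simp
    have e4 : (1 - 1 / (n:ℝ)) * q = 1 := by rw [hq]; field_simp
    rw [e3, e4, Real.rpow_one] at h6
    rw [← ENNReal.ofReal_mul (h0 _), hΦ]
    simp only
    rw [ENNReal.ofReal_rpow_of_nonneg (h0 _) hq0]
    apply ENNReal.ofReal_le_ofReal
    refine le_trans ?_ h6
    rw [mul_comm]
    exact mul_le_mul_of_nonneg_right hg (h0 _)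
  rw [hcv, div_eq_mul_one_div, ENNReal.ofReal_mul (Real.sqrt_nonneg _), ← mul_assoc,
    mul_comm _ (ENNReal.ofReal (1 / (n:ℝ)))]
  gcongr
  calc ENNReal.ofReal (f (x + s • u)) * ENNReal.ofReal (Real.sqrt (a * b)) ≤
      ENNReal.ofReal (f (x + s • u)) * ∫⁻ τ in Set.Ioc (0:ℝ) 1, ENNReal.ofReal (a ^ (1 - τ) * b ^ τ) := by
        gcongr; exact mean_exp ha0 hb0
    _ = ∫⁻ τ in Set.Ioc (0:ℝ) 1, ENNReal.ofReal (f (x + s • u)) * ENNReal.ofReal (a ^ (1 - τ) * b ^ τ) := by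
        rw [lintegral_const_mul]
        fun_prop
    _ ≤ ∫⁻ τ in Set.Ioc (0:ℝ) 1, Φ ((1 / (n:ℝ)) * τ + (1 - 1 / (n:ℝ)) * s) :=
        setLIntegral_mono' measurableSet_Ioc hpt
    _ ≤ _ := setLIntegral_le_lintegral _ _

lemma slab_fubini {n : ℕ} (φ : Eucl n → ENNReal) (hφ : Measurable φ) (r : ℝ) (hr : 0 < r)
    (v u : Eucl n) (hu : u ≠ 0) :
    ∫⁻ x in slab_s1 u, ∫⁻ τ : ℝ, φ (r • x + v + τ • u) =
      ENNReal.ofReal (r * r⁻¹ ^ n) * ∫⁻ x, φ x := by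
  have hpos : 0 < ‖u‖ ^ 2 := by have := norm_pos_iff.2 hu; positivity
  have hsm := measurableSet_slab u
  have step1 : ∫⁻ x in slab_s1 u, ∫⁻ τ : ℝ, φ (r • x + v + τ • u) =
      ∫⁻ x, ∫⁻ τ : ℝ, (slab_s1 u).indicator (fun _ => 1) x * φ (r • x + v + τ • u) := by
    rw [← lintegral_indicator hsm]
    refine lintegral_congr fun x => ?_
    by_cases h : x ∈ slab_s1 u <;> simp [h]
  have m1 : Measurable ((slab_s1 u).indicator (fun _ => (1:ENNReal))) := measurable_const.indicator hsm
  rw [step1, lintegral_lintegral_swap]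
  swap
  · apply Measurable.aemeasurable
    apply Measurable.mul
    · exact m1.comp measurable_fst
    · exact hφ.comp (by fun_prop)
  have step2 : ∀ τ : ℝ, ∫⁻ x, (slab_s1 u).indicator (fun _ => 1) x * φ (r • x + v + τ • u) =
      ∫⁻ x, (slab_s1 u).indicator (fun _ => 1) (x + (-(τ / r)) • u) * φ (r • x + v) := by
    intro τ
    rw [← lintegral_add_right_eq_self _ ((-(τ / r)) • u)]
    refine lintegral_congr fun x => ?_
    congr 2
    rw [smul_add, smul_smul]
    have : r * -(τ / r) = -τ := by field_simp
    rw [this, neg_smul]; abel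
  simp_rw [step2]
  rw [lintegral_lintegral_swap]
  swap
  · apply Measurable.aemeasurable
    apply Measurable.mul
    · exact m1.comp (by fun_prop)
    · exact hφ.comp (by fun_prop)
  have step3 : ∀ x : Eucl n, ∫⁻ τ : ℝ, (slab_s1 u).indicator (fun _ => 1) (x + (-(τ / r)) • u) * φ (r • x + v)
      = ENNReal.ofReal r * φ (r • x + v) := by
    intro x
    have m2 : Measurable fun τ : ℝ => (slab_s1 u).indicator (fun _ => (1:ENNReal)) (x + (-(τ / r)) • u) :=
      m1.comp (by fun_prop)
    rw [lintegral_mul_const _ m2]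
    congr 1
    set c := inner ℝ u x / ‖u‖ ^ 2 with hc
    have hset : ∀ τ : ℝ, (slab_s1 u).indicator (fun _ => (1:ENNReal)) (x + (-(τ / r)) • u) =
        (Set.Ioc (r * (c - 1)) (r * c)).indicator (fun _ => 1) τ := by
      intro τ
      have hmem : x + (-(τ / r)) • u ∈ slab_s1 u ↔ τ ∈ Set.Ioc (r * (c - 1)) (r * c) := by
        have : inner ℝ u (x + (-(τ / r)) • u) = (c - τ / r) * ‖u‖ ^ 2 := by
          rw [inner_add_right, inner_smul_right, real_inner_self_eq_norm_sq, hc]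
          field_simp
          ring
        simp only [slab_s1, Set.mem_ofPred_eq, this, Set.mem_Ioc]
        rw [mul_nonneg_iff_of_pos_right hpos, mul_lt_iff_lt_one_left hpos, sub_nonneg,
          div_le_iff₀ hr, and_comm, sub_lt_comm, lt_div_iff₀ hr, mul_comm c r, mul_comm (c-1) r]
      by_cases h : τ ∈ Set.Ioc (r * (c - 1)) (r * c)
      · rw [Set.indicator_of_mem h, Set.indicator_of_mem (hmem.2 h)]
      · rw [Set.indicator_of_notMem h, Set.indicator_of_notMem (fun h' => h (hmem.1 h'))]
    simp_rw [hset]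
    rw [lintegral_indicator measurableSet_Ioc]
    simp
    congr 1; ring
  simp_rw [step3]
  have m3 : Measurable fun x => φ (r • x + v) := hφ.comp (by fun_prop)
  rw [lintegral_const_mul _ m3, lintegral_affine φ hφ r hr, ← mul_assoc,
    ← ENNReal.ofReal_mul hr.le]

lemma chord_bound {n : ℕ} (hn : 2 ≤ n) {f : Eucl n → ℝ} (h0 : ∀ x, 0 ≤ f x)
    (hlc : IsLogConcave f) (husc : UpperSemicontinuous f) (o u : Eucl n) (hu : u ≠ 0)
    (ho : 0 < f o) (hou : 0 < f (o + u)) :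
    slabInt f u * ENNReal.ofReal (Real.sqrt (f o ^ (1 / ((n:ℝ) - 1)) * f (o + u) ^ (1 / ((n:ℝ) - 1))) / n)
      ≤ ENNReal.ofReal ((1 - 1 / (n:ℝ)) * (1 - 1 / (n:ℝ))⁻¹ ^ n) *
        ∫⁻ x, ENNReal.ofReal (f x) ^ ((n:ℝ) / ((n:ℝ) - 1)) := by
  have hfm := husc.measurable
  have hn2 : (2:ℝ) ≤ n := by exact_mod_cast hn
  have hr : 0 < 1 - 1 / (n:ℝ) := by
    rw [sub_pos, div_lt_one (by linarith)]; linarith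
  rw [slabInt, ← lintegral_mul_const _ (measurable_hSup h0 husc u),
    ← slab_fubini _ (by fun_prop) _ hr ((1 / (n:ℝ)) • o) u hu]
  exact lintegral_mono fun x => chord_point hn h0 hlc hfm o u x ho hou


def mom {n : ℕ} (K : Set (Eucl n)) : Matrix (Fin n) (Fin n) ℝ :=
  Matrix.of fun a b => ∫ x in K, x a * x b

lemma mom_integrable {n : ℕ} {K : Set (Eucl n)} (hK : IsCompact K) (a b : Fin n) :
    Integrable (fun x : Eucl n => x a * x b) (volume.restrict K) := by
  have : ContinuousOn (fun x : Eucl n => x a * x b) K := by fun_prop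
  exact this.integrableOn_compact hK

lemma int_det_sq {n : ℕ} {K : Set (Eucl n)} (hK : IsCompact K) :
    Integrable (fun X : Fin n → Eucl n => (mat X).det ^ 2) (Measure.pi fun _ => volume.restrict K) ∧
    ∫ X : Fin n → Eucl n, (mat X).det ^ 2 ∂(Measure.pi fun _ => volume.restrict K)
      = (n.factorial : ℝ) * (mom K).det := by
  have hexp : ∀ X : Fin n → Eucl n, (mat X).det ^ 2 =
      ∑ σ : Equiv.Perm (Fin n), ∑ τ : Equiv.Perm (Fin n),
        (((Equiv.Perm.sign σ : ℤ) : ℝ) * ((Equiv.Perm.sign τ : ℤ) : ℝ)) * ∏ i, (X i (σ i) * X i (τ i)) := by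
    intro X
    rw [sq, Matrix.det_apply', Finset.sum_mul_sum]
    refine Finset.sum_congr rfl fun σ _ => Finset.sum_congr rfl fun τ _ => ?_
    rw [Finset.prod_mul_distrib]
    simp only [mat, Matrix.of_apply]
    ring
  have hintg : ∀ σ τ : Equiv.Perm (Fin n), Integrable (fun X : Fin n → Eucl n =>
      (((Equiv.Perm.sign σ : ℤ) : ℝ) * ((Equiv.Perm.sign τ : ℤ) : ℝ)) * ∏ i, (X i (σ i) * X i (τ i)))
      (Measure.pi fun _ => volume.restrict K) := by
    intro σ τ
    haveI : IsFiniteMeasure (volume.restrict K : Measure (Eucl n)) :=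
      ⟨by simpa using hK.measure_lt_top⟩
    exact (Integrable.fintype_prod (f := fun i (x : Eucl n) => x (σ i) * x (τ i))
      (fun i => mom_integrable hK _ _)).const_mul _
  have hval : ∀ σ τ : Equiv.Perm (Fin n), ∫ X : Fin n → Eucl n,
      (((Equiv.Perm.sign σ : ℤ) : ℝ) * ((Equiv.Perm.sign τ : ℤ) : ℝ)) * ∏ i, (X i (σ i) * X i (τ i))
      ∂(Measure.pi fun _ => volume.restrict K) =
      (((Equiv.Perm.sign σ : ℤ) : ℝ) * ((Equiv.Perm.sign τ : ℤ) : ℝ)) * ∏ i, mom K (σ i) (τ i) := by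
    intro σ τ
    haveI : IsFiniteMeasure (volume.restrict K : Measure (Eucl n)) :=
      ⟨by simpa using hK.measure_lt_top⟩
    rw [integral_const_mul]
    congr 1
    exact integral_fintype_prod_eq_prod (fun i (x : Eucl n) => x (σ i) * x (τ i))
  simp_rw [hexp]
  refine ⟨integrable_finset_sum _ fun σ _ => integrable_finset_sum _ fun τ _ => hintg σ τ, ?_⟩
  rw [integral_finset_sum _ fun σ _ => integrable_finset_sum _ fun τ _ => hintg σ τ]
  have : ∀ σ : Equiv.Perm (Fin n), ∫ X : Fin n → Eucl n, ∑ τ : Equiv.Perm (Fin n),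
      (((Equiv.Perm.sign σ : ℤ) : ℝ) * ((Equiv.Perm.sign τ : ℤ) : ℝ)) * ∏ i, (X i (σ i) * X i (τ i))
      ∂(Measure.pi fun _ => volume.restrict K) = (mom K).det := by
    intro σ
    rw [integral_finset_sum _ fun τ _ => hintg σ τ]
    simp_rw [hval, mul_assoc]
    rw [← Finset.mul_sum]
    have h2 := Matrix.det_permute σ (mom K)
    rw [← Matrix.det_transpose, Matrix.det_apply'] at h2
    simp only [Matrix.transpose_apply, Matrix.submatrix_apply, id] at h2
    rw [h2, ← mul_assoc]
    norm_cast
    simp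
  simp_rw [this]
  simp [Fintype.card_perm]

lemma quad_mom {n : ℕ} {K : Set (Eucl n)} (hK : IsCompact K) (v : Fin n → ℝ) :
    ∫ x in K, (∑ a, v a * x a) ^ 2 = ∑ a, ∑ b, v a * v b * mom K a b := by
  have : ∀ x : Eucl n, (∑ a, v a * x a) ^ 2 = ∑ a, ∑ b, v a * v b * (x a * x b) := by
    intro x
    rw [sq, Finset.sum_mul_sum]
    refine Finset.sum_congr rfl fun σ _ => Finset.sum_congr rfl fun τ _ => by ring
  simp_rw [this]
  rw [integral_finset_sum _ fun a _ => integrable_finset_sum _ fun b _ =>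
    (mom_integrable hK a b).const_mul _]
  refine Finset.sum_congr rfl fun a _ => ?_
  rw [integral_finset_sum _ fun b _ => (mom_integrable hK a b).const_mul _]
  refine Finset.sum_congr rfl fun b _ => ?_
  rw [integral_const_mul]
  rfl

lemma mom_posDef {n : ℕ} {K : Set (Eucl n)} (hK : IsCompact K) (hV : 0 < volume K) :
    (mom K).PosDef := by
  refine Matrix.PosDef.of_dotProduct_mulVec_pos ?_ ?_
  · ext a b
    simp [mom, mul_comm]
  · intro v hv
    have h1 : star v ⬝ᵥ (mom K).mulVec v = ∫ x in K, (∑ a, v a * x a) ^ 2 := by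
      rw [quad_mom hK]
      simp only [dotProduct, Matrix.mulVec, Finset.mul_sum]
      refine Finset.sum_congr rfl fun a _ => Finset.sum_congr rfl fun b _ => ?_
      simp
      ring
    rw [h1]
    have hintg : IntegrableOn (fun x : Eucl n => (∑ a, v a * x a) ^ 2) K := by
      have : ContinuousOn (fun x : Eucl n => (∑ a, v a * x a) ^ 2) K := by fun_prop
      exact this.integrableOn_compact hK
    rw [setIntegral_pos_iff_support_of_nonneg_ae (by filter_upwards with x; positivity) hintg]
    let L : Eucl n →ₗ[ℝ] ℝ := ∑ a, v a • (EuclideanSpace.proj a : Eucl n →L[ℝ] ℝ).toLinearMap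
    have hL : ∀ x, L x = ∑ a, v a * x a := by intro x; simp [L]
    have hker : volume ((LinearMap.ker L : Submodule ℝ (Eucl n)) : Set (Eucl n)) = 0 := by
      refine Measure.addHaar_submodule _ _ ?_
      intro htop
      apply hv
      ext a
      have : EuclideanSpace.single a (1:ℝ) ∈ LinearMap.ker L := by rw [htop]; trivial
      rw [LinearMap.mem_ker, hL] at this
      simpa using this
    have : K ⊆ (Function.support (fun x : Eucl n => (∑ a, v a * x a) ^ 2) ∩ K) ∪
        ((LinearMap.ker L : Submodule ℝ (Eucl n)) : Set (Eucl n)) := by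
      intro x hx
      by_cases h : L x = 0
      · right; exact h
      · left
        refine ⟨?_, hx⟩
        rw [hL] at h
        simpa using h
    have h3 := (measure_mono this).trans (measure_union_le (μ := volume) _ _)
    rw [hker, add_zero] at h3
    exact hV.trans_le h3

open scoped MatrixOrder Matrix.Norms.L2Operator in
lemma chol {n : ℕ} {A : Matrix (Fin n) (Fin n) ℝ} (hA : A.PosSemidef) :
    ∃ B : Matrix (Fin n) (Fin n) ℝ, A = B.transpose * B := by
  obtain ⟨B, hB⟩ := CStarAlgebra.nonneg_iff_eq_star_mul_self.mp hA.nonneg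
  refine ⟨B, ?_⟩
  rw [hB]
  rfl


lemma lint_gauss {n : ℕ} {b : ℝ} (hb : 0 < b) :
    ∫⁻ t : Fin n → ℝ, ENNReal.ofReal (Real.exp (-b * ∑ a, t a ^ 2)) =
      ENNReal.ofReal ((Real.pi / b) ^ ((n:ℝ) / 2)) := by
  have h1 := GaussianFourier.integral_rexp_neg_mul_sq_norm (V := Eucl n) hb
  have hpos : (0:ℝ) < (Real.pi / b) ^ ((Module.finrank ℝ (Eucl n) : ℝ) / 2) := by
    have := Real.pi_pos
    positivity
  have hintg : Integrable (fun v : Eucl n => Real.exp (-b * ‖v‖ ^ 2)) := by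
    by_contra h
    rw [integral_undef h] at h1
    linarith
  have h2 := ofReal_integral_eq_lintegral_ofReal hintg (by filter_upwards with x; positivity)
  rw [h1, ← (PiLp.volume_preserving_toLp (Fin n)).lintegral_comp (by fun_prop)] at h2
  rw [finrank_euclideanSpace, Fintype.card_fin] at h2
  rw [h2]
  refine lintegral_congr fun t => ?_
  rw [EuclideanSpace.norm_sq_eq]
  simp

lemma det_mom {n : ℕ} {K : Set (Eucl n)} (hK : IsCompact K) (hV : 0 < volume K) :
    (volume K).toReal ^ (n + 2) ≤ (mom K).det * (2 * Real.pi * Real.exp 1) ^ n := by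
  have hpd := mom_posDef hK hV
  have hdet := hpd.det_pos
  obtain ⟨C, hC⟩ := chol hpd.posSemidef
  set V := (volume K).toReal with hVdef
  have hVpos : 0 < V := ENNReal.toReal_pos hV.ne' hK.measure_lt_top.ne
  have hd2 : (mom K).det = C.det ^ 2 := by
    rw [hC, Matrix.det_mul, Matrix.det_transpose, sq]
  have hd : C.transpose.det ≠ 0 := by
    rw [Matrix.det_transpose]
    intro h
    rw [hd2, h] at hdet
    simp at hdet
  set U : Fin n → Eucl n := fun j => WithLp.toLp 2 (C j) with hU
  have hmat : mat U = C.transpose := by ext i j; simp [mat, U]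
  set B := (C.transpose)⁻¹ with hB
  have hBC : B * C.transpose = 1 := Matrix.nonsing_inv_mul _ (by simpa using hd)
  have hBMB : B * mom K * B.transpose = 1 := by
    have : C * B.transpose = 1 := by
      have := congrArg Matrix.transpose hBC
      simpa using this
    rw [hC, ← Matrix.mul_assoc, hBC, Matrix.one_mul, this]
  let Q : Eucl n → ℝ := fun x => ∑ a, (∑ b, B a b * x b) ^ 2
  have hQc : Continuous Q := by fun_prop
  have hQcomb : ∀ t, Q (comb U t) = ∑ a, t a ^ 2 := by
    intro t
    refine Finset.sum_congr rfl fun a _ => ?_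
    congr 1
    have : B.mulVec (C.transpose.mulVec t) = t := by
      rw [Matrix.mulVec_mulVec, hBC, Matrix.one_mulVec]
    have h2 := congrFun this a
    rw [comb_eq, hmat]
    simpa [Matrix.mulVec, dotProduct] using h2
  have hQi : IntegrableOn Q K := hQc.continuousOn.integrableOn_compact hK
  have hQint : ∫ x in K, Q x = n := by
    rw [integral_finsetSum]
    · simp_rw [quad_mom hK]
      have : ∀ a, ∑ b, ∑ c, B a b * B a c * mom K b c = (B * mom K * B.transpose) a a := by
        intro a
        simp only [Matrix.mul_apply, Finset.sum_mul, Matrix.transpose_apply]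
        rw [Finset.sum_comm]
        refine Finset.sum_congr rfl fun a _ => Finset.sum_congr rfl fun b _ => ?_
        ring
      simp_rw [this, hBMB]
      simp
    · intro a _
      have : Continuous fun x : Eucl n => (∑ b, B a b * x b) ^ 2 := by fun_prop
      exact this.continuousOn.integrableOn_compact hK
  have hE : Continuous fun x : Eucl n => Real.exp (-(V/2) * Q x) := by fun_prop
  have hEi : IntegrableOn (fun x : Eucl n => Real.exp (-(V/2) * Q x)) K :=
    hE.continuousOn.integrableOn_compact hK
  have hone : IntegrableOn (fun x : Eucl n => (1 + (n:ℝ)/2)) K :=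
    continuous_const.continuousOn.integrableOn_compact hK
  have hlow : Real.exp (-(n/2)) * V ≤ ∫ x in K, Real.exp (-(V/2) * Q x) := by
    have h1 : ∫ x in K, Real.exp (-(n/2)) * ((1 + (n:ℝ)/2) - V / 2 * Q x) ≤
        ∫ x in K, Real.exp (-(V/2) * Q x) := by
      refine integral_mono ((hone.sub (hQi.const_mul _)).const_mul _) hEi fun x => ?_
      have := Real.add_one_le_exp (-(V/2) * Q x + n/2)
      calc _ ≤ Real.exp (-(n/2)) * Real.exp (-(V/2) * Q x + n/2) := by
            apply mul_le_mul_of_nonneg_left _ (Real.exp_pos _).le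
            linarith
        _ = _ := by rw [← Real.exp_add]; congr 1; ring
    rw [integral_const_mul, integral_sub hone (hQi.const_mul _), integral_const_mul, hQint,
      setIntegral_const] at h1
    refine le_trans (le_of_eq ?_) h1
    rw [measureReal_def, ← hVdef, smul_eq_mul]
    ring
  have hup : ENNReal.ofReal (∫ x in K, Real.exp (-(V/2) * Q x)) ≤
      ENNReal.ofReal (|C.det| * (Real.pi / (V/2)) ^ ((n:ℝ) / 2)) := by
    rw [ofReal_integral_eq_lintegral_ofReal hEi (by filter_upwards with x; positivity)]
    refine (setLIntegral_le_lintegral _ _).trans ?_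
    rw [lintegral_comb U (by rwa [hmat]) _ (by fun_prop)]
    simp_rw [hQcomb]
    rw [lint_gauss (by positivity), hmat, Matrix.det_transpose, ENNReal.ofReal_mul (abs_nonneg _)]
  have hpi := Real.pi_pos
  rw [ENNReal.ofReal_le_ofReal_iff (by positivity)] at hup
  have hfin := hlow.trans hup
  have hsq := pow_le_pow_left₀ (by positivity) hfin 2
  rw [mul_pow, mul_pow, sq_abs, ← hd2, ← Real.rpow_natCast ((Real.pi / (V/2)) ^ ((n:ℝ) / 2)) 2,
    ← Real.rpow_mul (by positivity), ← Real.exp_nat_mul] at hsq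
  have e1 : (n:ℝ)/2 * ((2:ℕ):ℝ) = (n:ℝ) := by push_cast; ring
  have e2 : ((2:ℕ):ℝ) * (-((n:ℝ)/2)) = -(n:ℝ) := by push_cast; ring
  rw [e1, e2, Real.rpow_natCast] at hsq
  have e3 : Real.exp (-(n:ℝ)) * Real.exp 1 ^ n = 1 := by
    rw [← Real.exp_nat_mul, ← Real.exp_add]; simp
  calc V ^ (n+2) = (Real.exp (-(n:ℝ)) * V ^ 2) * (Real.exp 1 ^ n * V ^ n) := by
        rw [show (Real.exp (-(n:ℝ)) * V ^ 2) * (Real.exp 1 ^ n * V ^ n) =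
          (Real.exp (-(n:ℝ)) * Real.exp 1 ^ n) * V ^ (n+2) by ring, e3, one_mul]
    _ ≤ ((mom K).det * (Real.pi / (V/2)) ^ n) * (Real.exp 1 ^ n * V ^ n) := by gcongr
    _ = (mom K).det * (Real.pi / (V/2) * Real.exp 1 * V) ^ n := by
        rw [mul_pow, mul_pow]; ring
    _ = _ := by
        congr 2
        field_simp

lemma exists_det {n : ℕ} {K : Set (Eucl n)} (hK : IsCompact K) (hV : 0 < volume K) :
    ∃ x : Fin n → Eucl n, (∀ i, x i ∈ K) ∧
      (n.factorial : ℝ) * (volume K).toReal ^ 2 ≤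
        (mat x).det ^ 2 * (2 * Real.pi * Real.exp 1) ^ n := by
  obtain ⟨hI, hv⟩ := int_det_sq hK
  have hm := det_mom hK hV
  set V := (volume K).toReal with hVdef
  have hVpos : 0 < V := ENNReal.toReal_pos hV.ne' hK.measure_lt_top.ne
  have hfin : IsFiniteMeasure (volume.restrict K : Measure (Eucl n)) :=
      ⟨by simpa using hK.measure_lt_top⟩
  have hmass : (Measure.pi fun _ : Fin n => (volume.restrict K : Measure (Eucl n))) Set.univ
      = (volume K) ^ n := by
    rw [Measure.pi_univ]; simp
  have hpi := Real.pi_pos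
  set G : ℝ := (2 * Real.pi * Real.exp 1) ^ n with hG
  have hGpos : 0 < G := by positivity
  by_contra! hcon
  have hae : ∀ᵐ X ∂(Measure.pi fun _ : Fin n => (volume.restrict K : Measure (Eucl n))),
      ∀ i, X i ∈ K := by
    rw [ae_all_iff]
    intro i
    have : ∀ᵐ x ∂(volume.restrict K : Measure (Eucl n)), x ∈ K :=
      ae_restrict_mem hK.measurableSet
    exact (Measure.quasiMeasurePreserving_eval (fun _ : Fin n => (volume.restrict K : Measure (Eucl n))) i).ae this
  have hlt : ∫ X : Fin n → Eucl n, (mat X).det ^ 2 ∂(Measure.pi fun _ => volume.restrict K) <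
      ∫ X : Fin n → Eucl n, (n.factorial : ℝ) * V ^ 2 / G ∂(Measure.pi fun _ => volume.restrict K) := by
    rw [← sub_pos, ← integral_sub (integrable_const _) hI]
    refine (integral_pos_iff_support_of_nonneg_ae
      (f := fun X => (n.factorial : ℝ) * V ^ 2 / G - (mat X).det ^ 2) (by
        filter_upwards [hae] with X hX
        show (0:ℝ) ≤ _ - _
        rw [sub_nonneg, le_div_iff₀ hGpos]
        exact (hcon X hX).le) ((integrable_const _).sub hI)).mpr ?_
    have : (Measure.pi fun _ : Fin n => (volume.restrict K : Measure (Eucl n)))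
        (Function.support fun X => (n.factorial : ℝ) * V ^ 2 / G - (mat X).det ^ 2)
          = (volume K) ^ n := by
      rw [← hmass]
      apply measure_congr
      rw [Filter.eventuallyEq_univ]
      filter_upwards [hae] with X hX
      show _ - _ ≠ 0
      refine (sub_pos.mpr ?_).ne'
      rw [lt_div_iff₀ hGpos]
      exact (hcon X hX)
    rw [this]
    exact pos_iff_ne_zero.mpr (pow_ne_zero _ hV.ne')
  rw [hv, integral_const, measureReal_def, hmass, ENNReal.toReal_pow, ← hVdef, smul_eq_mul] at hlt
  have hf : (0:ℝ) < n.factorial := by positivity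
  have : (mom K).det * G < V ^ (n+2) := by
    have h1 := mul_lt_mul_of_pos_right hlt hGpos
    rw [show V ^ n * ((n.factorial : ℝ) * V ^ 2 / G) * G = (n.factorial : ℝ) * V ^ (n+2) by
      field_simp; ring] at h1
    rw [mul_assoc] at h1
    exact lt_of_mul_lt_mul_left h1 hf.le
  linarith

lemma exists_det_sub {n : ℕ} {K : Set (Eucl n)} (hK : IsCompact K) (hV : 0 < volume K)
    (o : Eucl n) :
    ∃ x : Fin n → Eucl n, (∀ i, x i ∈ K) ∧
      (n.factorial : ℝ) * (volume K).toReal ^ 2 ≤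
        (mat fun i => x i - o).det ^ 2 * (2 * Real.pi * Real.exp 1) ^ n := by
  have hK' : IsCompact ((fun x => x + o) ⁻¹' K) :=
    (Homeomorph.addRight o).isCompact_preimage.mpr hK
  have hm : volume ((fun x => x + o) ⁻¹' K) = volume K := measure_preimage_add_right _ _ _
  obtain ⟨y, hy, h⟩ := exists_det hK' (by rwa [hm])
  refine ⟨fun i => y i + o, hy, ?_⟩
  rw [hm] at h
  simpa using h


lemma level_choice {n : ℕ} {F : Eucl n → ℝ} (h0 : ∀ x, 0 ≤ F x) {C : ℝ} (hC : ∀ x, F x ≤ C)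
    (hcl : ∀ s, 0 < s → IsClosed {x | s ≤ F x}) (hI : Integrable F) (hpos : 0 < ∫ x, F x) :
    ∃ (o : Eucl n) (s : ℝ) (K : Set (Eucl n)), 0 < s ∧ 0 < F o ∧ IsCompact K ∧
      (∀ x ∈ K, s ≤ F x) ∧
      9 / 20 * (∫ x, F x) ≤ (volume K).toReal * Real.sqrt (F o * s) := by
  set Z := ∫ x, F x with hZ
  by_contra! hcon
  have hbdd : BddAbove (Set.range F) := ⟨C, by rintro _ ⟨x, rfl⟩; exact hC x⟩
  set B := ⨆ x, F x with hB
  have hFB : ∀ x, F x ≤ B := fun x => le_ciSup hbdd x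
  have hBpos : 0 < B := by
    by_contra h
    have : ∀ x, F x = 0 := fun x => le_antisymm ((hFB x).trans (not_lt.mp h)) (h0 x)
    rw [hZ] at hpos
    simp [this] at hpos
  obtain ⟨o, ho⟩ : ∃ o, 9 / 10 * B < F o := exists_lt_of_lt_ciSup (by linarith)
  have hop : 0 < F o := lt_trans (by linarith) ho
  have hlev : ∀ s, 0 < s → volume {x | s ≤ F x} ≤
      ENNReal.ofReal (9 / 20 * Z / Real.sqrt (F o) * s ^ (-(1/2) : ℝ)) := by
    intro s hs
    have hU : {x | s ≤ F x} = ⋃ N : ℕ, {x | s ≤ F x} ∩ Metric.closedBall 0 (N:ℝ) := by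
      rw [← Set.inter_iUnion, Metric.iUnion_closedBall_nat, Set.inter_univ]
    have hmono : Monotone fun N : ℕ => {x | s ≤ F x} ∩ Metric.closedBall 0 (N:ℝ) := by
      intro a b hab
      apply Set.inter_subset_inter_right
      apply Metric.closedBall_subset_closedBall
      exact_mod_cast hab
    rw [hU, hmono.measure_iUnion]
    refine iSup_le fun N => ?_
    have hK : IsCompact ({x | s ≤ F x} ∩ Metric.closedBall (0 : Eucl n) (N:ℝ)) :=
      (isCompact_closedBall _ _).inter_left (hcl s hs)
    have h1 := hcon o s _ hs hop hK (fun x hx => hx.1)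
    rw [ENNReal.le_ofReal_iff_toReal_le hK.measure_lt_top.ne (by positivity)]
    rw [Real.sqrt_mul hop.le] at h1
    have hso : 0 < Real.sqrt (F o) := Real.sqrt_pos.mpr hop
    have hss : 0 < Real.sqrt s := Real.sqrt_pos.mpr hs
    rw [Real.rpow_neg hs.le, ← Real.sqrt_eq_rpow, ← div_eq_mul_inv, div_div,
      le_div_iff₀ (by positivity)]
    exact h1.le
  have hlc := lintegral_eq_lintegral_meas_le volume (f := F) (by filter_upwards with x; exact h0 x)
    hI.aemeasurable
  rw [← ofReal_integral_eq_lintegral_ofReal hI (by filter_upwards with x; exact h0 x), ← hZ] at hlc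
  have hII : IntegrableOn (fun s : ℝ => 9 / 20 * Z / Real.sqrt (F o) * s ^ (-(1/2) : ℝ)) (Set.Ioc 0 B) := by
    have := (intervalIntegral.intervalIntegrable_rpow' (a := 0) (b := B) (r := -(1/2)) (by norm_num)).const_mul
      (9 / 20 * Z / Real.sqrt (F o))
    exact (intervalIntegrable_iff_integrableOn_Ioc_of_le hBpos.le).mp this
  have hle : ENNReal.ofReal Z ≤
      ∫⁻ t in Set.Ioc 0 B, ENNReal.ofReal (9 / 20 * Z / Real.sqrt (F o) * t ^ (-(1/2) : ℝ)) := by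
    rw [hlc, ← lintegral_indicator measurableSet_Ioi, ← lintegral_indicator measurableSet_Ioc]
    refine lintegral_mono fun t => ?_
    by_cases ht : 0 < t
    · by_cases htB : t ≤ B
      · rw [Set.indicator_of_mem (by exact ht), Set.indicator_of_mem (by exact ⟨ht, htB⟩)]
        exact hlev t ht
      · rw [Set.indicator_of_mem (by exact ht)]
        have : {a | t ≤ F a} = ∅ := by
          ext x
          simp only [Set.mem_setOf_eq, Set.mem_empty_iff_false, iff_false, not_le]
          exact (hFB x).trans_lt (not_le.mp htB)
        rw [this]
        simp
    · rw [Set.indicator_of_notMem (by exact ht)]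
      simp
  rw [← ofReal_integral_eq_lintegral_ofReal hII (by
    filter_upwards [ae_restrict_mem measurableSet_Ioc] with t ht
    have := ht.1
    show (0:ℝ) ≤ _
    positivity), ← intervalIntegral.integral_of_le hBpos.le,
    intervalIntegral.integral_const_mul, integral_rpow (Or.inl (by norm_num))] at hle
  have e1 : (-(1/2) + 1 : ℝ) = 1/2 := by norm_num
  have hso : 0 < Real.sqrt (F o) := Real.sqrt_pos.mpr hop
  rw [e1, Real.zero_rpow (by norm_num), ← Real.sqrt_eq_rpow, sub_zero,
    ENNReal.ofReal_le_ofReal_iff (by positivity), div_mul_eq_mul_div, le_div_iff₀ hso] at hle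
  have h3 : Real.sqrt (F o) ≤ 9 / 10 * Real.sqrt B := by
    have : Z * Real.sqrt (F o) ≤ Z * (9/10 * Real.sqrt B) := by linarith
    exact le_of_mul_le_mul_left this hpos
  have h4 := pow_le_pow_left₀ hso.le h3 2
  rw [mul_pow, Real.sq_sqrt hop.le, Real.sq_sqrt hBpos.le] at h4
  linarith

/-- finiteness of the slab integrals -/
lemma slabInt_smul {n : ℕ} {f : Eucl n → ℝ} (h0 : ∀ x, 0 ≤ f x) (hf : UpperSemicontinuous f)
    (u : Eucl n) (hu : u ≠ 0) {ε : ℝ} (hε : ε ≠ 0) (hfin : slabInt f (ε • u) ≠ ⊤) :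
    slabInt f u ≠ ⊤ := by
  obtain ⟨c, hc0, hct, hc⟩ := proj_slab u hu
  obtain ⟨d, hd0, hdt, hd⟩ := proj_slab (ε • u) (smul_ne_zero hε hu)
  rw [hd f h0 hf] at hfin
  rw [hc f h0 hf]
  have hspan : Submodule.span ℝ {ε • u} = Submodule.span ℝ {u} :=
    Submodule.span_singleton_smul_eq (IsUnit.mk0 _ hε) u
  have hS : hSup f (ε • u) = hSup f u := by
    funext x
    unfold hSup
    apply le_antisymm
    · refine iSup_le fun s => ?_
      rw [smul_smul]
      exact le_iSup (fun s : ℝ => ENNReal.ofReal (f (x + s • u))) (s * ε)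
    · refine iSup_le fun s => ?_
      have := le_iSup (fun s : ℝ => ENNReal.ofReal (f (x + s • ε • u))) (s / ε)
      rw [smul_smul, div_mul_cancel₀ _ hε] at this
      exact this
  rw [hspan, hS] at hfin
  have : (∫⁻ y : (Submodule.span ℝ {u})ᗮ, hSup f u y) ≠ ⊤ := by
    intro h
    rw [h, ENNReal.mul_top hd0] at hfin
    exact hfin rfl
  exact ENNReal.mul_ne_top hct this

lemma exists_interior {n : ℕ} {f : Eucl n → ℝ} (hf : MemQ0 f) :
    ∃ o : Eucl n, o ∈ interior {x | 0 < f x} := by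
  obtain ⟨h0, hlc, husc, hI, hpos⟩ := hf
  have hconv : Convex ℝ {x | 0 < f x} := by
    rw [convex_iff_forall_pos]
    intro x hx y hy a b ha hb hab
    have := hlc x y a ha (by linarith)
    rw [show 1 - a = b by linarith] at this
    exact lt_of_lt_of_le (mul_pos (Real.rpow_pos_of_pos hx _) (Real.rpow_pos_of_pos hy _)) this
  rw [← Set.Nonempty]
  rw [hconv.interior_nonempty_iff_affineSpan_eq_top]
  by_contra hne
  have h1 := Measure.addHaar_affineSubspace volume _ hne
  have h2 : volume {x | 0 < f x} = 0 := measure_mono_null (subset_affineSpan ℝ _) h1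
  have : 0 < volume (Function.support f) :=
    (integral_pos_iff_support_of_nonneg h0 hI).mp hpos
  have hs : Function.support f = {x | 0 < f x} := by
    ext x
    simp only [Function.mem_support, Set.mem_setOf_eq]
    exact ⟨fun h => lt_of_le_of_ne (h0 x) (Ne.symm h), fun h => h.ne'⟩
  rw [hs, h2] at this
  exact lt_irrefl _ this

lemma lint_rpow_fin {n : ℕ} (hn : 2 ≤ n) {f : Eucl n → ℝ} (hf : MemQ0 f) :
    Integrable (fun x => f x ^ ((n:ℝ) / ((n:ℝ) - 1))) := by
  obtain ⟨C, hC0, hC⟩ := bdd_of_memQ0 hf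
  obtain ⟨h0, hlc, husc, hI, hpos⟩ := hf
  have hn2 : (2:ℝ) ≤ n := by exact_mod_cast hn
  have hp : (n:ℝ) / ((n:ℝ) - 1) = 1 + 1 / ((n:ℝ) - 1) := by
    have : (n:ℝ) - 1 ≠ 0 := by linarith
    field_simp; ring
  have hm : Measurable fun x => f x ^ (1 / ((n:ℝ) - 1)) := husc.measurable.pow_const _
  have hq : 0 ≤ 1 / ((n:ℝ) - 1) := by apply div_nonneg <;> linarith
  have : Integrable (fun x => f x ^ (1 / ((n:ℝ) - 1)) * f x) := by
    refine hI.bdd_mul (c := C ^ (1 / ((n:ℝ) - 1))) hm.aestronglyMeasurable ?_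
    filter_upwards with x
    rw [Real.norm_of_nonneg (Real.rpow_nonneg (h0 x) _)]
    exact Real.rpow_le_rpow (h0 x) (hC x) hq
  refine this.congr ?_
  filter_upwards with x
  rw [hp]
  rcases (h0 x).eq_or_lt with h | h
  · rw [← h, mul_zero, Real.zero_rpow (ne_of_gt (by linarith))]
  · rw [Real.rpow_add h, Real.rpow_one, mul_comm]

lemma lint_eq {n : ℕ} (hn : 2 ≤ n) {f : Eucl n → ℝ} (hf : MemQ0 f) :
    ∫⁻ x, ENNReal.ofReal (f x) ^ ((n:ℝ) / ((n:ℝ) - 1)) =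
      ENNReal.ofReal (∫ x, f x ^ ((n:ℝ) / ((n:ℝ) - 1))) := by
  have hn2 : (2:ℝ) ≤ n := by exact_mod_cast hn
  rw [ofReal_integral_eq_lintegral_ofReal (lint_rpow_fin hn hf)
    (by filter_upwards with x; exact Real.rpow_nonneg (hf.1 x) _)]
  refine lintegral_congr fun x => ?_
  rw [ENNReal.ofReal_rpow_of_nonneg (hf.1 x)]
  apply div_nonneg <;> linarith

lemma slabInt_fin {n : ℕ} (hn : 2 ≤ n) {f : Eucl n → ℝ} (hf : MemQ0 f) (u : Eucl n) (hu : u ≠ 0) :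
    slabInt f u ≠ ⊤ := by
  obtain ⟨o, ho⟩ := exists_interior hf
  have hn2 : (2:ℝ) ≤ n := by exact_mod_cast hn
  obtain ⟨r, hr, hball⟩ := Metric.isOpen_iff.mp isOpen_interior o ho
  have hun : 0 < ‖u‖ := norm_pos_iff.mpr hu
  have hε : r / 2 / ‖u‖ ≠ 0 := by positivity
  refine slabInt_smul hf.1 hf.2.2.1 u hu hε ?_
  have ho' : 0 < f o := (interior_subset ho : _)
  have hou : 0 < f (o + (r / 2 / ‖u‖) • u) := by
    apply interior_subset (s := {x | 0 < f x})
    apply hball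
    rw [Metric.mem_ball, dist_eq_norm, add_sub_cancel_left, norm_smul, Real.norm_of_nonneg (by positivity),
      div_mul_cancel₀ _ hun.ne']
    linarith
  have h := chord_bound hn hf.1 hf.2.1 hf.2.2.1 o _ (smul_ne_zero hε hu) ho' hou
  rw [lint_eq hn hf, ← ENNReal.ofReal_mul (by
    have : 0 ≤ 1 - 1 / (n:ℝ) := by
      rw [sub_nonneg, div_le_one] <;> linarith
    positivity)] at h
  intro htop
  rw [htop, ENNReal.top_mul] at h
  · exact absurd h (by simp)
  · rw [Ne, ENNReal.ofReal_eq_zero, not_le]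
    have := Real.rpow_pos_of_pos ho' (1 / ((n:ℝ) - 1))
    have := Real.rpow_pos_of_pos hou (1 / ((n:ℝ) - 1))
    positivity


lemma e_const {n : ℕ} (hn : 2 ≤ n) :
    (1 - 1 / (n:ℝ)) * (1 - 1 / (n:ℝ))⁻¹ ^ n ≤ Real.exp 1 := by
  obtain ⟨m, rfl⟩ : ∃ m, n = m + 1 := ⟨n - 1, by omega⟩
  have hm : (1:ℝ) ≤ m := by exact_mod_cast (by omega : 1 ≤ m)
  have hm0 : (0:ℝ) < m := by linarith
  have e1 : (1 - 1 / ((m+1:ℕ):ℝ))⁻¹ = 1 + 1 / (m:ℝ) := by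
    push_cast
    have : (m:ℝ) + 1 ≠ 0 := by linarith
    rw [show 1 - 1 / ((m:ℝ)+1) = m / (m+1) by field_simp; ring]
    field_simp
  have hr : (1 - 1 / ((m+1:ℕ):ℝ)) ≠ 0 := by
    intro h
    rw [h, inv_zero] at e1
    have : 0 < 1 + 1 / (m:ℝ) := by positivity
    linarith
  rw [pow_succ', ← mul_assoc, mul_inv_cancel₀ hr, one_mul, e1]
  calc (1 + 1 / (m:ℝ)) ^ m ≤ Real.exp (1 / (m:ℝ)) ^ m := by
        gcongr
        rw [add_comm]
        exact Real.add_one_le_exp _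
    _ = Real.exp 1 := by
        rw [← Real.exp_nat_mul]
        congr 1
        field_simp

lemma num_const {n : ℕ} (hn : 2 ≤ n) :
    (2 * Real.pi * Real.exp 1) ^ n * (n * Real.exp 1) ^ (2 * n) ≤
      (8 * Real.exp 1 * Real.sqrt n) ^ (2 * n) * ((n.factorial : ℝ) * (9 / 20) ^ 2) := by
  have hn2 : (2:ℝ) ≤ n := by exact_mod_cast hn
  have hst := Stirling.le_factorial_stirling n
  have hpi := Real.pi_gt_three
  have hs3 : 3 ≤ Real.sqrt (2 * Real.pi * n) := by
    apply Real.le_sqrt_of_sq_le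
    nlinarith
  have hb : 2 * Real.pi * Real.exp 1 ^ 2 ≤ 47 := by
    have h1 := Real.exp_one_lt_d9
    have h2 := Real.pi_lt_d4
    have h3 : Real.exp 1 ^ 2 ≤ 2.7182818286 ^ 2 := by gcongr
    nlinarith [Real.exp_pos 1]
  have hE := Real.exp_pos 1
  have hpow : (47:ℝ) ^ n ≤ 64 ^ n * (3 * (9/20) ^ 2) := by
    obtain ⟨m, rfl⟩ : ∃ m, n = m + 2 := ⟨n - 2, by omega⟩
    have : (47:ℝ) ^ m ≤ 64 ^ m := by gcongr; norm_num
    rw [pow_add, pow_add]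
    have h0 : (0:ℝ) ≤ 64 ^ m := by positivity
    nlinarith
  have hX : (0:ℝ) < (n / Real.exp 1) ^ n := by positivity
  have hfac : 3 * (n / Real.exp 1) ^ n ≤ (n.factorial : ℝ) :=
    (mul_le_mul_of_nonneg_right hs3 hX.le).trans hst
  have el : (2 * Real.pi * Real.exp 1) ^ n * (n * Real.exp 1) ^ (2 * n) =
      (2 * Real.pi * Real.exp 1 ^ 2) ^ n * ((n * Real.exp 1 ^ 2) ^ n * (n / Real.exp 1) ^ n) := by
    rw [pow_mul, ← mul_pow, ← mul_pow, ← mul_pow]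
    congr 1
    field_simp
  have er : (8 * Real.exp 1 * Real.sqrt n) ^ (2 * n) = 64 ^ n * (n * Real.exp 1 ^ 2) ^ n := by
    rw [pow_mul, ← mul_pow, mul_pow, Real.sq_sqrt (by linarith)]
    congr 1
    ring
  rw [el, er]
  calc _ ≤ (64 ^ n * (3 * (9/20) ^ 2)) * ((n * Real.exp 1 ^ 2) ^ n * (n / Real.exp 1) ^ n) := by
        have : (2 * Real.pi * Real.exp 1 ^ 2) ^ n ≤ (47:ℝ) ^ n := by gcongr
        gcongr
        exact this.trans hpow
    _ = 64 ^ n * (n * Real.exp 1 ^ 2) ^ n * ((3 * (n / Real.exp 1) ^ n) * (9/20) ^ 2) := by ring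
    _ ≤ _ := by gcongr

lemma slab_real_bound {n : ℕ} (hn : 2 ≤ n) {f : Eucl n → ℝ} (hf : MemQ0 f) (o u : Eucl n)
    (hu : u ≠ 0) {s : ℝ} (hs : 0 < s) (ho : 0 < f o ^ ((n:ℝ) / ((n:ℝ) - 1)))
    (hou : s ≤ f (o + u) ^ ((n:ℝ) / ((n:ℝ) - 1))) :
    (slabInt f u).toReal * (f o ^ ((n:ℝ) / ((n:ℝ) - 1)) * s) ^ (1 / (2 * (n:ℝ))) ≤
      n * Real.exp 1 * ∫ x, f x ^ ((n:ℝ) / ((n:ℝ) - 1)) := by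
  have hn2 : (2:ℝ) ≤ n := by exact_mod_cast hn
  have hn1 : (n:ℝ) - 1 ≠ 0 := by linarith
  have hp0 : (n:ℝ) / ((n:ℝ) - 1) ≠ 0 := by
    apply div_ne_zero _ hn1; linarith
  have hpos : ∀ x, 0 < f x ^ ((n:ℝ) / ((n:ℝ) - 1)) → 0 < f x := by
    intro x hx
    rcases (hf.1 x).eq_or_lt with h | h
    · rw [← h, Real.zero_rpow hp0] at hx
      exact absurd hx (lt_irrefl _)
    · exact h
  have ho' := hpos o ho
  have hou' := hpos _ (hs.trans_le hou)
  have h := chord_bound hn hf.1 hf.2.1 hf.2.2.1 o u hu ho' hou'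
  have hr : 0 ≤ 1 - 1 / (n:ℝ) := by
    rw [sub_nonneg, div_le_one] <;> linarith
  rw [lint_eq hn hf, ← ENNReal.ofReal_mul (by positivity),
    ← ENNReal.ofReal_toReal (slabInt_fin hn hf u hu), ← ENNReal.ofReal_mul ENNReal.toReal_nonneg] at h
  have hZ : 0 ≤ ∫ x, f x ^ ((n:ℝ) / ((n:ℝ) - 1)) :=
    integral_nonneg fun x => Real.rpow_nonneg (hf.1 x) _
  rw [ENNReal.ofReal_le_ofReal_iff (by positivity)] at h
  set a := (slabInt f u).toReal
  have ha : 0 ≤ a := ENNReal.toReal_nonneg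
  set Z := ∫ x, f x ^ ((n:ℝ) / ((n:ℝ) - 1))
  have hrt : ∀ x, f x ^ (1 / ((n:ℝ) - 1)) = (f x ^ ((n:ℝ) / ((n:ℝ) - 1))) ^ (1 / (n:ℝ)) := by
    intro x
    rw [← Real.rpow_mul (hf.1 x)]
    congr 1
    field_simp
  have hw : (f o ^ ((n:ℝ) / ((n:ℝ) - 1)) * s) ^ (1 / (2 * (n:ℝ))) ≤
      Real.sqrt (f o ^ (1 / ((n:ℝ) - 1)) * f (o + u) ^ (1 / ((n:ℝ) - 1))) := by
    rw [hrt, hrt, ← Real.mul_rpow ho.le (hs.le.trans hou), Real.sqrt_eq_rpow, ← Real.rpow_mul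
      (mul_nonneg ho.le (hs.le.trans hou))]
    rw [show 1 / (n:ℝ) * (1/2) = 1 / (2 * (n:ℝ)) by field_simp]
    apply Real.rpow_le_rpow (by positivity) _ (by positivity)
    gcongr
  have hn0 : (0:ℝ) < n := by linarith
  calc _ ≤ a * Real.sqrt (f o ^ (1 / ((n:ℝ) - 1)) * f (o + u) ^ (1 / ((n:ℝ) - 1))) := by gcongr
    _ = n * (a * (Real.sqrt (f o ^ (1 / ((n:ℝ) - 1)) * f (o + u) ^ (1 / ((n:ℝ) - 1))) / n)) := by
        field_simp
    _ ≤ n * ((1 - 1 / (n:ℝ)) * (1 - 1 / (n:ℝ))⁻¹ ^ n * Z) := by gcongr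
    _ ≤ n * (Real.exp 1 * Z) := by gcongr; exact e_const hn
    _ = _ := by ring

lemma main_ineq (n : ℕ) (hn : 2 ≤ n)
    (f₁ f₂ : Eucl n → ℝ) (hf₁ : MemQ0 f₁) (hf₂ : MemQ0 f₂)
    (hcond : ∀ θ : Eucl n, ‖θ‖ = 1 →
      projL1 f₁ (Submodule.span ℝ {θ})ᗮ ≤ projL1 f₂ (Submodule.span ℝ {θ})ᗮ) :
    (∫ x, f₁ x ^ ((n:ℝ) / ((n:ℝ) - 1))) ^ (n-1) ≤
      (8 * Real.exp 1 * Real.sqrt n) ^ n * (∫ x, f₂ x ^ ((n:ℝ) / ((n:ℝ) - 1))) ^ (n-1) := by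
  have hn2 : (2:ℝ) ≤ n := by exact_mod_cast hn
  have hn1 : (0:ℝ) < (n:ℝ) - 1 := by linarith
  have hp0 : (0:ℝ) < (n:ℝ) / ((n:ℝ) - 1) := by
    apply div_pos _ hn1; linarith
  obtain ⟨C₁, hC₁0, hC₁⟩ := bdd_of_memQ0 hf₁
  obtain ⟨C₂, hC₂0, hC₂⟩ := bdd_of_memQ0 hf₂
  set F : Eucl n → ℝ := fun x => f₂ x ^ ((n:ℝ) / ((n:ℝ) - 1)) with hF
  have hF0 : ∀ x, 0 ≤ F x := fun x => Real.rpow_nonneg (hf₂.1 x) _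
  have hFi : Integrable F := lint_rpow_fin hn hf₂
  have hsupp : Function.support F = Function.support f₂ := by
    ext x
    simp only [Function.mem_support, hF, ne_eq, Real.rpow_eq_zero (hf₂.1 x) hp0.ne']
  have hZpos : 0 < ∫ x, F x := by
    rw [integral_pos_iff_support_of_nonneg hF0 hFi, hsupp]
    exact (integral_pos_iff_support_of_nonneg hf₂.1 hf₂.2.2.2.1).mp hf₂.2.2.2.2
  have hcl : ∀ s, 0 < s → IsClosed {x | s ≤ F x} := by
    intro s hs
    have : {x | s ≤ F x} = f₂ ⁻¹' Set.Ici (s ^ ((n:ℝ) / ((n:ℝ) - 1))⁻¹) := by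
      ext x
      exact (Real.rpow_inv_le_iff_of_pos hs.le (hf₂.1 x) hp0).symm
    rw [this]
    exact hf₂.2.2.1.isClosed_preimage _
  obtain ⟨o, s, K, hs, ho, hK, hKs, hlev⟩ := level_choice hF0
    (C := C₂ ^ ((n:ℝ) / ((n:ℝ) - 1)))
    (fun x => Real.rpow_le_rpow (hf₂.1 x) (hC₂ x) hp0.le) hcl hFi hZpos
  set Z := ∫ x, F x with hZ
  set v := (volume K).toReal with hv
  set q := Real.sqrt (F o * s) with hq
  have hq0 : 0 ≤ q := Real.sqrt_nonneg _
  have hv0 : 0 ≤ v := ENNReal.toReal_nonneg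
  have hVK : 0 < volume K := by
    rw [pos_iff_ne_zero]
    intro h
    rw [hv, h] at hlev
    simp at hlev
    linarith
  have hvpos : 0 < v := ENNReal.toReal_pos hVK.ne' hK.measure_lt_top.ne
  obtain ⟨x, hxK, hdet⟩ := exists_det_sub hK hVK o
  set U : Fin n → Eucl n := fun i => x i - o with hU
  set d := (mat U).det with hd
  have hpi := Real.pi_pos
  have hd0 : d ≠ 0 := by
    intro h
    rw [h] at hdet
    have : 0 < (n.factorial : ℝ) * v ^ 2 := by positivity
    simp only [ne_eq, OfNat.ofNat_ne_zero, not_false_eq_true, zero_pow, zero_mul] at hdet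
    linarith
  have hU0 : ∀ i, U i ≠ 0 := by
    intro i hi
    apply hd0
    apply Matrix.det_eq_zero_of_column_eq_zero i
    intro j
    simp [mat, hi]
  have hlw := lw_eucl hn hf₁.1 hf₁.2.2.1 U hd0 hU0
  have hmono : ∀ i, slabInt f₁ (U i) ≤ slabInt f₂ (U i) := fun i =>
    slabInt_mono_of_proj hf₁.1 hf₁.2.2.1 hC₁ hf₂.1 hf₂.2.2.1 hC₂ (U i) (hU0 i)
      (slabInt_fin hn hf₁ _ (hU0 i)) (slabInt_fin hn hf₂ _ (hU0 i)) hcond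
  have hlw2 := hlw.trans (Finset.prod_le_prod' fun i _ => hmono i)
  rw [lint_eq hn hf₁] at hlw2
  set Y := ∫ x, f₁ x ^ ((n:ℝ) / ((n:ℝ) - 1)) with hY
  have hY0 : 0 ≤ Y := integral_nonneg fun x => Real.rpow_nonneg (hf₁.1 x) _
  have h3 : Y ^ (n-1) * |d| ≤ ∏ i, (slabInt f₂ (U i)).toReal := by
    have := ENNReal.toReal_mono
      (ENNReal.prod_ne_top fun i _ => slabInt_fin hn hf₂ (U i) (hU0 i)) hlw2
    rwa [ENNReal.toReal_prod, ENNReal.toReal_mul, ENNReal.toReal_pow, ENNReal.toReal_ofReal hY0,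
      ENNReal.toReal_ofReal (abs_nonneg _)] at this
  set w := (F o * s) ^ (1 / (2 * (n:ℝ))) with hw
  have hw0 : 0 ≤ w := by positivity
  have hwn : w ^ n = q := by
    rw [hw, hq, ← Real.rpow_natCast, ← Real.rpow_mul (by positivity), Real.sqrt_eq_rpow]
    congr 1
    field_simp
  have h4 : Y ^ (n-1) * |d| * q ≤ (n * Real.exp 1 * Z) ^ n := by
    calc Y ^ (n-1) * |d| * q ≤ (∏ i, (slabInt f₂ (U i)).toReal) * w ^ n := by
          rw [hwn]; gcongr
      _ = ∏ i, ((slabInt f₂ (U i)).toReal * w) := by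
          rw [Finset.prod_mul_distrib]; simp
      _ ≤ ∏ i : Fin n, (n * Real.exp 1 * Z) := by
          refine Finset.prod_le_prod (fun i _ => mul_nonneg ENNReal.toReal_nonneg hw0) fun i _ => ?_
          refine slab_real_bound hn hf₂ o (U i) (hU0 i) hs ho ?_
          have := hKs _ (hxK i)
          simpa [hU, hF] using this
      _ = _ := by simp
  have h5 := pow_le_pow_left₀ (by positivity) h4 2
  set G := 2 * Real.pi * Real.exp 1 with hG
  have hG0 : 0 < G := by positivity
  have hlev2 := pow_le_pow_left₀ (by positivity) hlev 2
  set c := 8 * Real.exp 1 * Real.sqrt n with hc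
  have hc0 : 0 ≤ c := by positivity
  set A := (n.factorial : ℝ) * (9/20)^2 with hA
  have hA0 : 0 < A := by positivity
  have h6 : (Y ^ (n-1)) ^ 2 * A * Z ^ 2 ≤ c ^ (2*n) * A * Z ^ (2*n) := by
    calc (Y ^ (n-1)) ^ 2 * A * Z ^ 2 = (Y ^ (n-1)) ^ 2 * n.factorial * (9/20 * Z) ^ 2 := by
          rw [hA]; ring
      _ ≤ (Y ^ (n-1)) ^ 2 * n.factorial * (v * q) ^ 2 := by gcongr
      _ = (Y ^ (n-1)) ^ 2 * q ^ 2 * (n.factorial * v ^ 2) := by ring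
      _ ≤ (Y ^ (n-1)) ^ 2 * q ^ 2 * (d ^ 2 * G ^ n) := by gcongr
      _ = G ^ n * (Y ^ (n-1) * |d| * q) ^ 2 := by
          rw [← sq_abs d]; ring
      _ ≤ G ^ n * ((n * Real.exp 1 * Z) ^ n) ^ 2 := by gcongr
      _ = (G ^ n * (n * Real.exp 1) ^ (2*n)) * Z ^ (2*n) := by
          rw [← pow_mul, mul_comm n 2, mul_pow (_ * _) Z]; ring
      _ ≤ (c ^ (2*n) * A) * Z ^ (2*n) := by
          exact mul_le_mul_of_nonneg_right (num_const hn) (by positivity)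
  have h7 : (Y ^ (n-1)) ^ 2 ≤ (c ^ n * Z ^ (n-1)) ^ 2 := by
    have e : Z ^ (2*n) = (Z ^ (n-1)) ^ 2 * Z ^ 2 := by
      rw [← pow_mul, ← pow_add]; congr 1; omega
    rw [e] at h6
    have hAZ : 0 < A * Z ^ 2 := by positivity
    refine le_of_mul_le_mul_right (a := A * Z ^ 2) ?_ hAZ
    calc _ = (Y ^ (n-1)) ^ 2 * A * Z ^ 2 := by ring
      _ ≤ _ := h6
      _ = _ := by ring
  exact (pow_le_pow_iff_left₀ (by positivity) (by positivity) two_ne_zero).mp h7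

/-- **Functional Shephard problem of codimension one**, `L^{n/(n-1)}`-form
(Corollary 3.2, first bound). -/
theorem functional_shephard_codim_one_lp (n : ℕ) (hn : 2 ≤ n)
    (f₁ f₂ : Eucl n → ℝ) (hf₁ : MemQ0 f₁) (hf₂ : MemQ0 f₂)
    (hcond : ∀ θ : Eucl n, ‖θ‖ = 1 →
      projL1 f₁ (Submodule.span ℝ {θ})ᗮ ≤ projL1 f₂ (Submodule.span ℝ {θ})ᗮ) :
    lpNorm ((n : ℝ) / ((n : ℝ) - 1)) f₁ ≤
      8 * Real.exp 1 * Real.sqrt n * lpNorm ((n : ℝ) / ((n : ℝ) - 1)) f₂ := by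

  have hn2 : (2:ℝ) ≤ n := by exact_mod_cast hn
  have h := main_ineq n hn f₁ f₂ hf₁ hf₂ hcond
  unfold _root_.lpNorm
  have hY0 : 0 ≤ ∫ x, f₁ x ^ ((n:ℝ) / ((n:ℝ) - 1)) :=
    integral_nonneg fun x => Real.rpow_nonneg (hf₁.1 x) _
  have hZ0 : 0 ≤ ∫ x, f₂ x ^ ((n:ℝ) / ((n:ℝ) - 1)) :=
    integral_nonneg fun x => Real.rpow_nonneg (hf₂.1 x) _
  have key : ∀ y : ℝ, 0 ≤ y → (y ^ (1 / ((n:ℝ) / ((n:ℝ) - 1)))) ^ n = y ^ (n-1) := by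
    intro y hy
    rw [← Real.rpow_natCast, ← Real.rpow_mul hy, ← Real.rpow_natCast]
    congr 1
    rw [Nat.cast_sub (by omega)]
    have : (n:ℝ) - 1 ≠ 0 := by linarith
    field_simp
    simp
  refine (pow_le_pow_iff_left₀ (by positivity) (by positivity) (by omega : n ≠ 0)).mp ?_
  rw [mul_pow, key _ hY0, key _ hZ0]
  exact h
end
end
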